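/- arXiv:1110.5682 — 5 statements merged into one kernel-verified Lean document; each statement's English description precedes it below -/
import Mathlib

section
/- For every d ∈ ℕ there is a constant C_d > 0 such that: if α ∈ (0,1/2], ρ ∈ (0,1], and μ is a mean (α,ρ)-porous Borel probability measure on ℝ^d, then the upper packing dimension of μ satisfies udim_P(μ) ≤ d − C_d·ρ·α^d/|log α|. -/
open MeasureTheory Filter Metric Set
open scoped Classical

/-- `por(μ,x,r,ε)`: the supremum of `α ≥ 0` such that some ball `B(y,αr) ⊆ B(x,r)` has
`μ(B(y,αr)) ≤ ε·μ(B(x,r))` (an "ε-hole" of relative size `α`). -/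
noncomputable def porMeas {X : Type*} [MetricSpace X] [MeasurableSpace X]
    (μ : Measure X) (x : X) (r ε : ℝ) : ℝ :=
  sSup {α : ℝ | 0 ≤ α ∧ ∃ y, Metric.ball y (α * r) ⊆ Metric.ball x r ∧
    μ (Metric.ball y (α * r)) ≤ ENNReal.ofReal ε * μ (Metric.ball x r)}

/-- `μ` is mean `(α,ρ)`-porous: for every `ε > 0`, at `μ`-a.e. point the lower asymptotic
proportion of scales `i` with `por(μ,x,2^{-i},ε) > α` is at least `ρ`. -/
def IsMeanPorous {X : Type*} [MetricSpace X] [MeasurableSpace X]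
    (μ : Measure X) (α ρ : ℝ) : Prop :=
  ∀ ε : ℝ, 0 < ε → ∀ᵐ x ∂μ,
    ρ ≤ Filter.liminf (fun n : ℕ =>
      (((Finset.range n).filter fun i => α < porMeas μ x ((2 : ℝ) ^ (-(i : ℤ))) ε).card : ℝ) / n)
      atTop

/-- The upper local dimension of a measure at a point. -/
noncomputable def upperLocalDim {X : Type*} [MetricSpace X] [MeasurableSpace X]
    (μ : Measure X) (x : X) : EReal :=
  Filter.limsup (fun r : ℝ =>
    ((Real.log (μ (Metric.ball x r)).toReal / Real.log r : ℝ) : EReal))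
    (nhdsWithin 0 (Set.Ioi 0))

/-- The upper packing dimension of a measure: the `μ`-essential supremum of the upper
local dimensions. -/
noncomputable def upperPackingDim {X : Type*} [MetricSpace X] [MeasurableSpace X]
    (μ : Measure X) : EReal :=
  essSup (upperLocalDim μ) μ

theorem aux_sqrt_sum {ι : Type*} (s : Finset ι) (a : ι → ℝ) (ha : ∀ i, 0 ≤ a i) :
    ∑ i ∈ s, √(a i) ≤ √(s.card) * √(∑ i ∈ s, a i) := by
  have h := Real.sum_sqrt_mul_sqrt_le s (f := fun _ => (1 : ℝ)) (g := a) (fun _ => zero_le_one) ha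
  simpa using h

theorem aux_sqrt_sum_hole {ι : Type*} (s : Finset ι) (a : ι → ℝ) (ha : ∀ i, 0 ≤ a i)
    (N : ℕ) (hN : s.card = N) (H : ι) (hH : H ∈ s)
    (hle : a H ≤ 1 / (16 * N) * ∑ i ∈ s, a i) :
    Real.exp (1 / (4 * N)) * ∑ i ∈ s, √(a i) ≤ √N * √(∑ i ∈ s, a i) := by
  classical
  have hNpos : 0 < N := by rw [← hN]; exact Finset.card_pos.mpr ⟨H, hH⟩
  have hN0 : (0 : ℝ) < N := by exact_mod_cast hNpos
  have hN1 : (1 : ℝ) ≤ N := by exact_mod_cast hNpos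
  set A := ∑ i ∈ s, a i with hA
  have hA0 : 0 ≤ A := Finset.sum_nonneg fun i _ => ha i
  have h1 : ∑ i ∈ s, √(a i) = √(a H) + ∑ i ∈ s.erase H, √(a i) :=
    (Finset.add_sum_erase s (fun i => √(a i)) hH).symm
  have h2 : ∑ i ∈ s.erase H, √(a i) ≤ √((N : ℝ) - 1) * √A := by
    refine (aux_sqrt_sum _ a ha).trans ?_
    have hc : ((s.erase H).card : ℝ) = (N : ℝ) - 1 := by
      rw [Finset.card_erase_of_mem hH, hN, Nat.cast_sub hNpos]; simp
    rw [hc]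
    gcongr
    exact Finset.sum_le_sum_of_subset_of_nonneg (Finset.erase_subset _ _) fun i _ _ => ha i
  have h3 : √((N : ℝ) - 1) ≤ √N * (1 - 1 / (2 * N)) := by
    have hp : (0 : ℝ) ≤ 1 - 1 / (2 * N) := by
      rw [sub_nonneg, div_le_one (by positivity)]; linarith
    rw [Real.sqrt_le_left (by positivity), mul_pow, Real.sq_sqrt hN0.le]
    have : (N : ℝ) * (1 - 1 / (2 * N)) ^ 2 = N - 1 + 1 / (4 * N) := by
      field_simp; ring
    rw [this]
    have : (0 : ℝ) < 1 / (4 * N) := by positivity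
    linarith
  have h4 : √(a H) ≤ √N * √A * (1 / (4 * N)) := by
    rw [Real.sqrt_le_left (by positivity), mul_pow, mul_pow, Real.sq_sqrt hN0.le, Real.sq_sqrt hA0]
    refine hle.trans (le_of_eq ?_)
    field_simp
    ring
  have h5 : ∑ i ∈ s, √(a i) ≤ √N * √A * (1 - 1 / (4 * N)) := by
    rw [h1]
    have := mul_le_mul_of_nonneg_right h3 (Real.sqrt_nonneg A)
    have e : √N * √A * (1 - 1 / (4 * N)) =
      √N * √A * (1 / (4 * N)) + √N * (1 - 1 / (2 * N)) * √A := by field_simp; ring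
    rw [e]; linarith
  have h6 : Real.exp (1 / (4 * N)) * (1 - 1 / (4 * (N : ℝ))) ≤ 1 := by
    have := Real.add_one_le_exp (-(1 / (4 * (N : ℝ))))
    calc Real.exp (1 / (4 * N)) * (1 - 1 / (4 * (N : ℝ)))
        ≤ Real.exp (1 / (4 * N)) * Real.exp (-(1 / (4 * (N : ℝ)))) := by gcongr; linarith
      _ = 1 := by rw [← Real.exp_add]; simp
  calc Real.exp (1 / (4 * N)) * ∑ i ∈ s, √(a i)
      ≤ Real.exp (1 / (4 * N)) * (√N * √A * (1 - 1 / (4 * N))) := by gcongr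
    _ = √N * √A * (Real.exp (1 / (4 * N)) * (1 - 1 / (4 * (N : ℝ)))) := by ring
    _ ≤ √N * √A * 1 := by gcongr
    _ = _ := by ring

/-- Weighted Hellinger-type bound along the tree of cells. -/
theorem aux_lintegral {Ω ι : Type*} [MeasurableSpace Ω] [MeasurableSpace ι]
    [MeasurableSingletonClass ι] (μ : Measure Ω) [IsProbabilityMeasure μ]
    (u : ℕ → Ω → ι) (hu : ∀ n, Measurable (u n)) (π : ι → ι)
    (hπ : ∀ n x, π (u (n + 1) x) = u n x) (ch : ι → Finset ι)
    (hch : ∀ m m', m' ∈ ch m ↔ π m' = m)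
    (w : ℕ → ι → ℝ) (hw : ∀ l m, 0 ≤ w l m)
    (hstep : ∀ l m, w l m * ∑ m' ∈ ch m, √(μ.real (u (l + 1) ⁻¹' {m'})) ≤ √(μ.real (u l ⁻¹' {m})))
    (n : ℕ) : ∀ l m, ∫⁻ x in u l ⁻¹' {m},
      ENNReal.ofReal ((∏ i ∈ Finset.range n, w (l + i) (u (l + i) x)) /
        √(μ.real (u (l + n) ⁻¹' {u (l + n) x}))) ∂μ ≤ ENNReal.ofReal (√(μ.real (u l ⁻¹' {m}))) := by
  have hms : ∀ l m, MeasurableSet (u l ⁻¹' {m}) := fun l m => hu l (measurableSet_singleton m)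
  induction n with
  | zero =>
    intro l m
    have : ∫⁻ x in u l ⁻¹' {m}, ENNReal.ofReal ((∏ i ∈ Finset.range 0, w (l + i) (u (l + i) x)) /
        √(μ.real (u (l + 0) ⁻¹' {u (l + 0) x}))) ∂μ =
        ∫⁻ x in u l ⁻¹' {m}, ENNReal.ofReal (1 / √(μ.real (u l ⁻¹' {m}))) ∂μ := by
      refine setLIntegral_congr_fun (hms l m) ?_
      intro x hx
      have hx' : u l x = m := hx
      simp [hx']
    rw [this, setLIntegral_const, ← ofReal_measureReal, ← ENNReal.ofReal_mul (by positivity)]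
    apply ENNReal.ofReal_le_ofReal
    rw [one_div_mul_eq_div, Real.div_sqrt]
  | succ n ih =>
    intro l m
    have hU : u l ⁻¹' {m} = ⋃ m' ∈ ch m, u (l + 1) ⁻¹' {m'} := by
      ext x
      simp only [mem_preimage, mem_singleton_iff, mem_iUnion, exists_prop, hch]
      rw [← hπ l x]
      simp
    have hD : (↑(ch m) : Set ι).PairwiseDisjoint (fun m' => u (l + 1) ⁻¹' {m'}) := by
      intro p _ q _ hpq
      refine Set.disjoint_left.mpr ?_
      intro x hx hx'
      exact hpq ((show u (l+1) x = p from hx).symm.trans hx')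
    have h1 : ∫⁻ x in u l ⁻¹' {m},
        ENNReal.ofReal ((∏ i ∈ Finset.range (n + 1), w (l + i) (u (l + i) x)) /
        √(μ.real (u (l + (n + 1)) ⁻¹' {u (l + (n + 1)) x}))) ∂μ =
        ∫⁻ x in u l ⁻¹' {m}, ENNReal.ofReal (w l m) *
        ENNReal.ofReal ((∏ i ∈ Finset.range n, w (l + 1 + i) (u (l + 1 + i) x)) /
        √(μ.real (u (l + 1 + n) ⁻¹' {u (l + 1 + n) x}))) ∂μ := by
      refine setLIntegral_congr_fun (hms l m) ?_
      intro x hx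
      have hx' : u l x = m := hx
      have e : l + (n + 1) = l + 1 + n := by ring
      have e2 : ∀ i, l + (i + 1) = l + 1 + i := fun i => by ring
      simp only
      rw [← ENNReal.ofReal_mul (hw l m), Finset.prod_range_succ', e]
      have hp : ∏ i ∈ Finset.range n, w (l + (i + 1)) (u (l + (i + 1)) x) =
          ∏ i ∈ Finset.range n, w (l + 1 + i) (u (l + 1 + i) x) :=
        Finset.prod_congr rfl fun i _ => by rw [e2]
      rw [hp, add_zero, hx']
      congr 1
      ring
    rw [h1, lintegral_const_mul' _ _ ENNReal.ofReal_ne_top]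
    calc _ = ENNReal.ofReal (w l m) * ∑ m' ∈ ch m, ∫⁻ x in u (l + 1) ⁻¹' {m'},
          ENNReal.ofReal ((∏ i ∈ Finset.range n, w (l + 1 + i) (u (l + 1 + i) x)) /
          √(μ.real (u (l + 1 + n) ⁻¹' {u (l + 1 + n) x}))) ∂μ := by
          rw [hU, lintegral_biUnion_finset hD (fun b _ => hms _ _)]
      _ ≤ ENNReal.ofReal (w l m) * ∑ m' ∈ ch m, ENNReal.ofReal (√(μ.real (u (l+1) ⁻¹' {m'}))) := by
          gcongr with m' _
          exact ih (l + 1) m'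
      _ = ENNReal.ofReal (w l m * ∑ m' ∈ ch m, √(μ.real (u (l + 1) ⁻¹' {m'}))) := by
          rw [ENNReal.ofReal_mul (hw l m), ENNReal.ofReal_sum_of_nonneg]
          intros; positivity
      _ ≤ _ := ENNReal.ofReal_le_ofReal (hstep l m)

theorem aux_key {Ω ι : Type*} [MeasurableSpace Ω] [Countable ι] [MeasurableSpace ι]
    [MeasurableSingletonClass ι] (μ : Measure Ω) [IsProbabilityMeasure μ]
    (u : ℕ → Ω → ι) (hu : ∀ n, Measurable (u n)) (π : ι → ι)
    (hπ : ∀ n x, π (u (n + 1) x) = u n x) (ch : ι → Finset ι)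
    (hch : ∀ m m', m' ∈ ch m ↔ π m' = m) (N : ℕ) (hN : 0 < N) (hcard : ∀ m, (ch m).card = N)
    (P : ℕ → Set ι)
    (hP : ∀ l m, m ∈ P l → ∃ H, π H = m ∧
      μ.real (u (l + 1) ⁻¹' {H}) ≤ 1 / (16 * N) * μ.real (u l ⁻¹' {m}))
    (τ : ℝ) (hτ : 0 < τ) :
    ∀ᵐ x ∂μ, ∀ᶠ n : ℕ in atTop,
      Real.exp (1 / (2 * N) * ((Finset.range n).filter fun i => u i x ∈ P i).card - 2 * τ * n)
        ≤ (N : ℝ) ^ n * μ.real (u n ⁻¹' {u n x}) := by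
  classical
  have hms : ∀ l m, MeasurableSet (u l ⁻¹' {m}) := fun l m => hu l (measurableSet_singleton m)
  have hN0 : (0 : ℝ) < N := by exact_mod_cast hN
  set w : ℕ → ι → ℝ := fun l m => Real.exp (1 / (4 * N) * (if m ∈ P l then 1 else 0)) / √N with hwdef
  have hw : ∀ l m, 0 ≤ w l m := fun l m => by positivity
  have hsum : ∀ l m, ∑ m' ∈ ch m, μ.real (u (l + 1) ⁻¹' {m'}) = μ.real (u l ⁻¹' {m}) := by
    intro l m
    have hU : u l ⁻¹' {m} = ⋃ m' ∈ ch m, u (l + 1) ⁻¹' {m'} := by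
      ext x
      simp only [mem_preimage, mem_singleton_iff, mem_iUnion, exists_prop, hch]
      rw [← hπ l x]
      simp
    rw [hU, measureReal_biUnion_finset]
    · intro p _ q _ hpq
      refine Set.disjoint_left.mpr ?_
      intro x hx hx'
      exact hpq ((show u (l+1) x = p from hx).symm.trans hx')
    · intro b _; exact hms _ _
  have hstep : ∀ l m, w l m * ∑ m' ∈ ch m, √(μ.real (u (l + 1) ⁻¹' {m'}))
      ≤ √(μ.real (u l ⁻¹' {m})) := by
    intro l m
    rw [hwdef]
    simp only
    rw [div_mul_eq_mul_div, div_le_iff₀ (by positivity)]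
    rw [mul_comm (√(μ.real (u l ⁻¹' {m}))), ← hsum l m]
    by_cases hm : m ∈ P l
    · obtain ⟨H, hH, hle⟩ := hP l m hm
      simp only [hm, if_true, mul_one]
      refine aux_sqrt_sum_hole (ch m) (fun m' => μ.real (u (l + 1) ⁻¹' {m'}))
        (fun _ => measureReal_nonneg) N (hcard m) H ((hch m H).2 hH) ?_
      rw [hsum]; exact hle
    · simp only [hm, if_false, mul_zero, Real.exp_zero, one_mul]
      have := aux_sqrt_sum (ch m) (fun m' => μ.real (u (l + 1) ⁻¹' {m'}))
        (fun _ => measureReal_nonneg)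
      rwa [hcard] at this
  set G : ℕ → Ω → ℝ := fun n x => (∏ i ∈ Finset.range n, w i (u i x)) /
        √(μ.real (u n ⁻¹' {u n x})) with hG
  have hGm : ∀ n, Measurable (G n) := by
    intro n
    refine Measurable.div ?_ ?_
    · exact Finset.measurable_fun_prod _ fun i _ => (measurable_of_countable (w i)).comp (hu i)
    · exact (measurable_of_countable (fun m => √(μ.real (u n ⁻¹' {m})))).comp (hu n)
  have hGint : ∀ n m, ∫⁻ x in u 0 ⁻¹' {m}, ENNReal.ofReal (G n x) ∂μ ≤ 1 := by
    intro n m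
    have := aux_lintegral μ u hu π hπ ch hch w hw hstep n 0 m
    simp only [zero_add] at this
    refine this.trans ?_
    rw [ENNReal.ofReal_le_one, Real.sqrt_le_one]
    exact measureReal_le_one
  have hev : ∀ m, ∀ᵐ x ∂μ, u 0 x = m → ∀ᶠ n : ℕ in atTop, G n x < Real.exp (τ * n) := by
    intro m
    have h : ∀ᵐ x ∂(μ.restrict (u 0 ⁻¹' {m})), ∀ᶠ n : ℕ in atTop,
        x ∉ {x | ENNReal.ofReal (Real.exp (τ * n)) ≤ ENNReal.ofReal (G n x)} := by
      apply ae_eventually_notMem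
      have hb : ∀ n : ℕ, (μ.restrict (u 0 ⁻¹' {m}))
          {x | ENNReal.ofReal (Real.exp (τ * n)) ≤ ENNReal.ofReal (G n x)} ≤
          ENNReal.ofReal (Real.exp (-τ) ^ n) := by
        intro n
        refine (meas_ge_le_lintegral_div (hGm n).ennreal_ofReal.aemeasurable ?_
          ENNReal.ofReal_ne_top).trans ?_
        · simp [Real.exp_pos]
        · refine (ENNReal.div_le_div_right (hGint n m) _).trans ?_
          rw [one_div, ← ENNReal.ofReal_inv_of_pos (Real.exp_pos _), ← Real.exp_neg,
            ← Real.exp_nat_mul]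
          apply le_of_eq
          congr 2
          ring
      refine ne_top_of_le_ne_top ?_ (ENNReal.tsum_le_tsum hb)
      have hs : Summable fun n : ℕ => Real.exp (-τ) ^ n :=
        summable_geometric_of_lt_one (Real.exp_pos _).le (by simpa using hτ)
      rw [← ENNReal.ofReal_tsum_of_nonneg (fun n => by positivity) hs]
      exact ENNReal.ofReal_ne_top
    rw [ae_restrict_iff' (hms 0 m)] at h
    filter_upwards [h] with x hx hxm
    filter_upwards [hx hxm] with n hn
    simp only [not_le] at hn
    exact (ENNReal.ofReal_lt_ofReal_iff (Real.exp_pos _)).1 hn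
  have hpos : ∀ n m, ∀ᵐ x ∂μ, u n x = m → 0 < μ.real (u n ⁻¹' {m}) := by
    intro n m
    by_cases h0 : μ (u n ⁻¹' {m}) = 0
    · have : ∀ᵐ x ∂μ, x ∉ u n ⁻¹' {m} := measure_eq_zero_iff_ae_notMem.1 h0
      filter_upwards [this] with x hx hxm
      exact absurd hxm hx
    · refine Filter.Eventually.of_forall fun x _ => ?_
      exact ENNReal.toReal_pos h0 (measure_ne_top _ _)
  have hev' := ae_all_iff.2 hev
  have hpos' := ae_all_iff.2 fun n => ae_all_iff.2 (hpos n)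
  filter_upwards [hev', hpos'] with x hx hp
  filter_upwards [hx _ rfl] with n hn
  have hp := hp n _ rfl
  set a := μ.real (u n ⁻¹' {u n x}) with ha
  rw [hG] at hn
  simp only at hn
  rw [← ha, div_lt_iff₀ (by positivity)] at hn
  set S := ((Finset.range n).filter fun i => u i x ∈ P i).card with hS
  have hprod : ∏ i ∈ Finset.range n, w i (u i x) = Real.exp (1 / (4 * N) * S) / √N ^ n := by
    rw [hwdef]
    simp only
    rw [Finset.prod_div_distrib, ← Real.exp_sum, ← Finset.mul_sum, Finset.prod_const,
      Finset.card_range, Finset.sum_boole]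
  rw [hprod, div_lt_iff₀ (by positivity)] at hn
  have h2 := mul_self_le_mul_self (by positivity) hn.le
  have e1 : Real.exp (1 / (4 * N) * S) * Real.exp (1 / (4 * N) * S)
    = Real.exp (1 / (2 * N) * S) := by
    rw [← Real.exp_add]; congr 1; ring
  have e2 : Real.exp (τ * n) * √a * √N ^ n * (Real.exp (τ * n) * √a * √N ^ n) =
      Real.exp (2 * τ * n) * ((N : ℝ) ^ n * a) := by
    have : Real.exp (2 * τ * n) = Real.exp (τ * n) * Real.exp (τ * n) := by
      rw [← Real.exp_add]; congr 1; ring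
    rw [this]
    have h3 : √N ^ n * √N ^ n = (N : ℝ) ^ n := by
      rw [← mul_pow, Real.mul_self_sqrt hN0.le]
    have h4 : √a * √a = a := Real.mul_self_sqrt hp.le
    calc _ = Real.exp (τ * n) * Real.exp (τ * n) * ((√N ^ n * √N ^ n) * (√a * √a)) := by ring
      _ = _ := by rw [h3, h4]
  rw [e1, e2] at h2
  rw [Real.exp_sub, div_le_iff₀ (Real.exp_pos _)]
  linarith

/-- Index of the dyadic cube of level `n` (in the grid translated by `t`) containing `x`. -/
noncomputable def cellIdx {d : ℕ} (t : Fin d → Bool) (n : ℕ) (x : EuclideanSpace ℝ (Fin d)) :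
    Fin d → ℤ :=
  fun i => ⌊(2 : ℝ) ^ n * (x i + if t i then 1 / 3 else 0)⌋

theorem cellIdx_measurable {d : ℕ} (t : Fin d → Bool) (n : ℕ) : Measurable (cellIdx t n) := by
  refine measurable_pi_lambda _ fun i => ?_
  refine Int.measurable_floor.comp ?_
  fun_prop

theorem cellIdx_parent {d : ℕ} (t : Fin d → Bool) (n k : ℕ) (x : EuclideanSpace ℝ (Fin d))
    (i : Fin d) : cellIdx t (n + k) x i / 2 ^ k = cellIdx t n x i := by
  unfold cellIdx
  have h := Int.natCast_mul_floor_div_cancel (n := 2 ^ k) (by positivity)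
    ((2 : ℝ) ^ n * (x i + if t i then 1 / 3 else 0))
  push_cast at h
  rw [← h]
  congr 2
  ring

theorem cellIdx_dist {d : ℕ} (t : Fin d → Bool) (n : ℕ) (x y : EuclideanSpace ℝ (Fin d))
    (h : cellIdx t n x = cellIdx t n y) : dist x y ≤ d / 2 ^ n := by
  have hi : ∀ i, dist (x i) (y i) ≤ 1 / 2 ^ n := by
    intro i
    have := Int.abs_sub_lt_one_of_floor_eq_floor (congrFun h i)
    rw [← mul_sub, abs_mul, abs_of_pos (by positivity : (0 : ℝ) < 2 ^ n)] at this
    rw [Real.dist_eq, le_div_iff₀ (by positivity), mul_comm]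
    have e : x i + (if t i then 1 / 3 else 0) - (y i + if t i then 1 / 3 else 0) = x i - y i := by
      ring
    rw [e] at this
    exact this.le
  rw [EuclideanSpace.dist_eq, Real.sqrt_le_left (by positivity)]
  calc ∑ i, dist (x i) (y i) ^ 2 ≤ ∑ i : Fin d, ((1 : ℝ) / 2 ^ n) ^ 2 := by
        gcongr with i; exact hi i
    _ = d * ((1 : ℝ) / 2 ^ n) ^ 2 := by simp
    _ ≤ (d * d) * ((1 : ℝ) / 2 ^ n) ^ 2 := by
        gcongr
        exact_mod_cast Nat.le_mul_self d
    _ = _ := by ring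

theorem aux_third (n : ℕ) (X : ℝ) : ∃ b : Bool, ∀ Y : ℝ, |Y - X| < 1 / 2 ^ (n + 3) →
    ⌊(2 : ℝ) ^ n * (Y + if b then 1 / 3 else 0)⌋ = ⌊(2 : ℝ) ^ n * (X + if b then 1 / 3 else 0)⌋ := by
  have hp : (0 : ℝ) < 2 ^ n := by positivity
  have hY : ∀ Y : ℝ, |Y - X| < 1 / 2 ^ (n + 3) →
      |(2 : ℝ) ^ n * Y - 2 ^ n * X| < 1 / 8 := by
    intro Y h
    rw [← mul_sub, abs_mul, abs_of_pos hp]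
    calc (2 : ℝ) ^ n * |Y - X| < 2 ^ n * (1 / 2 ^ (n + 3)) := by gcongr
      _ = 1 / 8 := by rw [pow_add]; field_simp; norm_num
  set A := (2 : ℝ) ^ n * X with hA
  obtain ⟨q, r, hr, hqr⟩ : ∃ q : ℤ, ∃ r : ℝ, (r = 1 / 3 ∨ r = 2 / 3) ∧ (2 : ℝ) ^ n / 3 = q + r := by
    have hmod : 2 ^ n % 3 = 1 ∨ 2 ^ n % 3 = 2 := by
      have h3 : ¬ 3 ∣ 2 ^ n := fun h => by
        have := Nat.Prime.dvd_of_dvd_pow Nat.prime_three h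
        omega
      omega
    have hdiv := Nat.div_add_mod (2 ^ n) 3
    have hdiv' : (3 : ℝ) * ((2 ^ n / 3 : ℕ) : ℝ) + ((2 ^ n % 3 : ℕ) : ℝ) = 2 ^ n := by
      exact_mod_cast hdiv
    rcases hmod with h | h
    · refine ⟨((2 ^ n / 3 : ℕ) : ℤ), 1 / 3, Or.inl rfl, ?_⟩
      rw [h] at hdiv'
      rw [Int.cast_natCast]
      push_cast at hdiv' ⊢
      linarith
    · refine ⟨((2 ^ n / 3 : ℕ) : ℤ), 2 / 3, Or.inr rfl, ?_⟩
      rw [h] at hdiv'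
      rw [Int.cast_natCast]
      push_cast at hdiv' ⊢
      linarith
  -- distance to nearest integer
  have h0 := Int.floor_le A
  have h1 := Int.lt_floor_add_one A
  by_cases hc : (⌊A⌋ : ℝ) + 1 / 8 ≤ A ∧ A ≤ ⌊A⌋ + 7 / 8
  · refine ⟨false, fun Y h => ?_⟩
    have hY' := abs_lt.1 (hY Y h)
    simp only [Bool.false_eq_true, if_false, add_zero]
    rw [← hA, Int.floor_eq_iff]
    constructor <;> linarith [hc.1, hc.2, hY'.1, hY'.2]
  · obtain ⟨z, hz⟩ : ∃ z : ℤ, |A - z| ≤ 1 / 8 := by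
      by_cases h : (⌊A⌋ : ℝ) + 1 / 8 ≤ A
      · refine ⟨⌊A⌋ + 1, ?_⟩
        have : ¬ (A ≤ ⌊A⌋ + 7 / 8) := fun h' => hc ⟨h, h'⟩
        push_cast
        rw [abs_le]; constructor <;> linarith
      · refine ⟨⌊A⌋, ?_⟩
        rw [abs_le]; constructor <;> linarith
    rw [abs_le] at hz
    have key : ∀ Y : ℝ, |Y - X| < 1 / 2 ^ (n + 3) →
        ⌊(2 : ℝ) ^ n * (Y + 1 / 3)⌋ = z + q := by
      intro Y h
      have hY' := abs_lt.1 (hY Y h)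
      rw [Int.floor_eq_iff]
      have e : (2 : ℝ) ^ n * (Y + 1 / 3) = 2 ^ n * Y + (q + r) := by rw [← hqr]; ring
      rw [e]
      push_cast
      rcases hr with hr | hr <;> rw [hr] <;> constructor <;> linarith [hz.1, hz.2, hY'.1, hY'.2]
    refine ⟨true, fun Y h => ?_⟩
    simp only [if_true]
    rw [key Y h, key X (by simp)]

theorem cellIdx_third {d : ℕ} (n : ℕ) (x : EuclideanSpace ℝ (Fin d)) :
    ∃ t : Fin d → Bool, ∀ y, dist y x < 1 / 2 ^ (n + 3) → cellIdx t n y = cellIdx t n x := by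
  choose t ht using fun i => aux_third n (x i)
  refine ⟨t, fun y hy => ?_⟩
  funext i
  refine ht i (y i) (lt_of_le_of_lt ?_ hy)
  rw [← Real.dist_eq, EuclideanSpace.dist_eq]
  refine Real.le_sqrt_of_sq_le ?_
  exact Finset.single_le_sum (f := fun i => dist (y i) (x i) ^ 2) (fun i _ => sq_nonneg _)
    (Finset.mem_univ i)

theorem aux_porous {d : ℕ} (μ : Measure (EuclideanSpace ℝ (Fin d))) [IsProbabilityMeasure μ]
    (α ε : ℝ) (hα : 0 < α) (hε : 0 < ε) (k : ℕ) (hk : 8 * d < α * 2 ^ k) (n : ℕ)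
    (x : EuclideanSpace ℝ (Fin d))
    (hx : α < porMeas μ x ((2 : ℝ) ^ (-((n + 3 : ℕ) : ℤ))) ε) :
    ∃ t : Fin d → Bool, ∃ H : Fin d → ℤ, (fun i => H i / 2 ^ k) = cellIdx t n x ∧
      μ.real (cellIdx t (n + k) ⁻¹' {H}) ≤ ε * μ.real (cellIdx t n ⁻¹' {cellIdx t n x}) := by
  have hr : (2 : ℝ) ^ (-((n + 3 : ℕ) : ℤ)) = 1 / 2 ^ (n + 3) := by
    rw [zpow_neg, zpow_natCast, one_div]
  rw [hr] at hx
  rw [porMeas] at hx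
  set r : ℝ := 1 / 2 ^ (n + 3) with hrdef
  have hr0 : 0 < r := by positivity
  have hne : {α : ℝ | 0 ≤ α ∧ ∃ y, Metric.ball y (α * r) ⊆ Metric.ball x r ∧
      μ (Metric.ball y (α * r)) ≤ ENNReal.ofReal ε * μ (Metric.ball x r)}.Nonempty := by
    refine ⟨0, ?_⟩
    exact ⟨le_rfl, x, by simp, by simp⟩
  obtain ⟨a, ⟨ha0, y, hsub, hmu⟩, haα⟩ := exists_lt_of_lt_csSup hne hx
  obtain ⟨t, ht⟩ := cellIdx_third n x
  have hy : dist y x < r := by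
    have : y ∈ ball y (a * r) := mem_ball_self (mul_pos (hα.trans haα) hr0)
    exact hsub this
  refine ⟨t, cellIdx t (n + k) y, ?_, ?_⟩
  · rw [← ht y hy]
    funext i
    exact cellIdx_parent t n k y i
  · have h1 : cellIdx t (n + k) ⁻¹' {cellIdx t (n + k) y} ⊆ ball y (a * r) := by
      intro z hz
      have hd := cellIdx_dist t (n + k) z y hz
      rw [mem_ball]
      refine hd.trans_lt ?_
      calc (d : ℝ) / 2 ^ (n + k) < α * r := by
            rw [hrdef, div_lt_iff₀ (by positivity), pow_add, pow_add]
            have : α * (1 / (2 ^ n * 2 ^ 3)) * (2 ^ n * 2 ^ k) = (α * 2 ^ k) / 8 := by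
              field_simp; norm_num
            rw [this]; linarith
        _ ≤ a * r := by gcongr
    have h2 : ball x r ⊆ cellIdx t n ⁻¹' {cellIdx t n x} := fun z hz => ht z hz
    have h3 : μ.real (ball y (a * r)) ≤ ε * μ.real (ball x r) := by
      have := ENNReal.toReal_mono (ENNReal.mul_ne_top ENNReal.ofReal_ne_top (measure_ne_top _ _)) hmu
      rwa [ENNReal.toReal_mul, ENNReal.toReal_ofReal hε.le] at this
    calc _ ≤ μ.real (ball y (a * r)) := measureReal_mono h1
      _ ≤ ε * μ.real (ball x r) := h3
      _ ≤ _ := mul_le_mul_of_nonneg_left (measureReal_mono h2) hε.le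

/-- Set of the indices of cubes of level `n` with a sparse subcube `k` levels below. -/
def porCells {d : ℕ} (μ : Measure (EuclideanSpace ℝ (Fin d))) (ε : ℝ) (k : ℕ)
    (t : Fin d → Bool) (n : ℕ) : Set (Fin d → ℤ) :=
  {m | ∃ H : Fin d → ℤ, (fun i => H i / 2 ^ k) = m ∧
      μ.real (cellIdx t (n + k) ⁻¹' {H}) ≤ ε * μ.real (cellIdx t n ⁻¹' {m})}

theorem aux_key' {d : ℕ} (μ : Measure (EuclideanSpace ℝ (Fin d))) [IsProbabilityMeasure μ]
    (k N : ℕ) (hN : N = (2 ^ k) ^ d) (t : Fin d → Bool) (j : ℕ) (τ : ℝ) (hτ : 0 < τ) :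
    ∀ᵐ x ∂μ, ∀ᶠ n : ℕ in atTop,
      Real.exp (1 / (2 * N) * ((Finset.range n).filter fun i =>
          cellIdx t (j + i * k) x ∈ porCells μ (1 / (16 * N)) k t (j + i * k)).card - 2 * τ * n)
        ≤ (N : ℝ) ^ n * μ.real (cellIdx t (j + n * k) ⁻¹' {cellIdx t (j + n * k) x}) := by
  have e : ∀ n, j + (n + 1) * k = j + n * k + k := fun n => by ring
  refine aux_key μ (fun n => cellIdx t (j + n * k)) (fun n => cellIdx_measurable _ _)
    (fun m i => m i / 2 ^ k) ?_
    (fun m => Fintype.piFinset fun i => Finset.Ico (2 ^ k * m i) (2 ^ k * m i + 2 ^ k)) ?_ N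
    (by rw [hN]; positivity) ?_
    (fun i => porCells μ (1 / (16 * N)) k t (j + i * k)) ?_ τ hτ
  · intro n x
    funext i
    simp only [e]
    exact cellIdx_parent t _ k x i
  · intro m m'
    rw [Fintype.mem_piFinset, funext_iff]
    refine forall_congr' fun i => ?_
    have h2 : (0 : ℤ) < 2 ^ k := by positivity
    rw [Finset.mem_Ico, Int.ediv_eq_iff_of_pos h2]
    constructor
    · rintro ⟨h, h'⟩; constructor <;> linarith
    · rintro ⟨h, h'⟩; constructor <;> linarith
  · intro m
    rw [Fintype.card_piFinset]
    have h2 : ((2 : ℤ) ^ k).toNat = 2 ^ k := by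
      have : ((2 : ℤ) ^ k) = ((2 ^ k : ℕ) : ℤ) := by push_cast; rfl
      rw [this, Int.toNat_natCast]
    simp [hN, h2]
  · rintro l m ⟨H, hH, hle⟩
    refine ⟨H, hH, ?_⟩
    simp only [e]
    exact hle

theorem aux_cast (n : ℕ) (p : ℤ → Prop) :
    ((Finset.range n : Finset ℤ).filter p).card =
      ((Finset.range n).filter fun i : ℕ => p (i : ℤ)).card := by
  have h : (Finset.range n : Finset ℤ) = (Finset.range n).image (fun i : ℕ => (i : ℤ)) := by
    ext z
    simp
  rw [h, Finset.filter_image, Finset.card_image_of_injective _ Nat.cast_injective]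

theorem aux_count {d : ℕ} (μ : Measure (EuclideanSpace ℝ (Fin d))) [IsProbabilityMeasure μ]
    (α ε ρ : ℝ) (hα : 0 < α) (hε : 0 < ε) (k : ℕ) (hk0 : 0 < k) (hk : 8 * d < α * 2 ^ k)
    (x : EuclideanSpace ℝ (Fin d)) (n : ℕ)
    (hn : 12 ≤ ρ * n) (hcount : ρ / 2 * (n * k : ℕ) ≤ ((Finset.range (n * k)).filter fun i : ℕ =>
      α < porMeas μ x ((2 : ℝ) ^ (-(i : ℤ))) ε).card) :
    ∃ t : Fin d → Bool, ∃ j ∈ Finset.range k, ρ * n / (4 * 2 ^ d) ≤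
      ((Finset.range n).filter fun i =>
          cellIdx t (j + i * k) x ∈ porCells μ ε k t (j + i * k)).card := by
  classical
  set F : (Fin d → Bool) × ℕ → Finset ℕ := fun p => (Finset.range n).filter fun i =>
    cellIdx p.1 (p.2 + i * k) x ∈ porCells μ ε k p.1 (p.2 + i * k) with hF
  by_contra! hcon
  set A := (Finset.range (n * k)).filter fun i : ℕ => α < porMeas μ x ((2 : ℝ) ^ (-(i : ℤ))) ε with hA
  set I : Finset ((Fin d → Bool) × ℕ) := Finset.univ ×ˢ Finset.range k with hI
  have hsub : A ⊆ Finset.range 3 ∪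
      I.biUnion fun p => (F p).image fun i => p.2 + i * k + 3 := by
    intro i hi
    rw [hA, Finset.mem_filter, Finset.mem_range] at hi
    rw [Finset.mem_union, Finset.mem_range]
    by_cases h3 : i < 3
    · exact Or.inl h3
    right
    obtain ⟨l, rfl⟩ : ∃ l, i = l + 3 := ⟨i - 3, by omega⟩
    obtain ⟨t, H, hH, hle⟩ := aux_porous μ α ε hα hε k hk l x hi.2
    have hdm : l % k + l / k * k = l := by
      rw [mul_comm]; exact Nat.mod_add_div l k
    rw [Finset.mem_biUnion]
    refine ⟨(t, l % k), ?_, ?_⟩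
    · rw [hI, Finset.mem_product]
      exact ⟨Finset.mem_univ _, Finset.mem_range.2 (Nat.mod_lt _ hk0)⟩
    · rw [Finset.mem_image]
      refine ⟨l / k, ?_, by simp only [hdm]⟩
      rw [hF]
      simp only [Finset.mem_filter, Finset.mem_range, hdm]
      refine ⟨?_, H, hH, hle⟩
      rw [Nat.div_lt_iff_lt_mul hk0]
      omega
  have hcard : A.card ≤ 3 + ∑ p ∈ I, (F p).card := by
    refine (Finset.card_le_card hsub).trans ((Finset.card_union_le _ _).trans ?_)
    rw [Finset.card_range]
    refine Nat.add_le_add_left ?_ 3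
    refine Finset.card_biUnion_le.trans ?_
    exact Finset.sum_le_sum fun p _ => Finset.card_image_le
  have hne : I.Nonempty := by
    rw [hI]
    exact Finset.Nonempty.product Finset.univ_nonempty (Finset.nonempty_range_iff.2 hk0.ne')
  have hlt : (∑ p ∈ I, ((F p).card : ℝ)) < ∑ p ∈ I, ρ * n / (4 * 2 ^ d) := by
    refine Finset.sum_lt_sum_of_nonempty hne ?_
    rintro ⟨t, j⟩ hp
    rw [hI, Finset.mem_product] at hp
    exact hcon t j hp.2
  have hIc : (I.card : ℝ) = 2 ^ d * k := by
    rw [hI, Finset.card_product]; simp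
  rw [Finset.sum_const, nsmul_eq_mul, hIc] at hlt
  have hcard' : (A.card : ℝ) ≤ 3 + ∑ p ∈ I, ((F p).card : ℝ) := by exact_mod_cast hcard
  have e : (2 : ℝ) ^ d * k * (ρ * n / (4 * 2 ^ d)) = ρ * n * k / 4 := by field_simp
  rw [e] at hlt
  have hk1 : (1 : ℝ) ≤ k := by exact_mod_cast hk0
  have h12 : 12 ≤ ρ * n * k := by nlinarith
  have hcount' : ρ / 2 * (n * k : ℕ) ≤ (A.card : ℝ) := hcount
  push_cast at hcount'
  linarith

theorem aux_mass {d : ℕ} (μ : Measure (EuclideanSpace ℝ (Fin d))) [IsProbabilityMeasure μ]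
    (α ρ : ℝ) (hα : 0 < α) (hρ : 0 < ρ) (k N : ℕ) (hN : N = (2 ^ k) ^ d)
    (hk0 : 0 < k) (hk : 8 * d < α * 2 ^ k) (hμ : IsMeanPorous μ α ρ) :
    ∀ᵐ x ∂μ, ∀ᶠ n : ℕ in atTop, ∀ R : ℝ, (d : ℝ) / 2 ^ (n * k) < R →
      Real.exp (ρ / (2 ^ (d + 4) * N) * n) ≤ (N : ℝ) ^ n * μ.real (ball x R) := by
  have hN0 : (0 : ℝ) < N := by rw [hN]; positivity
  set τ : ℝ := ρ / (2 ^ (d + 5) * N) with hτ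
  have hτ0 : 0 < τ := by positivity
  have hε : (0 : ℝ) < 1 / (16 * N) := by positivity
  have hkey := ae_all_iff.2 fun t : Fin d → Bool => ae_all_iff.2 fun j : ℕ =>
    aux_key' μ k N hN t j τ hτ0
  filter_upwards [hkey, hμ _ hε] with x hx hpor
  have hall : ∀ᶠ n : ℕ in atTop, ∀ t : Fin d → Bool, ∀ j ∈ Finset.range k,
      Real.exp (1 / (2 * N) * ((Finset.range n).filter fun i =>
          cellIdx t (j + i * k) x ∈ porCells μ (1 / (16 * N)) k t (j + i * k)).card - 2 * τ * n)
        ≤ (N : ℝ) ^ n * μ.real (cellIdx t (j + n * k) ⁻¹' {cellIdx t (j + n * k) x}) := by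
    rw [eventually_all]
    intro t
    rw [Filter.eventually_all_finset]
    intro j _
    exact hx t j
  have hev := eventually_lt_of_lt_liminf (lt_of_lt_of_le (half_lt_self hρ) hpor)
    ⟨0, by
      rw [eventually_map]
      exact Eventually.of_forall fun n => by positivity⟩
  have htk : Tendsto (fun n : ℕ => n * k) atTop atTop :=
    tendsto_id.atTop_mul_const' hk0
  have hev' := htk.eventually hev
  have hbig : ∀ᶠ n : ℕ in atTop, 12 ≤ ρ * n :=
    (tendsto_natCast_atTop_atTop.const_mul_atTop hρ).eventually_ge_atTop 12
  filter_upwards [hall, hev', hbig, eventually_gt_atTop 0] with n h1 h2 h3 h4 R hR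
  have hnk : (0 : ℝ) < (n * k : ℕ) := by exact_mod_cast Nat.mul_pos h4 hk0
  rw [lt_div_iff₀ hnk, aux_cast] at h2
  obtain ⟨t, j, hj, hS⟩ := aux_count μ α _ ρ hα hε k hk0 hk x n h3 h2.le
  have h5 := h1 t j hj
  have hsub : cellIdx t (j + n * k) ⁻¹' {cellIdx t (j + n * k) x} ⊆ ball x R := by
    intro z hz
    rw [mem_ball]
    refine ((cellIdx_dist t _ z x hz).trans ?_).trans_lt hR
    gcongr
    · norm_num
    · omega
  refine le_trans ?_ (h5.trans ?_)
  · rw [Real.exp_le_exp]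
    have : 1 / (2 * (N : ℝ)) * (ρ * n / (4 * 2 ^ d)) - 2 * τ * n =
        ρ / (2 ^ (d + 4) * N) * n := by
      rw [hτ, pow_add, pow_add]; field_simp; norm_num
    rw [← this]
    gcongr
  · exact mul_le_mul_of_nonneg_left (measureReal_mono hsub) (by positivity)

theorem aux_dim {d : ℕ} (hd : 0 < d) (μ : Measure (EuclideanSpace ℝ (Fin d)))
    [IsProbabilityMeasure μ] (k N : ℕ) (hN : N = (2 ^ k) ^ d) (hk0 : 0 < k)
    (θ : ℝ) (hθ : 0 < θ) (x : EuclideanSpace ℝ (Fin d))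
    (h : ∀ᶠ n : ℕ in atTop, ∀ R : ℝ, (d : ℝ) / 2 ^ (n * k) < R →
      Real.exp (θ * n) ≤ (N : ℝ) ^ n * μ.real (ball x R)) :
    upperLocalDim μ x ≤ (((d : ℝ) - θ / (2 * k * Real.log 2) : ℝ) : EReal) := by
  obtain ⟨n0, hn0⟩ := eventually_atTop.1 h
  unfold upperLocalDim
  have hl2 : 0 < Real.log 2 := Real.log_pos (by norm_num)
  have hk1 : (0 : ℝ) < k := by exact_mod_cast hk0
  have hd1 : (1 : ℝ) ≤ d := by exact_mod_cast hd
  have hld : 0 ≤ Real.log d := Real.log_nonneg hd1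
  set κ : ℝ := k * Real.log 2 with hκ
  have hκ0 : 0 < κ := by positivity
  set δ : ℝ := θ / (2 * k * Real.log 2) with hδ
  have hδκ : θ = 2 * δ * κ := by rw [hδ, hκ]; field_simp
  have hδ0 : 0 < δ := by positivity
  set K : ℝ := Real.log d + κ with hK
  apply limsup_le_of_le
  · isBoundedDefault
  have ev1 : ∀ᶠ r : ℝ in nhdsWithin 0 (Set.Ioi 0), Real.log r < -(n0 * κ + d * K / δ) :=
    Real.tendsto_log_nhdsGT_zero.eventually_lt_atBot _
  filter_upwards [ev1, self_mem_nhdsWithin] with r hr hr0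
  have hr0 : 0 < r := hr0
  rw [EReal.coe_le_coe_iff]
  set l := -Real.log r with hl
  have hKd : 0 ≤ d * K / δ := by positivity
  have hn0κ : 0 ≤ n0 * κ := by positivity
  have hdK0 : 0 < d * K / δ := by positivity
  have hl0 : 0 < l := by linarith
  have hl1 : n0 * κ ≤ l := by linarith
  have hl2' : d * K ≤ δ * l := by
    have : d * K / δ ≤ l := by linarith
    rw [div_le_iff₀ hδ0] at this
    linarith
  set n : ℕ := ⌊(l + Real.log d) / κ⌋₊ + 1 with hn
  have hq0 : 0 ≤ (l + Real.log d) / κ := by positivity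
  have hn1 : l + Real.log d < n * κ := by
    rw [← div_lt_iff₀ hκ0, hn]
    push_cast
    exact Nat.lt_floor_add_one _
  have hn2 : n * κ ≤ l + K := by
    have := Nat.floor_le hq0
    rw [le_div_iff₀ hκ0] at this
    rw [hn, hK]
    push_cast
    linarith
  have hnn0 : n0 ≤ n := by
    have : (n0 : ℝ) * κ < n * κ := by linarith
    have := lt_of_mul_lt_mul_right this hκ0.le
    exact_mod_cast this.le
  have hR : (d : ℝ) / 2 ^ (n * k) < r := by
    rw [← Real.log_lt_log_iff (by positivity) hr0, Real.log_div (by positivity) (by positivity),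
      Real.log_pow]
    push_cast
    have : (n : ℝ) * k * Real.log 2 = n * κ := by rw [hκ]; ring
    rw [this]
    linarith
  have hmass := hn0 n hnn0 r hR
  have hN0 : (0 : ℝ) < N := by rw [hN]; positivity
  have hm0 : 0 < μ.real (ball x r) := by
    by_contra hcon
    have := le_antisymm (not_lt.1 hcon) measureReal_nonneg
    rw [this, mul_zero] at hmass
    exact absurd hmass (not_le.2 (Real.exp_pos _))
  have hlog := Real.log_le_log (Real.exp_pos _) hmass
  have hNl : Real.log (N : ℝ) = d * κ := by
    rw [hN]; push_cast
    rw [Real.log_pow, Real.log_pow]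
  rw [Real.log_exp, Real.log_mul (by positivity) hm0.ne', Real.log_pow, hNl] at hlog
  change Real.log (μ.real (ball x r)) / Real.log r ≤ d - δ
  have hlr : Real.log r = -l := by rw [hl]; ring
  rw [hlr, div_neg, ← neg_div, div_le_iff₀ hl0]
  have h1 : (d : ℝ) * (n * κ) ≤ d * (l + K) := by gcongr
  have h2 : 2 * δ * l ≤ θ * n := by
    rw [hδκ]
    have : 2 * δ * l ≤ 2 * δ * (n * κ) := by gcongr; linarith
    linarith
  nlinarith

theorem aux_const (d : ℕ) (α : ℝ) (hα : α ∈ Set.Ioc (0 : ℝ) (1 / 2)) :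
    ∃ k : ℕ, 0 < k ∧ 8 * d < α * 2 ^ k ∧ (k : ℝ) ≤ (8 * d + 2) * |Real.logb 2 α| ∧
      (2 : ℝ) ^ k ≤ 2 ^ (8 * d + 1) / α := by
  obtain ⟨h0, h1⟩ := hα
  have hneg : Real.logb 2 α ≤ -1 := by
    rw [Real.logb_le_iff_le_rpow (by norm_num) h0, Real.rpow_neg_one]
    linarith
  set L := |Real.logb 2 α| with hL
  have hLe : L = -Real.logb 2 α := by rw [hL, abs_of_neg (by linarith)]
  have hL1 : 1 ≤ L := by linarith
  have h2L : (2 : ℝ) ^ L = 1 / α := by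
    rw [hLe, Real.rpow_neg (by norm_num), Real.rpow_logb (by norm_num) (by norm_num) h0, one_div]
  have hc1 := Nat.le_ceil L
  have hc2 := Nat.ceil_lt_add_one (show 0 ≤ L by linarith)
  set a := ⌈L⌉₊ with ha
  have ha1 : 1 / α ≤ (2 : ℝ) ^ a := by
    rw [← h2L, ← Real.rpow_natCast]
    exact Real.rpow_le_rpow_of_exponent_le (by norm_num) hc1
  have ha2 : (2 : ℝ) ^ a ≤ 2 / α := by
    have : (2 : ℝ) / α = 2 ^ (L + 1) := by
      rw [Real.rpow_add (by norm_num), h2L, Real.rpow_one]; ring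
    rw [this, ← Real.rpow_natCast]
    exact Real.rpow_le_rpow_of_exponent_le (by norm_num) hc2.le
  have hapos : 0 < a := Nat.ceil_pos.2 (by linarith)
  refine ⟨8 * d + a, by omega, ?_, ?_, ?_⟩
  · have h8 : ((8 * d : ℕ) : ℝ) < 2 ^ (8 * d) := by exact_mod_cast Nat.lt_two_pow_self
    push_cast at h8
    rw [div_le_iff₀ h0] at ha1
    rw [pow_add]
    have hp : (0 : ℝ) < 2 ^ (8 * d) := by positivity
    nlinarith
  · push_cast
    have hd0 : (0 : ℝ) ≤ d := Nat.cast_nonneg d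
    nlinarith
  · rw [pow_add, pow_add, pow_one, mul_div_assoc]
    gcongr

/-- (Small-porosity bound with a logarithmic loss.) For every `d` there
is a constant `C_d > 0` such that every mean `(α,ρ)`-porous Borel probability measure on
`ℝ^d` (with `α ∈ (0,1/2]`, `ρ ∈ (0,1]`) has upper packing dimension at most
`d − C_d·ρ·α^d/|log α|`. -/
theorem stmt9 (d : ℕ) (hd : 0 < d) :
    ∃ C : ℝ, 0 < C ∧ ∀ α ρ : ℝ, α ∈ Set.Ioc (0 : ℝ) (1 / 2) → ρ ∈ Set.Ioc (0 : ℝ) 1 →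
      ∀ μ : Measure (EuclideanSpace ℝ (Fin d)), IsProbabilityMeasure μ →
        IsMeanPorous μ α ρ →
          upperPackingDim μ ≤
            (((d : ℝ) - C * ρ * α ^ d / |Real.logb 2 α| : ℝ) : EReal) := by
  refine ⟨1 / (2 ^ (d + 5) * 2 ^ ((8 * d + 1) * d) * (8 * d + 2) * Real.log 2), ?_, ?_⟩
  · have : 0 < Real.log 2 := Real.log_pos (by norm_num)
    positivity
  intro α ρ hα hρ μ hprob hμ
  obtain ⟨k, hk0, hk, hkL, h2k⟩ := aux_const d α hα
  have hα0 : 0 < α := hα.1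
  have hρ0 : 0 < ρ := hρ.1
  have hl2 : 0 < Real.log 2 := Real.log_pos (by norm_num)
  have hk1 : (0 : ℝ) < k := by exact_mod_cast hk0
  have hN0 : (0 : ℝ) < (((2 ^ k) ^ d : ℕ) : ℝ) := by positivity
  have hNle : (((2 ^ k) ^ d : ℕ) : ℝ) ≤ 2 ^ ((8 * d + 1) * d) / α ^ d := by
    push_cast
    calc ((2 : ℝ) ^ k) ^ d ≤ (2 ^ (8 * d + 1) / α) ^ d := by gcongr
      _ = _ := by rw [div_pow, ← pow_mul]
  set N : ℕ := (2 ^ k) ^ d with hN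
  set θ : ℝ := ρ / (2 ^ (d + 4) * N) with hθ
  have hθ0 : 0 < θ := by positivity
  have hL0 : 0 < |Real.logb 2 α| := by
    by_contra hcon
    have : (8 * (d : ℝ) + 2) * |Real.logb 2 α| ≤ 0 :=
      mul_nonpos_of_nonneg_of_nonpos (by positivity) (not_lt.1 hcon)
    linarith
  unfold upperPackingDim
  refine essSup_le_of_ae_le _ ?_
  filter_upwards [aux_mass μ α ρ hα0 hρ0 k N hN hk0 hk hμ] with x hx
  refine (aux_dim hd μ k N hN hk0 θ hθ0 x hx).trans ?_
  rw [EReal.coe_le_coe_iff]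
  refine sub_le_sub_left ?_ _
  calc 1 / (2 ^ (d + 5) * 2 ^ ((8 * d + 1) * d) * (8 * d + 2) * Real.log 2) * ρ * α ^ d
        / |Real.logb 2 α|
      = ρ / (2 ^ (d + 4) * (2 ^ ((8 * d + 1) * d) / α ^ d)) /
        (2 * ((8 * d + 2) * |Real.logb 2 α|) * Real.log 2) := by
        rw [pow_add 2 d 5, pow_add 2 d 4]; field_simp
    _ ≤ θ / (2 * k * Real.log 2) := by
        rw [hθ]
        gcongr
end

section
/- Let μ be a Borel probability measure on [0,1)^d assigning zero mass to the boundary of every dyadic cube, let ℓ ∈ ℕ and ρ ∈ (0,1], and suppose μ is dyadic mean (ℓ,ρ)-porous. Then the upper packing dimension of μ satisfies udim_P(μ) ≤ d − 2^{−ℓd}·ρ/ℓ. -/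
open MeasureTheory Filter Metric Set
open scoped Classical

/-- The half-open dyadic cell of level `n` with index `j`, i.e. `∏ᵢ [jᵢ/2ⁿ, (jᵢ+1)/2ⁿ)`. -/
def dyadicCell (d n : ℕ) (j : Fin d → ℤ) : Set (EuclideanSpace ℝ (Fin d)) :=
  {y | ∀ i, (j i : ℝ) / 2 ^ n ≤ y i ∧ y i < ((j i : ℝ) + 1) / 2 ^ n}

/-- The index of the level-`n` dyadic cube containing `x`. -/
noncomputable def dyadicIdx (d n : ℕ) (x : EuclideanSpace ℝ (Fin d)) : Fin d → ℤ :=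
  fun i => ⌊(2 : ℝ) ^ n * x i⌋

/-- `Q_n(x)`: the (unique) half-open dyadic cube of level `n` containing `x`. -/
noncomputable def Qcube (d n : ℕ) (x : EuclideanSpace ℝ (Fin d)) :
    Set (EuclideanSpace ℝ (Fin d)) :=
  dyadicCell d n (dyadicIdx d n x)

/-- `Q` is a dyadic cube (of some level) inside the unit cube `[0,1)^d`. -/
def IsDyadicCube (d : ℕ) (Q : Set (EuclideanSpace ℝ (Fin d))) : Prop :=
  ∃ (n : ℕ) (j : Fin d → ℤ), (∀ i, 0 ≤ j i ∧ j i < 2 ^ n) ∧ Q = dyadicCell d n j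

/-- The half-open unit cube `[0,1)^d`. -/
def unitCube (d : ℕ) : Set (EuclideanSpace ℝ (Fin d)) := dyadicCell d 0 0

/-- `por₂(μ,x,n,ε)`: the least `ℓ'` such that some dyadic subcube `R` of `Q_n(x)` of
relative level `ℓ'` satisfies `μ(R) ≤ ε·μ(Q_n(x))`. -/
noncomputable def por2 (d : ℕ) (μ : Measure (EuclideanSpace ℝ (Fin d)))
    (x : EuclideanSpace ℝ (Fin d)) (n : ℕ) (ε : ℝ) : ℕ :=
  sInf {ℓ' : ℕ | ∃ k : Fin d → Fin (2 ^ ℓ'),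
    μ (dyadicCell d (n + ℓ') (fun i => 2 ^ ℓ' * dyadicIdx d n x i + ((k i : ℕ) : ℤ))) ≤
      ENNReal.ofReal ε * μ (Qcube d n x)}

/-- `μ` is dyadic mean `(ℓ,ρ)`-porous: for every `ε > 0`, at `μ`-a.e. point the lower
asymptotic proportion of scales `i` with `por₂(μ,x,i,ε) ≤ ℓ` is at least `ρ`. -/
def IsDyadicMeanPorous (d : ℕ) (μ : Measure (EuclideanSpace ℝ (Fin d)))
    (ℓ : ℕ) (ρ : ℝ) : Prop :=
  ∀ ε : ℝ, 0 < ε → ∀ᵐ x ∂μ,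
    ρ ≤ Filter.liminf (fun n : ℕ =>
      (((Finset.range n).filter fun i => por2 d μ x i ε ≤ ℓ).card : ℝ) / n) atTop

namespace Por

def chil {d : ℕ} (e : ℕ) (j : Fin d → ℤ) (k : Fin d → Fin (2 ^ e)) : Fin d → ℤ :=
  fun i => 2 ^ e * j i + ((k i : ℕ) : ℤ)

lemma mem_cell {d n : ℕ} {j : Fin d → ℤ} {y : EuclideanSpace ℝ (Fin d)} :
    y ∈ dyadicCell d n j ↔ dyadicIdx d n y = j := by
  have h2 : (0:ℝ) < 2 ^ n := by positivity
  simp only [dyadicCell, dyadicIdx, Set.mem_ofPred_eq, funext_iff]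
  refine forall_congr' fun i => ?_
  rw [Int.floor_eq_iff, div_le_iff₀ h2, lt_div_iff₀ h2, mul_comm (y i)]

lemma idx_div {d : ℕ} (n e : ℕ) (y : EuclideanSpace ℝ (Fin d)) (i : Fin d) :
    dyadicIdx d (n + e) y i / 2 ^ e = dyadicIdx d n y i := by
  simp only [dyadicIdx]
  set z : ℝ := 2 ^ n * y i with hz
  have hM : (0:ℤ) < 2 ^ e := by positivity
  have hMr : (0:ℝ) < 2 ^ e := by positivity
  have e1 : (2:ℝ) ^ (n + e) * y i = 2 ^ e * z := by rw [hz, pow_add]; ring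
  rw [e1]
  apply le_antisymm
  · rw [← Int.lt_add_one_iff, Int.ediv_lt_iff_lt_mul hM, Int.floor_lt]
    push_cast
    have := Int.lt_floor_add_one z
    nlinarith
  · rw [Int.le_ediv_iff_mul_le hM, Int.le_floor]
    push_cast
    have := Int.floor_le z
    nlinarith

lemma chil_inj {d e : ℕ} {j : Fin d → ℤ} {k k' : Fin d → Fin (2 ^ e)}
    (h : chil e j k = chil e j k') : k = k' := by
  funext i
  have := congrFun h i
  simp only [chil] at this
  apply Fin.ext
  omega

lemma cell_eq {d : ℕ} (n e : ℕ) (j : Fin d → ℤ) :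
    dyadicCell d n j = ⋃ k : Fin d → Fin (2 ^ e), dyadicCell d (n + e) (chil e j k) := by
  ext y
  simp only [Set.mem_iUnion, mem_cell]
  have hM : (0:ℤ) < 2 ^ e := by positivity
  constructor
  · rintro rfl
    refine ⟨fun i => ⟨(dyadicIdx d (n + e) y i % 2 ^ e).toNat, ?_⟩, ?_⟩
    · have h1 := Int.emod_nonneg (dyadicIdx d (n + e) y i) hM.ne'
      have h2 := Int.emod_lt_of_pos (dyadicIdx d (n + e) y i) hM
      zify
      rw [Int.toNat_of_nonneg h1]
      exact_mod_cast h2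
    · funext i
      have h1 := Int.emod_nonneg (dyadicIdx d (n + e) y i) hM.ne'
      simp only [chil]
      rw [Int.toNat_of_nonneg h1, ← idx_div n e y i, Int.mul_ediv_add_emod]
  · rintro ⟨k, hk⟩
    funext i
    rw [← idx_div n e y i, hk]
    simp only [chil]
    have h2 : (((k i : ℕ) : ℤ)) < 2 ^ e := by exact_mod_cast (k i).2
    rw [Int.add_comm, Int.add_mul_ediv_left _ _ hM.ne', Int.ediv_eq_zero_of_lt (by positivity) h2]
    simp

lemma meas_idx (d n : ℕ) : Measurable (dyadicIdx d n) := by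
  unfold dyadicIdx
  rw [measurable_pi_iff]
  intro i
  have : Measurable fun x : EuclideanSpace ℝ (Fin d) => x i := by fun_prop
  exact Int.measurable_floor.comp (this.const_mul _)

lemma meas_cell (d n : ℕ) (j : Fin d → ℤ) : MeasurableSet (dyadicCell d n j) := by
  have : dyadicCell d n j = dyadicIdx d n ⁻¹' {j} := by
    ext y; simp [mem_cell]
  rw [this]
  exact meas_idx d n (measurableSet_singleton j)

lemma disj {d : ℕ} (n e : ℕ) (j : Fin d → ℤ) :
    Pairwise (Function.onFun Disjoint
      fun k : Fin d → Fin (2 ^ e) => dyadicCell d (n + e) (chil e j k)) := by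
  intro k k' hkk
  refine Set.disjoint_left.2 fun y h1 h2 => hkk ?_
  rw [mem_cell] at h1 h2
  exact chil_inj (h1.symm.trans h2)

lemma measure_cell {d : ℕ} (μ : Measure (EuclideanSpace ℝ (Fin d))) [IsProbabilityMeasure μ]
    (n e : ℕ) (j : Fin d → ℤ) :
    μ.real (dyadicCell d n j) =
      ∑ k : Fin d → Fin (2 ^ e), μ.real (dyadicCell d (n + e) (chil e j k)) := by
  conv_lhs => rw [cell_eq n e j]
  exact measureReal_iUnion_fintype (disj n e j) (fun k => meas_cell _ _ _)

lemma cell_mono {d : ℕ} {n e : ℕ} (j : Fin d → ℤ) (k : Fin d → Fin (2 ^ e)) :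
    dyadicCell d (n + e) (chil e j k) ⊆ dyadicCell d n j := by
  rw [cell_eq n e j]
  exact Set.subset_iUnion (fun k => dyadicCell d (n + e) (chil e j k)) k

lemma Q_anti {d : ℕ} {n m : ℕ} (h : n ≤ m) (x : EuclideanSpace ℝ (Fin d)) :
    Qcube d m x ⊆ Qcube d n x := by
  obtain ⟨e, rfl⟩ := Nat.exists_eq_add_of_le h
  intro y hy
  rw [Qcube, mem_cell] at hy ⊢
  funext i
  rw [← idx_div n e, hy, idx_div]

/-- porous predicate at a cell -/
def P (d ℓ : ℕ) (μ : Measure (EuclideanSpace ℝ (Fin d))) (ε : ℝ) (n : ℕ) (j : Fin d → ℤ) : Prop :=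
  ∃ k : Fin d → Fin (2 ^ ℓ), μ.real (dyadicCell d (n + ℓ) (chil ℓ j k)) ≤
    ε * μ.real (dyadicCell d n j)

lemma le_iff {d : ℕ} (μ : Measure (EuclideanSpace ℝ (Fin d))) [IsProbabilityMeasure μ]
    {ε : ℝ} (hε : 0 < ε) (A B : Set (EuclideanSpace ℝ (Fin d))) :
    μ A ≤ ENNReal.ofReal ε * μ B ↔ μ.real A ≤ ε * μ.real B := by
  rw [← ofReal_measureReal (μ := μ) (s := A), ← ofReal_measureReal (μ := μ) (s := B),
    ← ENNReal.ofReal_mul hε.le, ENNReal.ofReal_le_ofReal_iff (by positivity)]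

lemma por2_P {d ℓ : ℕ} (hd : 0 < d) (μ : Measure (EuclideanSpace ℝ (Fin d)))
    [IsProbabilityMeasure μ] {ε : ℝ} (hε : 0 < ε) {x : EuclideanSpace ℝ (Fin d)} {n : ℕ}
    (h : por2 d μ x n ε ≤ ℓ) : P d ℓ μ ε n (dyadicIdx d n x) := by
  unfold por2 at h
  set S := {ℓ' : ℕ | ∃ k : Fin d → Fin (2 ^ ℓ'),
    μ (dyadicCell d (n + ℓ') (fun i => 2 ^ ℓ' * dyadicIdx d n x i + ((k i : ℕ) : ℤ))) ≤
      ENNReal.ofReal ε * μ (Qcube d n x)} with hS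
  have hne : S.Nonempty := by
    obtain ⟨e, he⟩ := pow_unbounded_of_one_lt (1 / ε) (one_lt_two)
    refine ⟨e, ?_⟩
    by_contra hcon
    simp only [hS, Set.mem_ofPred_eq, not_exists, le_iff μ hε, not_le] at hcon
    have hsum := measure_cell μ n e (dyadicIdx d n x)
    have hcard : Fintype.card (Fin d → Fin (2 ^ e)) = 2 ^ (e * d) := by
      simp [pow_mul]
    have hle : (2 ^ (e * d) : ℝ) * (ε * μ.real (Qcube d n x)) ≤ μ.real (Qcube d n x) := by
      conv_rhs => rw [Qcube, hsum]
      calc _ = ∑ k : Fin d → Fin (2 ^ e), ε * μ.real (Qcube d n x) := by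
            rw [Finset.sum_const, Finset.card_univ, hcard]; simp
        _ ≤ _ := Finset.sum_le_sum fun k _ => (hcon k).le
    have hpos : 0 < μ.real (Qcube d n x) := by
      have h0 := hcon (fun _ => ⟨0, by positivity⟩)
      refine lt_of_le_of_ne measureReal_nonneg fun h00 => ?_
      rw [← h00, mul_zero] at h0
      have h3 : dyadicCell d (n + e) (fun i => 2 ^ e * dyadicIdx d n x i +
        (((⟨0, by positivity⟩ : Fin (2 ^ e)) : ℕ) : ℤ)) ⊆ Qcube d n x :=
        cell_mono (dyadicIdx d n x) (fun _ => (⟨0, by positivity⟩ : Fin (2 ^ e)))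
      have := measureReal_mono (μ := μ) h3
      linarith
    have h4 : (2:ℝ) ^ e ≤ 2 ^ (e * d) :=
      pow_le_pow_right₀ (by norm_num) (Nat.le_mul_of_pos_right e hd)
    have h5 : 1 < (2:ℝ) ^ (e * d) * ε := by
      rw [div_lt_iff₀ hε] at he
      nlinarith
    nlinarith
  obtain ⟨k, hk⟩ := Nat.sInf_mem hne
  generalize sInf S = ℓ' at *
  obtain ⟨e, rfl⟩ := Nat.exists_eq_add_of_le h
  rw [le_iff μ hε] at hk
  refine ⟨fun i => ⟨2 ^ e * (k i : ℕ), ?_⟩, le_trans (measureReal_mono ?_) hk⟩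
  · rw [pow_add, mul_comm]
    exact Nat.mul_lt_mul_of_pos_right (k i).2 (by positivity)
  · have := cell_mono (n := n + ℓ') (e := e) (chil ℓ' (dyadicIdx d n x) k) (fun _ => ⟨0, by positivity⟩)
    refine subset_trans (subset_of_eq ?_) this
    rw [add_assoc]
    congr 1
    funext i
    simp only [chil]
    push_cast
    ring

end Por

namespace Por

lemma exists_eps (N : ℝ) (hN : 2 ≤ N) : ∃ ε : ℝ, 0 < ε ∧
    Real.sqrt (N - 1) + Real.sqrt ε ≤ Real.sqrt (N * Real.exp (-(Real.log 2 / N))) := by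
  have h1 : N - 1 < N * Real.exp (-(Real.log 2 / N)) := by
    have h2 := Real.add_one_le_exp (-(Real.log 2 / N))
    have h3 : Real.log 2 < 1 := by linarith [Real.log_two_lt_d9]
    have h4 : N * (-(Real.log 2 / N) + 1) = N - Real.log 2 := by field_simp; ring
    nlinarith
  have h5 := Real.sqrt_lt_sqrt (by linarith) h1
  refine ⟨(Real.sqrt (N * Real.exp (-(Real.log 2 / N))) - Real.sqrt (N - 1)) ^ 2, ?_, ?_⟩
  · have : 0 < Real.sqrt (N * Real.exp (-(Real.log 2 / N))) - Real.sqrt (N - 1) := by linarith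
    positivity
  · rw [Real.sqrt_sq (by linarith)]; linarith

lemma sum_sqrt_le {ι : Type*} (s : Finset ι) (q : ι → ℝ) (hq : ∀ i, 0 ≤ q i) :
    ∑ i ∈ s, Real.sqrt (q i) ≤ Real.sqrt s.card * Real.sqrt (∑ i ∈ s, q i) := by
  rw [← Real.sqrt_mul (by positivity)]
  apply Real.le_sqrt_of_sq_le
  refine (sq_sum_le_card_mul_sum_sq).trans_eq ?_
  congr 1
  exact Finset.sum_congr rfl fun i _ => Real.sq_sqrt (hq i)

/-- the constant `c(Q)` -/
noncomputable def cc (d ℓ : ℕ) (μ : Measure (EuclideanSpace ℝ (Fin d))) (ε : ℝ) (n : ℕ)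
    (j : Fin d → ℤ) : ℝ :=
  Real.exp ((ℓ * d * Real.log 2 - (if P d ℓ μ ε n j then Real.log 2 / 2 ^ (ℓ * d) else 0)) / 2)

lemma exp_half (z : ℝ) : Real.exp (z / 2) = Real.sqrt (Real.exp z) := by
  rw [Real.sqrt_eq_rpow, ← Real.exp_mul]; congr 1; ring

lemma exp_N (d ℓ : ℕ) : Real.exp (ℓ * d * Real.log 2) = 2 ^ (ℓ * d) := by
  have := Real.exp_log (x := (2:ℝ) ^ (ℓ * d)) (by positivity)
  rw [Real.log_pow] at this
  push_cast at this
  exact this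

lemma key {d ℓ : ℕ} (μ : Measure (EuclideanSpace ℝ (Fin d))) [IsProbabilityMeasure μ] {ε : ℝ}
    (hε : 0 < ε)
    (h : Real.sqrt ((2:ℝ) ^ (ℓ * d) - 1) + Real.sqrt ε ≤
      Real.sqrt (2 ^ (ℓ * d) * Real.exp (-(Real.log 2 / 2 ^ (ℓ * d)))))
    (n : ℕ) (j : Fin d → ℤ) :
    (cc d ℓ μ ε n j)⁻¹ * ∑ k : Fin d → Fin (2 ^ ℓ),
      Real.sqrt (μ.real (dyadicCell d (n + ℓ) (chil ℓ j k))) ≤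
    Real.sqrt (μ.real (dyadicCell d n j)) := by
  have hc : 0 < cc d ℓ μ ε n j := Real.exp_pos _
  rw [inv_mul_le_iff₀ hc]
  have hcard : Fintype.card (Fin d → Fin (2 ^ ℓ)) = 2 ^ (ℓ * d) := by
    simp [pow_mul]
  have hsum := measure_cell μ n ℓ j
  set q := fun k : Fin d → Fin (2 ^ ℓ) => μ.real (dyadicCell d (n + ℓ) (chil ℓ j k)) with hqdef
  have hq : ∀ k, 0 ≤ q k := fun k => measureReal_nonneg
  by_cases hP : P d ℓ μ ε n j
  · have hcc : cc d ℓ μ ε n j =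
        Real.sqrt (2 ^ (ℓ * d) * Real.exp (-(Real.log 2 / 2 ^ (ℓ * d)))) := by
      rw [cc, if_pos hP, exp_half, sub_eq_add_neg, Real.exp_add, exp_N]
    obtain ⟨k0, hk0⟩ := hP
    rw [← Finset.add_sum_erase _ _ (Finset.mem_univ k0)]
    have h1 := sum_sqrt_le (Finset.univ.erase k0) q hq
    have h2 : ((Finset.univ.erase k0).card : ℝ) = 2 ^ (ℓ * d) - 1 := by
      rw [Finset.card_erase_of_mem (Finset.mem_univ _), Finset.card_univ, hcard,
        Nat.cast_sub Nat.one_le_two_pow]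
      simp
    rw [h2] at h1
    have h3 : ∑ i ∈ Finset.univ.erase k0, q i ≤ μ.real (dyadicCell d n j) := by
      rw [hsum]
      exact Finset.sum_le_sum_of_subset_of_nonneg (Finset.erase_subset _ _) fun i _ _ => hq i
    have h4 := Real.sqrt_le_sqrt h3
    have h5 := Real.sqrt_le_sqrt hk0
    rw [Real.sqrt_mul hε.le] at h5
    rw [hcc]
    have h6 := mul_le_mul_of_nonneg_right h (Real.sqrt_nonneg (μ.real (dyadicCell d n j)))
    have h7 := mul_le_mul_of_nonneg_left h4 (Real.sqrt_nonneg ((2:ℝ) ^ (ℓ * d) - 1))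
    simp only [hqdef] at h1 h7 ⊢
    linarith
  · have hcc : cc d ℓ μ ε n j = Real.sqrt (2 ^ (ℓ * d)) := by
      rw [cc, if_neg hP, exp_half, sub_zero, exp_N]
    have h1 := sum_sqrt_le Finset.univ q hq
    rw [← hsum, Finset.card_univ, hcard] at h1
    rw [hcc]
    exact_mod_cast h1

noncomputable def phi (d ℓ : ℕ) (μ : Measure (EuclideanSpace ℝ (Fin d))) (ε : ℝ) :
    ℕ → ℕ → EuclideanSpace ℝ (Fin d) → ℝ
  | 0, n, x => (Real.sqrt (μ.real (Qcube d n x)))⁻¹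
  | m + 1, n, x => (cc d ℓ μ ε n (dyadicIdx d n x))⁻¹ * phi d ℓ μ ε m (n + ℓ) x

lemma meas_phi (d ℓ : ℕ) (μ : Measure (EuclideanSpace ℝ (Fin d))) (ε : ℝ) (m : ℕ) :
    ∀ n, Measurable (phi d ℓ μ ε m n) := by
  induction m with
  | zero =>
    intro n
    have : Measurable fun j : Fin d → ℤ => (Real.sqrt (μ.real (dyadicCell d n j)))⁻¹ :=
      Measurable.of_discrete
    exact this.comp (meas_idx d n)
  | succ m ih =>
    intro n
    have : Measurable fun j : Fin d → ℤ => (cc d ℓ μ ε n j)⁻¹ := Measurable.of_discrete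
    exact (this.comp (meas_idx d n)).mul (ih (n + ℓ))

lemma lint_phi {d ℓ : ℕ} (μ : Measure (EuclideanSpace ℝ (Fin d))) [IsProbabilityMeasure μ] {ε : ℝ}
    (hε : 0 < ε)
    (h : Real.sqrt ((2:ℝ) ^ (ℓ * d) - 1) + Real.sqrt ε ≤
      Real.sqrt (2 ^ (ℓ * d) * Real.exp (-(Real.log 2 / 2 ^ (ℓ * d)))))
    (m : ℕ) : ∀ (n : ℕ) (j : Fin d → ℤ),
    ∫⁻ x in dyadicCell d n j, ENNReal.ofReal (phi d ℓ μ ε m n x) ∂μ ≤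
      ENNReal.ofReal (Real.sqrt (μ.real (dyadicCell d n j))) := by
  induction m with
  | zero =>
    intro n j
    rw [setLIntegral_congr_fun (g := fun _ => ENNReal.ofReal
      (Real.sqrt (μ.real (dyadicCell d n j)))⁻¹) (meas_cell d n j)]
    · rw [setLIntegral_const]
      rw [← ofReal_measureReal (μ := μ) (s := dyadicCell d n j)]
      rw [← ENNReal.ofReal_mul (by positivity)]
      apply ENNReal.ofReal_le_ofReal
      set p := μ.real (dyadicCell d n j)
      have hp : 0 ≤ p := measureReal_nonneg
      nth_rw 2 [← Real.mul_self_sqrt hp]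
      rcases eq_or_lt_of_le (Real.sqrt_nonneg p) with h0 | h0
      · rw [← h0]; simp
      · rw [← mul_assoc, inv_mul_cancel₀ h0.ne', one_mul]
    · intro x hx
      rw [mem_cell] at hx
      simp only [phi, Qcube, hx]
  | succ m ih =>
    intro n j
    have hc : 0 < cc d ℓ μ ε n j := Real.exp_pos _
    rw [setLIntegral_congr_fun (g := fun x => ENNReal.ofReal (cc d ℓ μ ε n j)⁻¹ *
      ENNReal.ofReal (phi d ℓ μ ε m (n + ℓ) x)) (meas_cell d n j)]
    · rw [lintegral_const_mul' _ _ ENNReal.ofReal_ne_top]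
      calc _ ≤ ENNReal.ofReal (cc d ℓ μ ε n j)⁻¹ * ∑ k : Fin d → Fin (2 ^ ℓ),
            ENNReal.ofReal (Real.sqrt (μ.real (dyadicCell d (n + ℓ) (chil ℓ j k)))) := by
            gcongr
            rw [cell_eq n ℓ j]
            refine (lintegral_iUnion_le _ _).trans ?_
            rw [tsum_fintype]
            exact Finset.sum_le_sum fun k _ => ih _ _
        _ = ENNReal.ofReal ((cc d ℓ μ ε n j)⁻¹ * ∑ k : Fin d → Fin (2 ^ ℓ),
            (Real.sqrt (μ.real (dyadicCell d (n + ℓ) (chil ℓ j k))))) := by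
            rw [ENNReal.ofReal_mul (by positivity),
              ENNReal.ofReal_sum_of_nonneg fun _ _ => Real.sqrt_nonneg _]
        _ ≤ _ := ENNReal.ofReal_le_ofReal (key μ hε h n j)
    · intro x hx
      rw [mem_cell] at hx
      simp only [phi, hx]
      rw [ENNReal.ofReal_mul (by positivity)]

lemma lint_phi_total {d ℓ : ℕ} (μ : Measure (EuclideanSpace ℝ (Fin d))) [IsProbabilityMeasure μ]
    {ε : ℝ} (hε : 0 < ε) (hsupp : μ (unitCube d) = 1)
    (h : Real.sqrt ((2:ℝ) ^ (ℓ * d) - 1) + Real.sqrt ε ≤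
      Real.sqrt (2 ^ (ℓ * d) * Real.exp (-(Real.log 2 / 2 ^ (ℓ * d)))))
    (m a : ℕ) :
    ∫⁻ x, ENNReal.ofReal (phi d ℓ μ ε m a x) ∂μ ≤ (Fintype.card (Fin d → Fin (2 ^ a)) : ℕ) := by
  have hae : ∀ᵐ x ∂μ, x ∈ unitCube d := by
    exact (prob_compl_eq_zero_iff (meas_cell d 0 0)).2 hsupp
  have := Measure.restrict_eq_self_of_ae_mem hae
  rw [unitCube, cell_eq 0 a, zero_add] at this
  have e : ∫⁻ x, ENNReal.ofReal (phi d ℓ μ ε m a x) ∂μ =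
      ∫⁻ x in ⋃ k : Fin d → Fin (2 ^ a), dyadicCell d a (chil a 0 k),
        ENNReal.ofReal (phi d ℓ μ ε m a x) ∂μ := by rw [this]
  rw [e]
  refine (lintegral_iUnion_le _ _).trans ?_
  rw [tsum_fintype, Fintype.card, Finset.card_eq_sum_ones]
  push_cast
  refine Finset.sum_le_sum fun k _ => (lint_phi μ hε h m a _).trans ?_
  rw [← ENNReal.ofReal_one]
  apply ENNReal.ofReal_le_ofReal
  rw [Real.sqrt_le_one]
  exact measureReal_le_one

lemma ae_phi {d ℓ : ℕ} (μ : Measure (EuclideanSpace ℝ (Fin d))) [IsProbabilityMeasure μ]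
    {ε : ℝ} (hε : 0 < ε) (hsupp : μ (unitCube d) = 1)
    (h : Real.sqrt ((2:ℝ) ^ (ℓ * d) - 1) + Real.sqrt ε ≤
      Real.sqrt (2 ^ (ℓ * d) * Real.exp (-(Real.log 2 / 2 ^ (ℓ * d)))))
    (a : ℕ) : ∀ᵐ x ∂μ, ∀ᶠ m : ℕ in atTop, phi d ℓ μ ε m a x < ((m:ℝ) + 1) ^ 2 := by
  have key : ∀ m : ℕ, μ {x | ENNReal.ofReal (((m:ℝ) + 1) ^ 2) ≤ ENNReal.ofReal (phi d ℓ μ ε m a x)} ≤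
      ENNReal.ofReal ((Fintype.card (Fin d → Fin (2 ^ a)) : ℝ) * (1 / (((m + 1 : ℕ):ℝ)) ^ 2)) := by
    intro m
    have hpos : (0:ℝ) < ((m:ℝ) + 1) ^ 2 := by positivity
    refine (meas_ge_le_lintegral_div (meas_phi d ℓ μ ε m a).ennreal_ofReal.aemeasurable
      (ENNReal.ofReal_pos.2 hpos).ne' ENNReal.ofReal_ne_top).trans ?_
    rw [mul_one_div, ENNReal.ofReal_div_of_pos (by positivity), ENNReal.ofReal_natCast]
    push_cast
    gcongr
    have := lint_phi_total μ hε hsupp h m a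
    push_cast at this
    simpa using this
  have hsm : Summable fun m : ℕ =>
      (Fintype.card (Fin d → Fin (2 ^ a)) : ℝ) * (1 / (((m + 1 : ℕ):ℝ)) ^ 2) :=
    Summable.mul_left _ ((summable_nat_add_iff 1).2
      (Real.summable_one_div_nat_pow.2 (by norm_num : 1 < 2)))
  have hfin := ne_top_of_le_ne_top hsm.tsum_ofReal_ne_top (ENNReal.tsum_le_tsum key)
  filter_upwards [ae_eventually_notMem hfin] with x hx
  filter_upwards [hx] with m hm
  simp only [not_le] at hm
  exact (ENNReal.ofReal_lt_ofReal_iff (by positivity)).1 hm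

lemma ae_pos {d : ℕ} (μ : Measure (EuclideanSpace ℝ (Fin d))) [IsProbabilityMeasure μ] :
    ∀ᵐ x ∂μ, ∀ n, 0 < μ.real (Qcube d n x) := by
  rw [ae_all_iff]
  intro n
  have h0 : ∀ᵐ x ∂μ, ∀ j : Fin d → ℤ, μ (dyadicCell d n j) = 0 → x ∉ dyadicCell d n j := by
    rw [ae_all_iff]
    intro j
    by_cases hj : μ (dyadicCell d n j) = 0
    · filter_upwards [measure_eq_zero_iff_ae_notMem.1 hj] with x hx _ using hx
    · simp [hj]
  filter_upwards [h0] with x hx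
  rw [measureReal_def, ENNReal.toReal_pos_iff]
  refine ⟨pos_iff_ne_zero.2 fun h => hx _ h (mem_cell.2 rfl), measure_lt_top _ _⟩

lemma log_phi {d ℓ : ℕ} (μ : Measure (EuclideanSpace ℝ (Fin d))) (ε : ℝ)
    {x : EuclideanSpace ℝ (Fin d)} (hx : ∀ n, 0 < μ.real (Qcube d n x)) (m : ℕ) : ∀ n,
    0 < phi d ℓ μ ε m n x ∧ Real.log (phi d ℓ μ ε m n x) =
      -(Real.log (μ.real (Qcube d (n + ℓ * m) x)) / 2) -
      (m * (ℓ * d * Real.log 2) - (∑ i ∈ Finset.range m,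
        if P d ℓ μ ε (n + ℓ * i) (dyadicIdx d (n + ℓ * i) x) then (1:ℝ) else 0) *
          (Real.log 2 / 2 ^ (ℓ * d))) / 2 := by
  induction m with
  | zero =>
    intro n
    refine ⟨by simp only [phi]; have := hx n; positivity, ?_⟩
    simp only [phi]
    rw [Real.log_inv, Real.log_sqrt (hx n).le]
    simp
  | succ m ih =>
    intro n
    obtain ⟨h1, h2⟩ := ih (n + ℓ)
    have hc : 0 < cc d ℓ μ ε n (dyadicIdx d n x) := Real.exp_pos _
    refine ⟨by simp only [phi]; positivity, ?_⟩
    simp only [phi]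
    rw [Real.log_mul (by positivity) h1.ne', h2, Real.log_inv, cc, Real.log_exp,
      Finset.sum_range_succ']
    have e1 : ∀ i, n + ℓ + ℓ * i = n + ℓ * (i + 1) := fun i => by ring
    simp only [e1, mul_zero, add_zero]
    push_cast
    split_ifs <;> ring

end Por

namespace Por

lemma sum_blocks (ℓ m : ℕ) (f : ℕ → ℝ) :
    ∑ a ∈ Finset.range ℓ, ∑ i ∈ Finset.range m, f (a + ℓ * i) =
      ∑ t ∈ Finset.range (ℓ * m), f t := by
  induction m with
  | zero => simp
  | succ m ih =>
    simp only [Finset.sum_range_succ, Finset.sum_add_distrib, ih]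
    rw [mul_add, mul_one, Finset.sum_range_add]
    congr 1
    exact Finset.sum_congr rfl fun a _ => by rw [add_comm]

lemma final_ineq {d ℓ : ℕ} (hd : 0 < d) (hℓ : 0 < ℓ) (μ : Measure (EuclideanSpace ℝ (Fin d)))
    [IsProbabilityMeasure μ] {ε : ℝ} (hε : 0 < ε)
    {x : EuclideanSpace ℝ (Fin d)} (hx : ∀ n, 0 < μ.real (Qcube d n x))
    (hev : ∀ a : ℕ, ∀ᶠ m : ℕ in atTop, phi d ℓ μ ε m a x < ((m:ℝ) + 1) ^ 2) :
    ∀ᶠ n : ℕ in atTop, ℓ * (-Real.log (μ.real (Qcube d n x))) ≤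
      ℓ * (4 * Real.log (n + 2) + (n + ℓ) * (d * Real.log 2)) -
      (Real.log 2 / 2 ^ (ℓ * d)) *
        (((Finset.range n).filter fun i => por2 d μ x i ε ≤ ℓ).card : ℝ) := by
  have hall : ∀ᶠ m : ℕ in atTop, ∀ a ∈ Finset.range ℓ, phi d ℓ μ ε m a x < ((m:ℝ) + 1) ^ 2 :=
    (Filter.eventually_all_finset _).2 fun a _ => hev a
  have ht : Tendsto (fun n : ℕ => n / ℓ + 1) atTop atTop :=
    (tendsto_add_atTop_nat 1).comp (Nat.tendsto_div_const_atTop hℓ.ne')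
  filter_upwards [ht.eventually hall] with n hn
  set m := n / ℓ + 1 with hm
  have hlog2 : 0 < Real.log 2 := Real.log_pos (by norm_num)
  have hw : 0 < Real.log 2 / 2 ^ (ℓ * d) := by positivity
  set w := Real.log 2 / 2 ^ (ℓ * d) with hwdef
  set f : ℕ → ℝ := fun t => if P d ℓ μ ε t (dyadicIdx d t x) then (1:ℝ) else 0 with hf
  have hf0 : ∀ t, 0 ≤ f t := fun t => by simp only [hf]; split_ifs <;> norm_num
  have hmn : n ≤ ℓ * m := by
    exact (Nat.lt_mul_div_succ n hℓ).le
  have hmn2 : ℓ * m ≤ n + ℓ := by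
    have := Nat.mul_div_le n ℓ
    rw [hm, mul_add]; omega
  have hmn3 : m ≤ n + 1 := by
    have := Nat.div_le_self n ℓ
    omega
  have hmn2r : (ℓ:ℝ) * m ≤ n + ℓ := by exact_mod_cast hmn2
  have hmn3r : (m:ℝ) ≤ n + 1 := by exact_mod_cast hmn3
  have hone : ∀ a ∈ Finset.range ℓ, -Real.log (μ.real (Qcube d n x)) ≤
      4 * Real.log (n + 2) + (n + ℓ) * (d * Real.log 2) -
      (∑ i ∈ Finset.range m, f (a + ℓ * i)) * w := by
    intro a ha
    obtain ⟨h1, h2⟩ := log_phi (ℓ := ℓ) μ ε hx m a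
    have h3 := Real.log_le_log h1 (hn a ha).le
    rw [h2, Real.log_pow] at h3
    have h4 : Real.log (μ.real (Qcube d (a + ℓ * m) x)) ≤ Real.log (μ.real (Qcube d n x)) :=
      Real.log_le_log (hx _) (measureReal_mono (Q_anti (by omega) x))
    have h5 : Real.log ((m:ℝ) + 1) ≤ Real.log (n + 2) :=
      Real.log_le_log (by positivity) (by linarith)
    have h6 : (ℓ * m) * (d * Real.log 2) ≤ (n + ℓ) * (d * Real.log 2) :=
      mul_le_mul_of_nonneg_right hmn2r (by positivity)
    push_cast at h3
    simp only [hf]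
    linarith
  have hsum := Finset.sum_le_sum hone
  rw [Finset.sum_sub_distrib, ← Finset.sum_mul, sum_blocks] at hsum
  simp only [Finset.sum_const, Finset.card_range, nsmul_eq_mul] at hsum
  have hK : (((Finset.range n).filter fun i => por2 d μ x i ε ≤ ℓ).card : ℝ) ≤
      ∑ t ∈ Finset.range (ℓ * m), f t := by
    rw [Finset.card_filter]
    push_cast
    refine le_trans (Finset.sum_le_sum (g := f) fun i _ => ?_)
      (Finset.sum_le_sum_of_subset_of_nonneg (Finset.range_mono hmn) fun i _ _ => hf0 i)
    by_cases hp : por2 d μ x i ε ≤ ℓ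
    · have := por2_P hd μ hε hp
      simp [hp, hf, this]
    · simp [hp, hf0]
  have := mul_le_mul_of_nonneg_left hK hw.le
  linarith

lemma rate {d ℓ : ℕ} (hd : 0 < d) (hℓ : 0 < ℓ) (μ : Measure (EuclideanSpace ℝ (Fin d)))
    [IsProbabilityMeasure μ] {ε ρ : ℝ} (hε : 0 < ε)
    {x : EuclideanSpace ℝ (Fin d)} (hx : ∀ n, 0 < μ.real (Qcube d n x))
    (hev : ∀ a : ℕ, ∀ᶠ m : ℕ in atTop, phi d ℓ μ ε m a x < ((m:ℝ) + 1) ^ 2)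
    (hρ : ρ ≤ Filter.liminf (fun n : ℕ =>
      (((Finset.range n).filter fun i => por2 d μ x i ε ≤ ℓ).card : ℝ) / n) atTop)
    {B : ℝ} (hB : (d : ℝ) - ρ / (2 ^ (ℓ * d) * ℓ) < B) :
    ∀ᶠ n : ℕ in atTop, -Real.log (μ.real (Qcube d n x)) ≤ Real.log 2 * (B * n) := by
  have hlog2 : 0 < Real.log 2 := Real.log_pos (by norm_num)
  have hℓr : (0:ℝ) < ℓ := by exact_mod_cast hℓ
  have hN : (0:ℝ) < 2 ^ (ℓ * d) * ℓ := by positivity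
  set δ := (B - ((d : ℝ) - ρ / (2 ^ (ℓ * d) * ℓ))) / 2 with hδ
  have hδpos : 0 < δ := by rw [hδ]; linarith
  have hlt : ρ - δ * (2 ^ (ℓ * d) * ℓ) < Filter.liminf (fun n : ℕ =>
      (((Finset.range n).filter fun i => por2 d μ x i ε ≤ ℓ).card : ℝ) / n) atTop := by
    have : 0 < δ * (2 ^ (ℓ * d) * ℓ) := by positivity
    linarith
  have hbdd : IsBoundedUnder (· ≥ ·) atTop (fun n : ℕ =>
      (((Finset.range n).filter fun i => por2 d μ x i ε ≤ ℓ).card : ℝ) / n) :=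
    isBoundedUnder_of ⟨0, fun n => by positivity⟩
  have hlim : Tendsto (fun n : ℕ => (4 * Real.log ((n:ℝ) + 2) + ℓ * (d * Real.log 2)) / n)
      atTop (nhds 0) := by
    have h1 : (fun y : ℝ => Real.log (y + 2)) =o[atTop] fun y : ℝ => y := by
      have h2 : (fun y : ℝ => Real.log (y + 2)) =o[atTop] fun y : ℝ => y + 2 :=
        Real.isLittleO_log_id_atTop.comp_tendsto (tendsto_atTop_add_const_right _ _ tendsto_id)
      refine h2.trans_isBigO ?_
      refine Asymptotics.IsBigO.of_bound 2 ?_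
      filter_upwards [eventually_ge_atTop (2:ℝ)] with y hy
      rw [Real.norm_of_nonneg (by linarith), Real.norm_of_nonneg (by linarith)]
      linarith
    have h3 : (fun y : ℝ => 4 * Real.log (y + 2) + ℓ * (d * Real.log 2)) =o[atTop]
        fun y : ℝ => y :=
      (h1.const_mul_left 4).add (Asymptotics.isLittleO_const_id_atTop _)
    exact h3.tendsto_div_nhds_zero.comp tendsto_natCast_atTop_atTop
  filter_upwards [final_ineq hd hℓ μ hε hx hev, eventually_lt_of_lt_liminf hlt hbdd,
    hlim.eventually (gt_mem_nhds (show 0 < Real.log 2 * δ by positivity)),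
    eventually_gt_atTop 0] with n h1 h2 h3 h4
  have hn : (0:ℝ) < n := by exact_mod_cast h4
  rw [lt_div_iff₀ hn] at h2
  rw [div_lt_iff₀ hn] at h3
  set K := (((Finset.range n).filter fun i => por2 d μ x i ε ≤ ℓ).card : ℝ)
  have h5 : -Real.log (μ.real (Qcube d n x)) ≤
      (4 * Real.log (n + 2) + (n + ℓ) * (d * Real.log 2)) -
        (Real.log 2 / (2 ^ (ℓ * d) * ℓ)) * K := by
    have e : ℓ * ((Real.log 2 / (2 ^ (ℓ * d) * ℓ)) * K) = (Real.log 2 / 2 ^ (ℓ * d)) * K := by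
      field_simp
    refine le_of_mul_le_mul_left ?_ hℓr
    rw [mul_sub, e]
    exact h1
  have h6 : Real.log 2 * ((ρ / (2 ^ (ℓ * d) * ℓ) - δ) * n) ≤
      (Real.log 2 / (2 ^ (ℓ * d) * ℓ)) * K := by
    have e : Real.log 2 * ((ρ / (2 ^ (ℓ * d) * ℓ) - δ) * n) =
      (Real.log 2 / (2 ^ (ℓ * d) * ℓ)) * ((ρ - δ * (2 ^ (ℓ * d) * ℓ)) * n) := by
      field_simp
    rw [e]
    exact mul_le_mul_of_nonneg_left h2.le (by positivity)
  have hBe : B = 2 * δ + (d : ℝ) - ρ / (2 ^ (ℓ * d) * ℓ) := by rw [hδ]; ring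
  rw [hBe]
  nlinarith

lemma Q_sub_ball {d n : ℕ} {x : EuclideanSpace ℝ (Fin d)} {r : ℝ} (hr : (d:ℝ) / 2 ^ n < r) :
    Qcube d n x ⊆ Metric.ball x r := by
  intro y hy
  rw [Metric.mem_ball]
  refine lt_of_le_of_lt ?_ hr
  have h2 : (0:ℝ) < 2 ^ n := by positivity
  have hx : x ∈ Qcube d n x := mem_cell.2 rfl
  have hco : ∀ i, |y i - x i| ≤ 1 / 2 ^ n := by
    intro i
    have h1 := hy i
    have h3 := hx i
    rw [add_div] at h1 h3
    rw [abs_le]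
    constructor <;> linarith [h1.1, h1.2, h3.1, h3.2]
  rw [EuclideanSpace.dist_eq]
  apply Real.sqrt_le_iff.2
  refine ⟨by positivity, ?_⟩
  calc ∑ i, dist (y i) (x i) ^ 2 ≤ ∑ i : Fin d, (1 / 2 ^ n : ℝ) ^ 2 := by
        refine Finset.sum_le_sum fun i _ => ?_
        rw [Real.dist_eq]
        exact pow_le_pow_left₀ (abs_nonneg _) (hco i) 2
    _ = d * (1 / 2 ^ n : ℝ) ^ 2 := by simp
    _ ≤ (d:ℝ) ^ 2 * (1 / 2 ^ n : ℝ) ^ 2 := by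
        gcongr
        rcases Nat.eq_zero_or_pos d with h | h
        · simp [h]
        · have : (1:ℝ) ≤ d := by exact_mod_cast h
          nlinarith
    _ = _ := by ring

lemma localDim_le {d : ℕ} (hd : 0 < d) (μ : Measure (EuclideanSpace ℝ (Fin d)))
    [IsProbabilityMeasure μ] {x : EuclideanSpace ℝ (Fin d)}
    (hx : ∀ n, 0 < μ.real (Qcube d n x)) {B C : ℝ} (hB : 0 ≤ B) (hBC : B < C)
    (hev : ∀ᶠ n : ℕ in atTop, -Real.log (μ.real (Qcube d n x)) ≤ Real.log 2 * (B * n)) :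
    upperLocalDim μ x ≤ (C : EReal) := by
  have hlog2 : 0 < Real.log 2 := Real.log_pos (by norm_num)
  have hdr : (1:ℝ) ≤ d := by exact_mod_cast hd
  have hlogd : 0 ≤ Real.log d := Real.log_nonneg hdr
  -- the scale attached to a radius
  set N : ℝ → ℕ := fun r => ⌊(Real.log d - Real.log r) / Real.log 2⌋₊ + 1 with hN
  have hlogr : Tendsto (fun r : ℝ => -Real.log r) (nhdsWithin 0 (Set.Ioi 0)) atTop :=
    tendsto_neg_atBot_atTop.comp Real.tendsto_log_nhdsGT_zero
  have hNt : Tendsto N (nhdsWithin 0 (Set.Ioi 0)) atTop := by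
    refine (tendsto_add_atTop_nat 1).comp (tendsto_nat_floor_atTop.comp ?_)
    refine Tendsto.atTop_div_const hlog2 ?_
    simpa only [sub_eq_add_neg] using tendsto_atTop_add_const_left _ (Real.log d) hlogr
  have hbig : ∀ᶠ r in nhdsWithin (0:ℝ) (Set.Ioi 0),
      B * (Real.log d + Real.log 2) / (C - B) < -Real.log r := hlogr.eventually_gt_atTop _
  refine Filter.limsup_le_of_le (by isBoundedDefault) ?_
  filter_upwards [hNt.eventually hev, hbig, hlogr.eventually_gt_atTop 0, self_mem_nhdsWithin]
    with r h1 h2 h3 h4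
  have hr : 0 < r := h4
  rw [EReal.coe_le_coe_iff]
  set t := (Real.log d - Real.log r) / Real.log 2 with ht
  have ht0 : 0 ≤ t := by
    rw [ht]; apply div_nonneg _ hlog2.le; linarith
  have htl : t * Real.log 2 = Real.log d - Real.log r := by rw [ht]; field_simp
  have hNup : (N r : ℝ) ≤ t + 1 := by
    simp only [hN]; push_cast
    linarith [Nat.floor_le ht0]
  have hNlow : t < N r := by
    simp only [hN]; push_cast
    exact Nat.lt_floor_add_one t
  have hrad : (d:ℝ) / 2 ^ (N r) < r := by
    rw [div_lt_iff₀ (by positivity), ← Real.log_lt_log_iff (by positivity) (by positivity),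
      Real.log_mul hr.ne' (by positivity), Real.log_pow]
    nlinarith
  have hmono : μ.real (Qcube d (N r) x) ≤ (μ (Metric.ball x r)).toReal :=
    measureReal_mono (Q_sub_ball hrad)
  have hlog := Real.log_le_log (hx (N r)) hmono
  rw [div_lt_iff₀ (by linarith)] at h2
  rw [div_le_iff_of_neg (by linarith)]
  have h5 : Real.log 2 * (B * N r) ≤ Real.log 2 * (B * (t + 1)) := by gcongr
  have h6 : Real.log 2 * (B * (t + 1)) = B * (Real.log d - Real.log r + Real.log 2) := by
    rw [← htl]; ring
  nlinarith

end Por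

/-- A dyadic mean `(ℓ,ρ)`-porous Borel probability measure on `[0,1)^d`
(assigning zero mass to boundaries of dyadic cubes) has upper packing dimension at most
`d − 2^{−ℓd}·ρ/ℓ`. -/
theorem stmt10 (d ℓ : ℕ) (hd : 0 < d) (hℓ : 0 < ℓ) (ρ : ℝ) (hρ : ρ ∈ Set.Ioc (0 : ℝ) 1)
    (μ : Measure (EuclideanSpace ℝ (Fin d))) [IsProbabilityMeasure μ]
    (hsupp : μ (unitCube d) = 1)
    (hbd : ∀ Q, IsDyadicCube d Q → μ (frontier Q) = 0)
    (hpor : IsDyadicMeanPorous d μ ℓ ρ) :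
    upperPackingDim μ ≤
      (((d : ℝ) - (2 : ℝ) ^ (-((ℓ * d : ℕ) : ℤ)) * ρ / ℓ : ℝ) : EReal) := by
  have hN2 : (2:ℝ) ≤ 2 ^ (ℓ * d) := by
    have : (2:ℝ) ^ 1 ≤ 2 ^ (ℓ * d) :=
      pow_le_pow_right₀ (by norm_num) (Nat.mul_pos hℓ hd)
    simpa using this
  have hℓr : (1:ℝ) ≤ ℓ := by exact_mod_cast hℓ
  have hdr : (1:ℝ) ≤ d := by exact_mod_cast hd
  obtain ⟨ε, hε, h⟩ := Por.exists_eps _ hN2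
  have e : (d : ℝ) - (2 : ℝ) ^ (-((ℓ * d : ℕ) : ℤ)) * ρ / ℓ =
      (d : ℝ) - ρ / (2 ^ (ℓ * d) * ℓ) := by
    rw [zpow_neg, zpow_natCast]
    field_simp
  rw [e]
  have hnn : 0 ≤ (d : ℝ) - ρ / (2 ^ (ℓ * d) * ℓ) := by
    have : ρ / (2 ^ (ℓ * d) * ℓ) ≤ 1 := by
      rw [div_le_one (by positivity)]
      nlinarith [hρ.2]
    linarith
  have hall : ∀ᵐ x ∂μ, ∀ a : ℕ, ∀ᶠ m : ℕ in atTop,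
      Por.phi d ℓ μ ε m a x < ((m:ℝ) + 1) ^ 2 :=
    ae_all_iff.2 fun a => Por.ae_phi μ hε hsupp h a
  refine essSup_le_of_ae_le _ ?_
  filter_upwards [hall, Por.ae_pos μ, hpor ε hε] with x h1 h2 h3
  rw [← EReal.le_of_forall_lt_iff_le]
  intro z hz
  rw [EReal.coe_lt_coe_iff] at hz
  obtain ⟨B, hB1, hB2⟩ := exists_between hz
  exact Por.localDim_le hd μ h2 (hnn.trans hB1.le) hB2 (Por.rate hd hℓ μ hε h2 h1 h3 hB1)
end

section
/- Let μ be a Borel probability measure on [0,1)^d which is mean (α,ρ)-porous, where α ∈ (0,1/2] and ρ ∈ (0,1]. Then for Lebesgue-almost every t ∈ [0,1/2)^d, the measure (1/4)μ + t (the image of μ under the map x ↦ x/4 + t) is dyadic mean (ℓ, 2^{−d}ρ)-porous, where ℓ = ⌈|log₂(α/(4√d))|⌉. -/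
open MeasureTheory Filter Metric Set
open scoped Classical

/-! ### Probabilistic part -/

/-- The middle half of the period. -/
def midSet : Set ℝ := {u | Int.fract u ∈ Set.Ico (1/4 : ℝ) (3/4)}

lemma midSet_meas : MeasurableSet midSet :=
  measurable_fract measurableSet_Ico

lemma midSet_add_int (u : ℝ) (n : ℤ) : u + n ∈ midSet ↔ u ∈ midSet := by
  simp [midSet]

lemma midSet_add_half (u : ℝ) : u + 1/2 ∈ midSet ↔ u ∉ midSet := by
  have h0 := Int.fract_nonneg u
  have h1 := Int.fract_lt_one u
  have key : Int.fract (u + 1/2) = if Int.fract u < 1/2 then Int.fract u + 1/2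
      else Int.fract u - 1/2 := by
    split_ifs with h
    · rw [Int.fract_eq_iff]
      refine ⟨by linarith, by linarith, ⌊u⌋, ?_⟩
      have := Int.self_sub_floor u
      linarith
    · rw [Int.fract_eq_iff]
      refine ⟨by linarith, by linarith, ⌊u⌋ + 1, ?_⟩
      have := Int.self_sub_floor u
      push_cast
      linarith
  simp only [midSet, Set.mem_ofPred_eq, Set.mem_Ico, key]
  split_ifs with h
  · constructor
    · rintro ⟨a, b⟩ ⟨c, e⟩; linarith
    · intro hh
      refine ⟨by linarith, ?_⟩
      by_contra hc
      exact hh ⟨by linarith, by linarith⟩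
  · constructor
    · rintro ⟨a, b⟩ ⟨c, e⟩; linarith
    · intro hh
      refine ⟨?_, by linarith⟩
      by_contra hc
      exact hh ⟨by linarith, by linarith⟩

/-- Lebesgue measure on a period. -/
noncomputable def perMeas : Measure ℝ := volume.restrict (Set.Ioc (-1/2 : ℝ) (1/2))

instance : IsProbabilityMeasure perMeas :=
  ⟨by simp [perMeas]; norm_num⟩

lemma perMeas_shift (S : Set ℝ) (hS : MeasurableSet S) (hp : ∀ u, u + 1 ∈ S ↔ u ∈ S) (c : ℝ) :
    perMeas.real {u | u + c ∈ S} = perMeas.real S := by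
  have key : ∀ T : Set ℝ, MeasurableSet T → perMeas.real T =
      ∫ u in (-1/2 : ℝ)..(-1/2+1), T.indicator (fun _ => (1:ℝ)) u := by
    intro T hT
    rw [intervalIntegral.integral_of_le (by norm_num), integral_indicator hT]
    simp [perMeas]
    norm_num
  have hm : MeasurableSet {u | u + c ∈ S} := (measurable_add_const c) hS
  rw [key _ hS, key _ hm]
  have e : ∀ u, {u | u + c ∈ S}.indicator (fun _ => (1:ℝ)) u =
      S.indicator (fun _ => (1:ℝ)) (u + c) := by
    intro u; simp [Set.indicator]
  simp_rw [e]
  rw [intervalIntegral.integral_comp_add_right (fun u => S.indicator (fun _ => (1:ℝ)) u)]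
  have per : Function.Periodic (fun u => S.indicator (fun _ => (1:ℝ)) u) 1 := by
    intro u; simp [Set.indicator, hp]
  have := per.intervalIntegral_add_eq (-1/2 + c) (-1/2)
  rw [← this]
  congr 1
  ring

/-- one-dimensional events -/
def F1 (i : ℕ) (a : ℝ) : Set ℝ := {t | (2:ℝ)^i * (a + t) ∈ midSet}

lemma F1_meas (i : ℕ) (a : ℝ) : MeasurableSet (F1 i a) := by
  have : Measurable (fun t : ℝ => (2:ℝ)^i * (a + t)) := by fun_prop
  exact this midSet_meas

lemma F1_per (i : ℕ) (a : ℝ) (u : ℝ) : u + 1 ∈ F1 i a ↔ u ∈ F1 i a := by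
  simp only [F1, Set.mem_ofPred_eq]
  rw [← midSet_add_int (2^i * (a+u)) (2^i)]
  push_cast
  ring_nf

lemma F1_half (i : ℕ) (a : ℝ) (u : ℝ) : u + (2:ℝ)^i / 2 / (2^i * 2^i) ∈ F1 i a ↔ u ∉ F1 i a := by
  simp only [F1, Set.mem_ofPred_eq]
  rw [← midSet_add_half]
  have : (2:ℝ)^i ≠ 0 := by positivity
  have e : (2:ℝ) ^ i * (a + (u + 2 ^ i / 2 / (2 ^ i * 2 ^ i))) = 2 ^ i * (a + u) + 1 / 2 := by
    field_simp
    try ring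
  rw [e]

lemma F1_inv (i j : ℕ) (h : i < j) (a : ℝ) (u : ℝ) :
    u + (2:ℝ)^i / 2 / (2^i * 2^i) ∈ F1 j a ↔ u ∈ F1 j a := by
  obtain ⟨k, rfl⟩ := Nat.exists_eq_add_of_lt h
  simp only [F1, Set.mem_ofPred_eq]
  rw [← midSet_add_int (2^(i+k+1) * (a+u)) (2^k)]
  have : (2:ℝ)^i ≠ 0 := by positivity
  have e : (2:ℝ) ^ (i+k+1) * (a + (u + 2 ^ i / 2 / (2 ^ i * 2 ^ i))) =
      2 ^ (i+k+1) * (a + u) + ((2^k : ℤ) : ℝ) := by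
    push_cast
    rw [pow_succ, pow_add]
    field_simp
    try ring
  rw [e]

lemma F1_prob (i : ℕ) (a : ℝ) : perMeas.real (F1 i a) = 1/2 := by
  have h := perMeas_shift (F1 i a) (F1_meas i a) (F1_per i a) ((2:ℝ)^i / 2 / (2^i * 2^i))
  have e : {u | u + (2:ℝ)^i / 2 / (2^i * 2^i) ∈ F1 i a} = (F1 i a)ᶜ := by
    ext u; exact F1_half i a u
  rw [e, probReal_compl_eq_one_sub (F1_meas i a)] at h
  linarith

lemma F1_prob2_aux (i j : ℕ) (hij : i < j) (a : ℝ) : perMeas.real (F1 i a ∩ F1 j a) = 1/4 := by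
  have h := perMeas_shift (F1 i a ∩ F1 j a) ((F1_meas i a).inter (F1_meas j a))
    (fun u => and_congr (F1_per i a u) (F1_per j a u)) ((2:ℝ)^i / 2 / (2^i * 2^i))
  have e : {u | u + (2:ℝ)^i / 2 / (2^i * 2^i) ∈ F1 i a ∩ F1 j a} = F1 j a \ F1 i a := by
    ext u
    have h1 := F1_half i a u
    have h2 := F1_inv i j hij a u
    simp only [Set.mem_ofPred_eq, Set.mem_inter_iff, Set.mem_sdiff, h1, h2]
    tauto
  rw [e] at h
  have h3 := measureReal_inter_add_sdiff (μ := perMeas) (s := F1 j a) (F1_meas i a)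
  rw [h, Set.inter_comm, F1_prob] at h3
  linarith

lemma F1_prob2 (i j : ℕ) (hij : i ≠ j) (a : ℝ) : perMeas.real (F1 i a ∩ F1 j a) = 1/4 := by
  rcases lt_or_gt_of_ne hij with h | h
  · exact F1_prob2_aux i j h a
  · rw [Set.inter_comm]; exact F1_prob2_aux j i h a

/-- multi-dimensional events -/
def Fd (d i : ℕ) (a : Fin d → ℝ) : Set (Fin d → ℝ) := {t | ∀ k, t k ∈ F1 i (a k)}

lemma Fd_eq (d i : ℕ) (a : Fin d → ℝ) : Fd d i a = Set.univ.pi (fun k => F1 i (a k)) := by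
  ext; simp [Fd]

lemma Fd_meas (d i : ℕ) (a : Fin d → ℝ) : MeasurableSet (Fd d i a) := by
  rw [Fd_eq]; exact MeasurableSet.univ_pi (fun k => F1_meas _ _)

/-- product measure on a period cell -/
noncomputable def perMeasD (d : ℕ) : Measure (Fin d → ℝ) := Measure.pi (fun _ => perMeas)

instance (d : ℕ) : IsProbabilityMeasure (perMeasD d) := by
  unfold perMeasD; infer_instance

lemma Fd_prob (d i : ℕ) (a : Fin d → ℝ) : (perMeasD d).real (Fd d i a) = (1/2)^d := by
  rw [Fd_eq, perMeasD, measureReal_def, Measure.pi_pi, ENNReal.toReal_prod]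
  simp only [← measureReal_def, F1_prob]
  simp

lemma Fd_prob2 (d i j : ℕ) (hij : i ≠ j) (a : Fin d → ℝ) :
    (perMeasD d).real (Fd d i a ∩ Fd d j a) = (1/2)^d * (1/2)^d := by
  rw [Fd_eq, Fd_eq, ← Set.pi_inter_distrib, perMeasD, measureReal_def, Measure.pi_pi,
    ENNReal.toReal_prod]
  simp only [← measureReal_def, F1_prob2 i j hij]
  rw [← mul_pow, Finset.prod_const, Finset.card_univ, Fintype.card_fin]
  norm_num

lemma slln_events {Ω : Type*} [MeasurableSpace Ω] (P : Measure Ω) [IsProbabilityMeasure P]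
    (E : ℕ → Set Ω) (hE : ∀ i, MeasurableSet (E i)) (p : ℝ) (h1 : ∀ i, P.real (E i) = p)
    (h2 : ∀ i j, i ≠ j → P.real (E i ∩ E j) = p * p) :
    ∀ᵐ ω ∂P, Tendsto (fun n : ℕ => (∑ i ∈ Finset.range n, (E i).indicator (fun _ => (1:ℝ)) ω) / n)
      atTop (nhds p) := by
  have hmeas : ∀ i, Measurable ((E i).indicator (fun _ => (1:ℝ))) :=
    fun i => measurable_const.indicator (hE i)
  have hle : ∀ i, MeasurableSpace.comap ((E i).indicator (fun _ => (1:ℝ))) inferInstance ≤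
      MeasurableSpace.generateFrom {E i} := by
    intro i
    rw [← measurable_iff_comap_le]
    exact Measurable.indicator (m := MeasurableSpace.generateFrom {E i})
      (@measurable_const _ _ _ (MeasurableSpace.generateFrom {E i}) _)
      (MeasurableSpace.measurableSet_generateFrom rfl)
  have hr : ∀ A B : Set Ω, P.real A = P.real B → P A = P B := by
    intro A B h
    exact (measureReal_eq_measureReal_iff).1 h
  have := ProbabilityTheory.strong_law_ae_real (μ := P)
    (fun i => (E i).indicator (fun _ => (1:ℝ))) ?_ ?_ ?_
  · have hp : ∫ ω, (E 0).indicator (fun _ => (1:ℝ)) ω ∂P = p := by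
      rw [integral_indicator (hE 0)]; simp [h1]
    rw [hp] at this
    exact this
  · exact (integrable_const _).indicator (hE 0)
  · intro i j hij
    have hI : ProbabilityTheory.IndepSet (E i) (E j) P := by
      rw [ProbabilityTheory.indepSet_iff_measure_inter_eq_mul (hE i) (hE j) P]
      rw [← ENNReal.toReal_eq_toReal_iff' (by finiteness) (by finiteness), ENNReal.toReal_mul]
      simp only [← measureReal_def, h1, h2 i j hij]
    rw [ProbabilityTheory.IndepSet_iff_Indep] at hI
    rw [Function.onFun, ProbabilityTheory.IndepFun_iff_Indep]
    exact ProbabilityTheory.indep_of_indep_of_le_left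
      (ProbabilityTheory.indep_of_indep_of_le_right hI (hle j)) (hle i)
  · intro i
    refine ⟨(hmeas i).aemeasurable, (hmeas 0).aemeasurable, ?_⟩
    ext s hs
    rw [Measure.map_apply (hmeas i) hs, Measure.map_apply (hmeas 0) hs]
    apply hr
    rw [Set.indicator_const_preimage_eq_union, Set.indicator_const_preimage_eq_union]
    have hc : ∀ i, P.real (E i)ᶜ = 1 - p := fun i => by
      rw [probReal_compl_eq_one_sub (hE i), h1]
    by_cases a : (1:ℝ) ∈ s <;> by_cases b : (0:ℝ) ∈ s <;> simp [a, b, hc, h1]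

lemma sum_count (A : ℕ → Prop) (f : ℕ → ℝ) (n : ℕ) :
    ∑ i ∈ Finset.range n, (if A i then f i else 0) =
      ∑ k ∈ Finset.range (Nat.count A n), f (Nat.nth A k) := by
  induction n with
  | zero => simp
  | succ n ih =>
    rw [Finset.sum_range_succ, ih, Nat.count_succ]
    by_cases h : A n
    · simp [h, Finset.sum_range_succ, Nat.nth_count h]
    · simp [h]

lemma ratio_bdd (B : ℕ → Prop) [DecidablePred B] (n : ℕ) :
    0 ≤ (((Finset.range n).filter B).card : ℝ) / n ∧
    (((Finset.range n).filter B).card : ℝ) / n ≤ 1 := by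
  refine ⟨by positivity, ?_⟩
  apply div_le_one_of_le₀ _ (by positivity)
  have := Finset.card_filter_le (Finset.range n) B
  rw [Finset.card_range] at this
  exact_mod_cast this

lemma ratio_mono (A B : ℕ → Prop) [DecidablePred A] [DecidablePred B] (h : ∀ i, A i → B i) :
    Filter.liminf (fun n : ℕ => (((Finset.range n).filter A).card : ℝ) / n) atTop ≤
    Filter.liminf (fun n : ℕ => (((Finset.range n).filter B).card : ℝ) / n) atTop := by
  apply Filter.liminf_le_liminf
  · refine Filter.Eventually.of_forall fun n => ?_
    gcongr
    exact h _
  · exact Filter.isBoundedUnder_of ⟨0, fun n => (ratio_bdd A n).1⟩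
  · exact (Filter.isBoundedUnder_of ⟨1, fun n => (ratio_bdd B n).2⟩).isCoboundedUnder_ge

lemma count_tendsto (A : ℕ → Prop) (ρ : ℝ) (hρ : 0 < ρ)
    (hA : ρ ≤ Filter.liminf (fun n : ℕ => (((Finset.range n).filter A).card : ℝ) / n) atTop) :
    Tendsto (fun n => Nat.count A n) atTop atTop := by
  have hev := Filter.eventually_lt_of_lt_liminf (b := ρ/2) (lt_of_lt_of_le (by linarith) hA)
    (Filter.isBoundedUnder_of ⟨0, fun n => (ratio_bdd A n).1⟩)
  have : Tendsto (fun n => (Nat.count A n : ℝ)) atTop atTop := by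
    refine Filter.tendsto_atTop_mono' atTop (f₁ := fun n : ℕ => ρ / 2 * (n:ℝ)) ?_ ?_
    · filter_upwards [hev, Filter.eventually_gt_atTop 0] with n hn hn0
      rw [Nat.count_eq_card_filter_range]
      rw [lt_div_iff₀ (by exact_mod_cast hn0)] at hn
      exact hn.le
    · exact Filter.Tendsto.const_mul_atTop (by linarith) tendsto_natCast_atTop_atTop
  exact tendsto_natCast_atTop_iff.1 this

lemma liminf_mul_aux (a S : ℕ → ℝ) (p ρ : ℝ) (hp : 0 < p) (hρ : 0 < ρ)
    (ha0 : ∀ n, 0 ≤ a n / n) (hS1 : ∀ n, S n / n ≤ 1)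
    (hA : ρ ≤ Filter.liminf (fun n : ℕ => a n / n) atTop)
    (hS : Tendsto (fun n => S n / a n) atTop (nhds p))
    (hpos : ∀ᶠ n in atTop, 0 < a n) :
    p * ρ ≤ Filter.liminf (fun n : ℕ => S n / n) atTop := by
  have hlb : IsCoboundedUnder (· ≥ ·) atTop (fun n : ℕ => S n / n) :=
    (Filter.isBoundedUnder_of ⟨1, hS1⟩).isCoboundedUnder_ge
  have main : ∀ δ : ℝ, 0 < δ → δ < 1 → (p * (1-δ)) * (ρ * (1-δ)) ≤ Filter.liminf
      (fun n : ℕ => S n / n) atTop := by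
    intro δ hδ hδ1
    have e1 := hS.eventually (lt_mem_nhds (show p * (1-δ) < p by nlinarith))
    have e2 := Filter.eventually_lt_of_lt_liminf (b := ρ * (1-δ))
      (lt_of_lt_of_le (by nlinarith) hA)
      (Filter.isBoundedUnder_of ⟨0, ha0⟩)
    apply Filter.le_liminf_of_le hlb
    filter_upwards [e1, e2, Filter.eventually_gt_atTop 0, hpos] with n a1 a2 a3 a4
    have b3 : (0:ℝ) < n := by exact_mod_cast a3
    have e : S n / n = (S n / a n) * (a n / n) := by field_simp
    rw [e]
    have c1 : 0 ≤ ρ * (1-δ) := mul_nonneg hρ.le (by linarith)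
    have c2 : 0 ≤ p * (1-δ) := mul_nonneg hp.le (by linarith)
    exact mul_le_mul a1.le a2.le c1 (c2.trans a1.le)
  have ht : Tendsto (fun δ : ℝ => (p * (1-δ)) * (ρ * (1-δ))) (nhdsWithin 0 (Set.Ioi 0))
      (nhds (p * ρ)) := by
    have h1 : Continuous (fun δ : ℝ => (p * (1-δ)) * (ρ * (1-δ))) := by fun_prop
    have h2 := h1.tendsto 0
    simp only [sub_zero, mul_one] at h2
    exact h2.mono_left nhdsWithin_le_nhds
  refine le_of_tendsto ht ?_
  filter_upwards [Ioo_mem_nhdsGT (show (0:ℝ) < 1 by norm_num)] with δ hδ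
  exact main δ hδ.1 hδ.2

lemma density_lemma {Ω : Type*} [MeasurableSpace Ω] (P : Measure Ω) [IsProbabilityMeasure P]
    (E : ℕ → Set Ω) (hE : ∀ i, MeasurableSet (E i)) (p : ℝ) (hp : 0 < p)
    (h1 : ∀ i, P.real (E i) = p)
    (h2 : ∀ i j, i ≠ j → P.real (E i ∩ E j) = p * p)
    (A : ℕ → Prop) (ρ : ℝ) (hρ : 0 < ρ)
    (hA : ρ ≤ Filter.liminf (fun n : ℕ => (((Finset.range n).filter A).card : ℝ) / n) atTop) :
    ∀ᵐ ω ∂P, p * ρ ≤ Filter.liminf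
      (fun n : ℕ => (((Finset.range n).filter (fun i => A i ∧ ω ∈ E i)).card : ℝ) / n) atTop := by
  have hct := count_tendsto A ρ hρ hA
  have hinf : {n | A n}.Infinite := by
    rw [← Nat.frequently_atTop_iff_infinite]
    by_contra hcon
    rw [Filter.not_frequently, Filter.eventually_atTop] at hcon
    obtain ⟨N, hN⟩ := hcon
    have hb : ∀ n, Nat.count A (N + n) = Nat.count A N := by
      intro n
      induction n with
      | zero => rfl
      | succ n ih => rw [← add_assoc, Nat.count_succ, ih, if_neg (hN _ (by omega)), add_zero]
    obtain ⟨n, h1, h2⟩ := ((hct.eventually_gt_atTop (Nat.count A N)).and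
      (Filter.eventually_ge_atTop N)).exists
    obtain ⟨k, rfl⟩ := Nat.exists_eq_add_of_le h2
    rw [hb k] at h1
    exact lt_irrefl _ h1
  have hinj : Function.Injective (Nat.nth A) := Nat.nth_injective hinf
  have hs := slln_events P (fun k => E (Nat.nth A k)) (fun k => hE _) p (fun k => h1 _)
    (fun i j hij => h2 _ _ (fun h => hij (hinj h)))
  filter_upwards [hs] with ω hω
  have hω' := hω.comp hct
  have e : ∀ n, (((Finset.range n).filter (fun i => A i ∧ ω ∈ E i)).card : ℝ) =
      ∑ k ∈ Finset.range (Nat.count A n), (E (Nat.nth A k)).indicator (fun _ => (1:ℝ)) ω := by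
    intro n
    rw [← sum_count A (fun i => (E i).indicator (fun _ => (1:ℝ)) ω), Finset.card_filter]
    push_cast
    refine Finset.sum_congr rfl fun i _ => ?_
    by_cases ha : A i <;> by_cases hb : ω ∈ E i <;> simp [ha, hb]
  refine liminf_mul_aux (fun n => (((Finset.range n).filter A).card : ℝ)) _ p ρ hp hρ
    (fun n => (ratio_bdd A n).1) (fun n => (ratio_bdd _ n).2) hA ?_ ?_
  · refine hω'.congr fun n => ?_
    rw [e n, ← Nat.count_eq_card_filter_range]
    rfl
  · filter_upwards [hct.eventually_gt_atTop 0] with n hn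
    rw [← Nat.count_eq_card_filter_range]
    exact_mod_cast hn


/-! ### Geometric part -/

/-- An open version of the porosity condition. -/
def Vset {d : ℕ} (μ : Measure (EuclideanSpace ℝ (Fin d))) (α ε r : ℝ) :
    Set (EuclideanSpace ℝ (Fin d)) :=
  {x | ∃ y s, α * r < s ∧ dist x y + s < r ∧
    μ (Metric.ball y s) < ENNReal.ofReal ε * μ (Metric.ball x r)}

lemma ball_lsc {d : ℕ} (μ : Measure (EuclideanSpace ℝ (Fin d))) (r : ℝ)
    (c : ENNReal) : IsOpen {x | c < μ (Metric.ball x r)} := by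
  rw [Metric.isOpen_iff]
  intro x hx
  have hx : c < μ (Metric.ball x r) := hx
  have hU : Metric.ball x r = ⋃ n : ℕ, Metric.ball x (r - 1 / ((n:ℝ) + 1)) := by
    ext z
    simp only [Set.mem_iUnion, Metric.mem_ball]
    constructor
    · intro h
      obtain ⟨n, hn⟩ := exists_nat_one_div_lt (sub_pos.2 h)
      exact ⟨n, by linarith⟩
    · rintro ⟨n, hn⟩
      have : 0 < 1 / ((n:ℝ) + 1) := by positivity
      linarith
  have hmono : Monotone (fun n : ℕ => Metric.ball x (r - 1 / ((n:ℝ) + 1))) := by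
    intro m n hmn
    apply Metric.ball_subset_ball
    have : 1 / ((n:ℝ) + 1) ≤ 1 / ((m:ℝ) + 1) := Nat.one_div_le_one_div hmn
    linarith
  have ht := tendsto_measure_iUnion_atTop (μ := μ) hmono
  rw [← hU] at ht
  obtain ⟨n, hn⟩ := (ht.eventually (lt_mem_nhds hx)).exists
  refine ⟨1 / ((n:ℝ) + 1), by positivity, fun z hz => ?_⟩
  refine lt_of_lt_of_le hn (measure_mono ?_)
  apply Metric.ball_subset_ball'
  rw [Metric.mem_ball, dist_comm] at hz
  linarith

lemma Vset_open {d : ℕ} (μ : Measure (EuclideanSpace ℝ (Fin d))) (α ε r : ℝ) (hε : 0 < ε) :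
    IsOpen (Vset μ α ε r) := by
  have e : Vset μ α ε r = ⋃ (y : EuclideanSpace ℝ (Fin d)) (s : ℝ) (_ : α * r < s),
      ({x | dist x y + s < r} ∩
        {x | μ (Metric.ball y s) / ENNReal.ofReal ε < μ (Metric.ball x r)}) := by
    ext x
    simp only [Vset, Set.mem_ofPred_eq, Set.mem_iUnion, Set.mem_inter_iff, exists_prop]
    refine exists_congr fun y => exists_congr fun s => and_congr_right fun _ =>
      and_congr_right fun _ => ?_
    rw [ENNReal.div_lt_iff (Or.inl (by simpa using hε)) (Or.inl ENNReal.ofReal_ne_top), mul_comm]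
  rw [e]
  refine isOpen_iUnion fun y => isOpen_iUnion fun s => isOpen_iUnion fun _ => ?_
  refine IsOpen.inter ?_ (ball_lsc μ r _)
  exact isOpen_lt (by fun_prop) (by fun_prop)

lemma dist_add_le_of_ball_subset {d : ℕ} (hd : 0 < d) (x y : EuclideanSpace ℝ (Fin d)) (s r : ℝ)
    (hs : 0 < s) (h : Metric.ball y s ⊆ Metric.ball x r) : dist x y + s ≤ r := by
  have : Nonempty (Fin d) := ⟨⟨0, hd⟩⟩
  obtain ⟨u, hu, hxy⟩ : ∃ u : EuclideanSpace ℝ (Fin d), ‖u‖ = 1 ∧ y - x = dist x y • u := by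
    by_cases hxy : x = y
    · obtain ⟨u, hu⟩ := exists_norm_eq (EuclideanSpace ℝ (Fin d)) (zero_le_one (α := ℝ))
      exact ⟨u, hu, by simp [hxy]⟩
    · have hne : ‖y - x‖ ≠ 0 := by
        rw [norm_ne_zero_iff, sub_ne_zero]; exact fun h => hxy h.symm
      refine ⟨‖y - x‖⁻¹ • (y - x), ?_, ?_⟩
      · rw [norm_smul, norm_inv, norm_norm, inv_mul_cancel₀ hne]
      · rw [dist_comm, dist_eq_norm, smul_smul, mul_inv_cancel₀ hne, one_smul]
  by_contra hcon
  push Not at hcon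
  obtain ⟨c, hc1, hc2⟩ := exists_between (show max 0 (r - dist x y) < s from
    max_lt hs (by linarith))
  have hc0 : 0 ≤ c := (le_max_left _ _).trans hc1.le
  have hcr : r - dist x y ≤ c := (le_max_right _ _).trans hc1.le
  have hm : y + c • u ∈ Metric.ball y s := by
    rw [Metric.mem_ball, dist_eq_norm, add_sub_cancel_left, norm_smul, hu, Real.norm_of_nonneg hc0]
    linarith
  have hm2 := h hm
  have e : y + c • u - x = (dist x y + c) • u := by
    rw [add_smul, ← hxy]; abel
  rw [Metric.mem_ball, dist_eq_norm, e, norm_smul, hu,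
    Real.norm_of_nonneg (add_nonneg dist_nonneg hc0)] at hm2
  linarith

lemma mem_Vset_of_por {d : ℕ} (hd : 0 < d) (μ : Measure (EuclideanSpace ℝ (Fin d)))
    [IsProbabilityMeasure μ] (α ε r : ℝ) (hα : 0 < α) (hε : 0 < ε) (hr : 0 < r)
    (x : EuclideanSpace ℝ (Fin d)) (hx : x ∈ μ.support) (h : α < porMeas μ x r ε) :
    x ∈ Vset μ α (2 * ε) r := by
  unfold porMeas at h
  obtain ⟨α', ⟨_, y, hsub, hle⟩, hlt⟩ := exists_lt_of_lt_csSup (by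
    refine ⟨0, le_refl _, x, ?_, ?_⟩ <;> simp) h
  have hαr : α * r < α' * r := mul_lt_mul_of_pos_right hlt hr
  have hpos : 0 < α' * r := lt_trans (mul_pos hα hr) hαr
  have hd := dist_add_le_of_ball_subset hd x y _ r hpos hsub
  obtain ⟨s, hs1, hs2⟩ := exists_between hαr
  refine ⟨y, s, hs1, by linarith, ?_⟩
  have hμ : 0 < μ (Metric.ball x r) :=
    (Measure.mem_support_iff_forall x).1 hx _ (Metric.ball_mem_nhds x hr)
  calc μ (Metric.ball y s) ≤ μ (Metric.ball y (α' * r)) :=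
        measure_mono (Metric.ball_subset_ball hs2.le)
    _ ≤ ENNReal.ofReal ε * μ (Metric.ball x r) := hle
    _ < ENNReal.ofReal (2 * ε) * μ (Metric.ball x r) := by
        apply ENNReal.mul_lt_mul_left hμ.ne' (measure_ne_top _ _)
        exact (ENNReal.ofReal_lt_ofReal_iff (by linarith)).2 (by linarith)

/-- The affine map. -/
noncomputable def affH {d : ℕ} (t : EuclideanSpace ℝ (Fin d)) :
    EuclideanSpace ℝ (Fin d) ≃ₜ EuclideanSpace ℝ (Fin d) :=
  (Homeomorph.smulOfNeZero (4:ℝ)⁻¹ (by norm_num)).trans (Homeomorph.addRight t)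

lemma aff_emb {d : ℕ} (t : EuclideanSpace ℝ (Fin d)) :
    MeasurableEmbedding (fun x : EuclideanSpace ℝ (Fin d) => (4 : ℝ)⁻¹ • x + t) :=
  (affH t).measurableEmbedding

lemma two_pow_ell (d : ℕ) (hd : 0 < d) (α : ℝ) (hα : 0 < α) :
    4 * Real.sqrt d ≤ α * 2 ^ (⌈|Real.logb 2 (α / (4 * Real.sqrt d))|⌉₊) := by
  have hsd : 0 < Real.sqrt d := Real.sqrt_pos.2 (by exact_mod_cast hd)
  set q := α / (4 * Real.sqrt d) with hq
  have hq0 : 0 < q := by positivity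
  set l := ⌈|Real.logb 2 q|⌉₊
  have h1 : - Real.logb 2 q ≤ l := (neg_le_abs _).trans (Nat.le_ceil _)
  have h2 : q⁻¹ ≤ 2 ^ l := by
    rw [← Real.logb_inv] at h1
    have := (Real.logb_le_iff_le_rpow (by norm_num) (inv_pos.2 hq0)).1 h1
    rwa [Real.rpow_natCast] at this
  have h3 : 1 ≤ q * 2 ^ l := by
    have := mul_le_mul_of_nonneg_left h2 hq0.le
    rwa [mul_inv_cancel₀ hq0.ne'] at this
  have h4 : q * (4 * Real.sqrt d) = α := by rw [hq]; field_simp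
  rw [← h4]
  nlinarith [mul_pos hsd hsd]

lemma coord_le {d : ℕ} (x y : EuclideanSpace ℝ (Fin d)) (k : Fin d) : |x k - y k| ≤ dist x y := by
  rw [dist_eq_norm]
  have := PiLp.norm_apply_le (x - y) k
  simpa using this

lemma por2_le (d : ℕ) (μ : Measure (EuclideanSpace ℝ (Fin d))) (α ε ε' : ℝ)
    (hεε : ε ≤ ε') (l : ℕ) (hl : 4 * Real.sqrt d ≤ α * 2 ^ l)
    (hα : 0 < α) (i : ℕ) (x t : EuclideanSpace ℝ (Fin d))
    (hx : x ∈ Vset μ α ε ((2:ℝ) ^ (-(i:ℤ))))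
    (hmid : ∀ k, (2:ℝ)^i * (x k / 4 + t k) ∈ midSet) :
    por2 d (Measure.map (fun x : EuclideanSpace ℝ (Fin d) => (4 : ℝ)⁻¹ • x + t) μ)
      ((4 : ℝ)⁻¹ • x + t) i ε' ≤ l := by
  obtain ⟨y, s, hs, hds, hμ⟩ := hx
  have hri : (2:ℝ) ^ (-(i:ℤ)) = ((2:ℝ)^i)⁻¹ := by simp
  rw [hri] at hs hds hμ
  have hp : (0:ℝ) < 2^i := by positivity
  have hpl : (0:ℝ) < 2^l := by positivity
  have hs0 : 0 < s := lt_trans (by positivity) hs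
  set x' := (4 : ℝ)⁻¹ • x + t with hx'
  have hx'k : ∀ k, x' k = x k / 4 + t k := by
    intro k; simp [hx']; ring
  have hcube : ∀ z, dist x z < ((2:ℝ)^i)⁻¹ → ∀ k,
      (⌊(2:ℝ)^i * x' k⌋ : ℝ) < 2^i * (z k / 4 + t k) ∧
      2^i * (z k / 4 + t k) < (⌊(2:ℝ)^i * x' k⌋ : ℝ) + 1 := by
    intro z hz k
    have h1 := (coord_le x z k).trans_lt hz
    have h2 := hmid k
    rw [← hx'k] at h2
    obtain ⟨h3, h4⟩ := h2
    have h5 := Int.self_sub_floor ((2:ℝ)^i * x' k)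
    have h6 : (2:ℝ)^i * |x k - z k| < 1 := by
      have := mul_lt_mul_of_pos_left h1 hp
      rwa [mul_inv_cancel₀ hp.ne'] at this
    rw [← abs_of_pos hp, ← abs_mul, abs_lt] at h6
    rw [hx'k] at *
    obtain ⟨h7, h8⟩ := h6
    constructor <;> nlinarith
  apply Nat.sInf_le
  have hy := hcube y (by linarith)
  set Y : Fin d → ℤ := fun k => ⌊(2:ℝ)^(i+l) * (y k / 4 + t k)⌋ with hY
  have hYb : ∀ k, (2:ℤ)^l * dyadicIdx d i x' k ≤ Y k ∧
      Y k < (2:ℤ)^l * dyadicIdx d i x' k + 2^l := by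
    intro k
    obtain ⟨h1, h2⟩ := hy k
    constructor
    · apply Int.le_floor.2
      push_cast
      rw [dyadicIdx, pow_add]
      nlinarith
    · apply Int.floor_lt.2
      push_cast
      rw [dyadicIdx, pow_add]
      nlinarith
  refine ⟨fun k => ⟨(Y k - 2^l * dyadicIdx d i x' k).toNat, ?_⟩, ?_⟩
  · have := hYb k
    zify
    rw [Int.toNat_of_nonneg (by linarith)]
    linarith
  have hidx : (fun k => (2:ℤ)^l * dyadicIdx d i x' k +
      (((⟨(Y k - 2^l * dyadicIdx d i x' k).toNat, by
          have := hYb k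
          zify
          rw [Int.toNat_of_nonneg (by linarith)]
          linarith⟩ : Fin (2^l)) : ℕ) : ℤ)) = Y := by
    funext k
    have := hYb k
    simp only
    rw [Int.toNat_of_nonneg (by linarith)]
    ring
  rw [hidx, (aff_emb t).map_apply, (aff_emb t).map_apply]
  refine le_trans (le_trans (measure_mono ?_) hμ.le) (mul_le_mul' (ENNReal.ofReal_le_ofReal hεε)
    (measure_mono ?_))
  · intro z hz
    have hzk : ∀ k, |z k - y k| ≤ 4 / 2^(i+l) := by
      intro k
      obtain ⟨h1, h2⟩ := hz k
      have e : ((4 : ℝ)⁻¹ • z + t) k = z k / 4 + t k := by simp; ring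
      have hpp : (0:ℝ) < 2^(i+l) := by positivity
      rw [e, div_le_iff₀ hpp] at h1
      rw [e, lt_div_iff₀ hpp] at h2
      have h3 := Int.floor_le ((2:ℝ)^(i+l) * (y k / 4 + t k))
      have h4 := Int.lt_floor_add_one ((2:ℝ)^(i+l) * (y k / 4 + t k))
      rw [le_div_iff₀ hpp, ← abs_of_pos hpp, ← abs_mul, abs_le]
      simp only [hY] at h1 h2
      constructor <;> nlinarith
    rw [Metric.mem_ball, EuclideanSpace.dist_eq]
    refine lt_of_le_of_lt ?_ hs
    calc Real.sqrt (∑ k, dist (z k) (y k) ^ 2)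
        ≤ Real.sqrt (∑ k : Fin d, (4 / 2^(i+l)) ^ 2) := by
          apply Real.sqrt_le_sqrt
          apply Finset.sum_le_sum
          intro k _
          rw [Real.dist_eq]
          exact pow_le_pow_left₀ (abs_nonneg _) (hzk k) 2
      _ = Real.sqrt d * (4 / 2^(i+l)) := by
          rw [Finset.sum_const, Finset.card_univ, Fintype.card_fin, nsmul_eq_mul,
            Real.sqrt_mul (by positivity), Real.sqrt_sq (by positivity)]
      _ = (4 * Real.sqrt d) / (2^l * 2^i) := by rw [pow_add]; field_simp
      _ ≤ (α * 2^l) / (2^l * 2^i) := by gcongr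
      _ = α * ((2:ℝ)^i)⁻¹ := by field_simp
  · intro z hz
    rw [Metric.mem_ball, dist_comm] at hz
    intro k
    have h := hcube z hz k
    have e : ((4 : ℝ)⁻¹ • z + t) k = z k / 4 + t k := by simp; ring
    show (dyadicIdx d i x' k : ℝ) / 2^i ≤ ((4 : ℝ)⁻¹ • z + t) k ∧
      ((4 : ℝ)⁻¹ • z + t) k < ((dyadicIdx d i x' k : ℝ) + 1) / 2^i
    rw [e, div_le_iff₀ hp, lt_div_iff₀ hp]
    simp only [dyadicIdx]
    constructor <;> linarith [h.1, h.2]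

lemma card_cast (n : ℕ) (P : ℤ → Prop) [DecidablePred P] (h : DecidablePred fun i : ℕ => P i) :
    (Finset.filter P (do let a ← Finset.range n; pure (a : ℤ))).card =
      ((Finset.range n).filter (fun i : ℕ => P i)).card := by
  have e : (do let a ← Finset.range n; pure (a : ℤ) : Finset ℤ) =
      (Finset.range n).image (fun a : ℕ => (a : ℤ)) := by
    ext z
    simp [Finset.bind_def, Finset.pure_def, eq_comm]
  rw [e, Finset.filter_image, Finset.card_image_of_injective _ Nat.cast_injective]
  congr!

lemma good_meas {d : ℕ} (V : ℕ → Set (EuclideanSpace ℝ (Fin d))) (hV : ∀ i, MeasurableSet (V i))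
    (c : ℝ) :
    MeasurableSet {q : EuclideanSpace ℝ (Fin d) × (Fin d → ℝ) | c ≤ Filter.liminf
      (fun n : ℕ => (((Finset.range n).filter
        (fun i => q.1 ∈ V i ∧ q.2 ∈ Fd d i (fun k => q.1 k / 4))).card : ℝ) / n) atTop} := by
  apply measurableSet_le measurable_const
  apply Measurable.liminf
  intro n
  apply Measurable.div_const
  simp only [Finset.card_filter]
  push_cast
  refine Finset.measurable_sum _ fun i _ => ?_
  refine Measurable.ite ?_ measurable_const measurable_const
  have h1 : MeasurableSet {q : EuclideanSpace ℝ (Fin d) × (Fin d → ℝ) | q.1 ∈ V i} :=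
    measurable_fst (hV i)
  have h2 : MeasurableSet {q : EuclideanSpace ℝ (Fin d) × (Fin d → ℝ) |
      q.2 ∈ Fd d i (fun k => q.1 k / 4)} := by
    have : {q : EuclideanSpace ℝ (Fin d) × (Fin d → ℝ) | q.2 ∈ Fd d i (fun k => q.1 k / 4)} =
        ⋂ k, (fun q : EuclideanSpace ℝ (Fin d) × (Fin d → ℝ) =>
          (2:ℝ)^i * (q.1 k / 4 + q.2 k)) ⁻¹' midSet := by
      ext q; simp [Fd, F1]
    rw [this]
    refine MeasurableSet.iInter fun k => ?_
    have hm : Measurable (fun q : EuclideanSpace ℝ (Fin d) × (Fin d → ℝ) =>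
          (2:ℝ)^i * (q.1 k / 4 + q.2 k)) := by fun_prop
    exact hm midSet_meas
  exact h1.inter h2

lemma main_ae (d : ℕ) (hd : 0 < d) (α ρ : ℝ) (hα : 0 < α) (hρ : 0 < ρ)
    (μ : Measure (EuclideanSpace ℝ (Fin d))) [IsProbabilityMeasure μ]
    (hpor : IsMeanPorous μ α ρ) (ε : ℝ) (hε : 0 < ε) :
    ∀ᵐ t ∂(perMeasD d), ∀ᵐ x ∂μ, (1/2)^d * ρ ≤ Filter.liminf
      (fun n : ℕ => (((Finset.range n).filter
        (fun i : ℕ => x ∈ Vset μ α (2 * ε) ((2:ℝ) ^ (-(i:ℤ))) ∧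
          t ∈ Fd d i (fun k => x k / 4))).card : ℝ) / n) atTop := by
  rw [← Measure.ae_ae_comm (good_meas (fun i => Vset μ α (2 * ε) ((2:ℝ) ^ (-(i:ℤ))))
    (fun i => (Vset_open μ α (2 * ε) _ (by linarith)).measurableSet) _)]
  have hpor' : ∀ᵐ x ∂μ, ρ ≤ Filter.liminf (fun n : ℕ => (((Finset.range n).filter
      (fun i : ℕ => α < porMeas μ x ((2 : ℝ) ^ (-(i : ℤ))) ε)).card : ℝ) / n) atTop := by
    filter_upwards [hpor ε hε] with x hx
    refine hx.trans (le_of_eq ?_)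
    congr 1
    funext n
    rw [card_cast n (fun i => α < porMeas μ x ((2 : ℝ) ^ (-i)) ε)]
  filter_upwards [hpor', Measure.support_mem_ae (μ := μ)] with x hx hxs
  refine density_lemma (perMeasD d) (fun i => Fd d i (fun k => x k / 4)) (fun i => Fd_meas _ _ _)
    ((1/2)^d) (by positivity) (fun i => Fd_prob _ _ _) (fun i j hij => Fd_prob2 d i j hij _)
    (fun i : ℕ => x ∈ Vset μ α (2 * ε) ((2:ℝ) ^ (-(i:ℤ)))) ρ hρ (hx.trans (ratio_mono _ _ ?_))
  intro i hi
  exact mem_Vset_of_por hd μ α ε _ hα hε (by positivity) x hxs hi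


/-- If `μ` is a mean `(α,ρ)`-porous Borel probability measure on
`[0,1)^d`, then for Lebesgue-almost every `t ∈ [0,1/2)^d` the measure `(1/4)μ + t`
(the image of `μ` under `x ↦ x/4 + t`) is dyadic mean `(ℓ, 2^{−d}ρ)`-porous with
`ℓ = ⌈|log₂(α/(4√d))|⌉`. -/
theorem stmt11 (d : ℕ) (hd : 0 < d) (α ρ : ℝ)
    (hα : α ∈ Set.Ioc (0 : ℝ) (1 / 2)) (hρ : ρ ∈ Set.Ioc (0 : ℝ) 1)
    (μ : Measure (EuclideanSpace ℝ (Fin d))) [IsProbabilityMeasure μ]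
    (hsupp : μ (unitCube d) = 1) (hpor : IsMeanPorous μ α ρ) :
    ∀ᵐ t ∂(volume.restrict (dyadicCell d 1 0)),
      IsDyadicMeanPorous d
        (Measure.map (fun x : EuclideanSpace ℝ (Fin d) => (4 : ℝ)⁻¹ • x + t) μ)
        (⌈|Real.logb 2 (α / (4 * Real.sqrt d))|⌉₊)
        ((2 : ℝ) ^ (-(d : ℤ)) * ρ) := by
  have hα0 := hα.1
  have hl := two_pow_ell d hd α hα0
  have h1 : ∀ᵐ t ∂(perMeasD d), ∀ m : ℕ, ∀ᵐ x ∂μ, (1/2)^d * ρ ≤ Filter.liminf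
      (fun n : ℕ => (((Finset.range n).filter
        (fun i : ℕ => x ∈ Vset μ α (2 * (1 / ((m:ℝ) + 1))) ((2:ℝ) ^ (-(i:ℤ))) ∧
          t ∈ Fd d i (fun k => x k / 4))).card : ℝ) / n) atTop := by
    rw [ae_all_iff]
    exact fun m => main_ae d hd α ρ hα0 hρ.1 μ hpor _ (by positivity)
  have hpm : perMeasD d = (volume : Measure (Fin d → ℝ)).restrict
      (Set.univ.pi (fun _ => Set.Ioc (-1/2 : ℝ) (1/2))) := by
    rw [volume_pi, Measure.restrict_pi_pi]; rfl
  rw [hpm, ae_restrict_iff' (MeasurableSet.univ_pi fun _ => measurableSet_Ioc)] at h1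
  have h2 := (PiLp.volume_preserving_ofLp (Fin d)).quasiMeasurePreserving.ae h1
  apply ae_restrict_of_ae_restrict_of_subset
    (t := {t : EuclideanSpace ℝ (Fin d) | t.ofLp ∈ Set.univ.pi (fun _ => Set.Ioc (-1/2 : ℝ) (1/2))})
  · intro t ht k _
    have := ht k
    simp at this
    constructor <;> linarith [this.1, this.2]
  have hbm : MeasurableSet {t : EuclideanSpace ℝ (Fin d) |
      t.ofLp ∈ Set.univ.pi (fun _ => Set.Ioc (-1/2 : ℝ) (1/2))} := ((PiLp.volume_preserving_ofLp (Fin d)).measurable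
    (MeasurableSet.univ_pi fun _ => measurableSet_Ioc))
  rw [ae_restrict_iff' hbm]
  filter_upwards [h2] with t ht htm
  intro ε hε
  rw [(aff_emb t).ae_map_iff]
  obtain ⟨m, hm⟩ := exists_nat_one_div_lt (half_pos hε)
  filter_upwards [ht htm m] with x hx
  have e : (2:ℝ) ^ (-(d:ℤ)) = (1/2)^d := by simp
  rw [e]
  refine hx.trans (ratio_mono _ _ ?_)
  rintro i ⟨hi1, hi2⟩
  exact por2_le d μ α _ ε (by linarith) _ hl hα0 i x t hi1 hi2
end

section
/- For every Borel probability measure μ on ℝ^d, the porosity of μ satisfies 0 ≤ por(μ) ≤ 1/2. -/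
open MeasureTheory Filter Metric Set
open scoped Classical

/-- `por(μ,x,ε) = liminf_{r→0} por(μ,x,r,ε)`. -/
noncomputable def porMeasPt {X : Type*} [MetricSpace X] [MeasurableSpace X]
    (μ : Measure X) (x : X) (ε : ℝ) : ℝ :=
  Filter.liminf (fun r : ℝ => porMeas μ x r ε) (nhdsWithin 0 (Set.Ioi 0))

/-- `por(μ,ε)`: the `μ`-essential infimum of `x ↦ por(μ,x,ε)`. -/
noncomputable def porMeasEps {X : Type*} [MetricSpace X] [MeasurableSpace X]
    (μ : Measure X) (ε : ℝ) : ℝ :=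
  essInf (fun x => porMeasPt μ x ε) μ

/-- `por(μ) = lim_{ε→0⁺} por(μ,ε)`; since `ε ↦ por(μ,ε)` is nondecreasing, this limit is
the infimum of `por(μ,ε)` over `ε > 0`. -/
noncomputable def porMeasure {X : Type*} [MetricSpace X] [MeasurableSpace X]
    (μ : Measure X) : ℝ :=
  sInf ((fun ε => porMeasEps μ ε) '' Set.Ioi 0)

/-- Inclusion of balls in `ℝ^d`, `d > 0`, controls centers and radii. -/
theorem aux_ball {d : ℕ} (hd : 0 < d) (x y : EuclideanSpace ℝ (Fin d)) (R r : ℝ) (hR : 0 < R)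
    (h : Metric.ball y R ⊆ Metric.ball x r) : ‖y - x‖ + R ≤ r := by
  obtain ⟨v, hv, hyx⟩ : ∃ v : EuclideanSpace ℝ (Fin d), ‖v‖ = 1 ∧ y - x = ‖y - x‖ • v := by
    by_cases h0 : y - x = 0
    · refine ⟨EuclideanSpace.single ⟨0, hd⟩ 1, by simp, by simp [h0]⟩
    · have : ‖y - x‖ ≠ 0 := norm_ne_zero_iff.mpr h0
      refine ⟨‖y - x‖⁻¹ • (y - x), ?_, ?_⟩
      · rw [norm_smul, norm_inv, norm_norm, inv_mul_cancel₀ this]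
      · rw [smul_smul, mul_inv_cancel₀ this, one_smul]
  have key : ∀ t : ℝ, 0 ≤ t → t < R → ‖y - x‖ + t < r := by
    intro t ht htR
    have hm : y + t • v ∈ Metric.ball y R := by
      rw [Metric.mem_ball, dist_eq_norm, add_sub_cancel_left, norm_smul, hv, mul_one,
        Real.norm_of_nonneg ht]
      exact htR
    have h2 := h hm
    rw [Metric.mem_ball, dist_eq_norm] at h2
    have h3 : y + t • v - x = (‖y - x‖ + t) • v := by
      rw [add_smul, ← hyx]; abel
    rw [h3, norm_smul, hv, mul_one, Real.norm_of_nonneg (by positivity)] at h2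
    exact h2
  by_contra hcon
  push Not at hcon
  have h1 := key 0 le_rfl hR
  have h2 := key (r - ‖y - x‖) (by linarith) (by linarith)
  linarith

theorem aux_le_one {d : ℕ} (hd : 0 < d) (x y : EuclideanSpace ℝ (Fin d)) (a r : ℝ) (hr : 0 < r)
    (h : Metric.ball y (a * r) ⊆ Metric.ball x r) : a ≤ 1 := by
  by_contra hcon
  push Not at hcon
  have h1 := aux_ball hd x y (a * r) r (by positivity) h
  have := norm_nonneg (y - x)
  nlinarith

theorem aux_mem_Icc {d : ℕ} (hd : 0 < d) (μ : Measure (EuclideanSpace ℝ (Fin d)))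
    (x : EuclideanSpace ℝ (Fin d)) (r ε : ℝ) (hr : 0 < r) :
    0 ≤ porMeas μ x r ε ∧ porMeas μ x r ε ≤ 1 := by
  constructor
  · exact Real.sSup_nonneg fun a ha => ha.1
  · refine Real.sSup_le ?_ zero_le_one
    rintro a ⟨_, y, hy, _⟩
    exact aux_le_one hd x y a r hr hy

theorem aux_ev {d : ℕ} (hd : 0 < d) (μ : Measure (EuclideanSpace ℝ (Fin d)))
    (x : EuclideanSpace ℝ (Fin d)) (ε : ℝ) :
    ∀ᶠ r in nhdsWithin (0 : ℝ) (Set.Ioi 0), 0 ≤ porMeas μ x r ε ∧ porMeas μ x r ε ≤ 1 := by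
  filter_upwards [self_mem_nhdsWithin] with r hr
  exact aux_mem_Icc hd μ x r ε hr

theorem aux_bdd {d : ℕ} (hd : 0 < d) (μ : Measure (EuclideanSpace ℝ (Fin d)))
    (x : EuclideanSpace ℝ (Fin d)) (ε : ℝ) :
    IsBoundedUnder (· ≥ ·) (nhdsWithin (0 : ℝ) (Set.Ioi 0)) (fun r => porMeas μ x r ε) :=
  isBoundedUnder_of_eventually_ge ((aux_ev hd μ x ε).mono fun _ h => h.1)

theorem aux_cobdd {d : ℕ} (hd : 0 < d) (μ : Measure (EuclideanSpace ℝ (Fin d)))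
    (x : EuclideanSpace ℝ (Fin d)) (ε : ℝ) :
    IsCoboundedUnder (· ≥ ·) (nhdsWithin (0 : ℝ) (Set.Ioi 0)) (fun r => porMeas μ x r ε) :=
  (isBoundedUnder_of_eventually_le ((aux_ev hd μ x ε).mono fun _ h => h.2)).isCoboundedUnder_ge

theorem aux_pt {d : ℕ} (hd : 0 < d) (μ : Measure (EuclideanSpace ℝ (Fin d)))
    (x : EuclideanSpace ℝ (Fin d)) (ε : ℝ) :
    0 ≤ porMeasPt μ x ε ∧ porMeasPt μ x ε ≤ 1 := by
  constructor
  · exact le_liminf_of_le (aux_cobdd hd μ x ε) ((aux_ev hd μ x ε).mono fun _ h => h.1)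
  · exact liminf_le_of_frequently_le ((aux_ev hd μ x ε).mono fun _ h => h.2).frequently
      (aux_bdd hd μ x ε)

theorem aux_eps {d : ℕ} (hd : 0 < d) (μ : Measure (EuclideanSpace ℝ (Fin d)))
    [IsProbabilityMeasure μ] (ε : ℝ) : 0 ≤ porMeasEps μ ε := by
  refine le_liminf_of_le ?_ (Eventually.of_forall fun x => (aux_pt hd μ x ε).1)
  exact (isBoundedUnder_of_eventually_le
    (Eventually.of_forall fun x => (aux_pt hd μ x ε).2)).isCoboundedUnder_ge

/-- A large hole forces rapid decay of the measure of concentric balls. -/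
theorem aux_decay {d : ℕ} (hd : 0 < d) (μ : Measure (EuclideanSpace ℝ (Fin d)))
    (x : EuclideanSpace ℝ (Fin d)) (r ε α : ℝ) (hr : 0 < r) (hα : 1 / 2 < α)
    (h : α < porMeas μ x r ε) :
    α < 1 ∧ μ (Metric.ball x ((2 * α - 1) * r)) ≤ ENNReal.ofReal ε * μ (Metric.ball x r) := by
  refine ⟨h.trans_le (aux_mem_Icc hd μ x r ε hr).2, ?_⟩
  have hne : {α : ℝ | 0 ≤ α ∧ ∃ y, Metric.ball y (α * r) ⊆ Metric.ball x r ∧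
    μ (Metric.ball y (α * r)) ≤ ENNReal.ofReal ε * μ (Metric.ball x r)}.Nonempty :=
    ⟨0, le_rfl, x, by simp, by simp⟩
  obtain ⟨b, ⟨hb0, y, hy, hm⟩, hb⟩ := exists_lt_of_lt_csSup hne h
  refine le_trans (measure_mono ?_) hm
  have h1 := aux_ball hd x y (b * r) r (mul_pos (by linarith) hr) hy
  apply Metric.ball_subset_ball'
  rw [dist_comm, dist_eq_norm]
  nlinarith

theorem aux_iter {d : ℕ} (μ : Measure (EuclideanSpace ℝ (Fin d))) [IsProbabilityMeasure μ]
    (x : EuclideanSpace ℝ (Fin d)) (ε c r₀ : ℝ) (hr₀ : 0 < r₀) (hc : 0 < c) (hc1 : c < 1)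
    (h : ∀ r, 0 < r → r ≤ r₀ →
      μ (Metric.ball x (c * r)) ≤ ENNReal.ofReal ε * μ (Metric.ball x r)) (n : ℕ) :
    μ (Metric.ball x (c ^ n * r₀)) ≤ ENNReal.ofReal ε ^ n := by
  induction n with
  | zero => simpa using prob_le_one
  | succ n ih =>
    have h1 := h (c ^ n * r₀) (by positivity)
      (mul_le_of_le_one_left hr₀.le (pow_le_one₀ hc.le hc1.le))
    rw [pow_succ', mul_assoc, pow_succ']
    exact h1.trans (mul_le_mul_right ih _)

/-- For every Borel probability measure `μ` on `ℝ^d`,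
`0 ≤ por(μ) ≤ 1/2`. -/
theorem stmt12 (d : ℕ) (hd : 0 < d) (μ : Measure (EuclideanSpace ℝ (Fin d)))
    [IsProbabilityMeasure μ] :
    0 ≤ porMeasure μ ∧ porMeasure μ ≤ 1 / 2 := by
  constructor
  · apply Real.sInf_nonneg
    rintro _ ⟨ε, _, rfl⟩
    exact aux_eps hd μ ε
  by_contra hcon
  push Not at hcon
  obtain ⟨α, hα, hαp⟩ := exists_between hcon
  set c := 2 * α - 1 with hc
  have hc0 : 0 < c := by linarith
  set ε := c ^ d / 2 with hε
  have hε0 : 0 < ε := by positivity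
  have h1 : α < porMeasEps μ ε := by
    refine hαp.trans_le (csInf_le ⟨0, ?_⟩ ⟨ε, hε0, rfl⟩)
    rintro _ ⟨ε, _, rfl⟩
    exact aux_eps hd μ ε
  have h2 : ∀ᵐ x ∂μ, α < porMeasPt μ x ε :=
    eventually_lt_of_lt_liminf h1
      (isBoundedUnder_of_eventually_ge (Eventually.of_forall fun x => (aux_pt hd μ x ε).1))
  have h3 := Besicovitch.ae_tendsto_rnDeriv
    (volume : Measure (EuclideanSpace ℝ (Fin d))) μ
  have h4 := Measure.rnDeriv_lt_top (volume : Measure (EuclideanSpace ℝ (Fin d))) μ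
  obtain ⟨x, hx2, hx3, hx4⟩ := (h2.and (h3.and h4)).exists
  have h5 := eventually_lt_of_lt_liminf hx2 (aux_bdd hd μ x ε)
  obtain ⟨M, hM1, hM2⟩ := exists_between hx4
  have h6 := hx3.eventually_lt_const hM1
  obtain ⟨s, hs, hs2⟩ := mem_nhdsGT_iff_exists_Ioc_subset.mp (h5.and h6)
  have hs : 0 < s := hs
  have hα1 := (aux_decay hd μ x s ε α hs hα (hs2 ⟨hs, le_rfl⟩).1).1
  have hc1 : c < 1 := by linarith
  have hit := aux_iter μ x ε c s hs hc0 hc1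
    (fun r hr hrs => (aux_decay hd μ x r ε α hr hα (hs2 ⟨hr, hrs⟩).1).2)
  set V := volume (Metric.ball (0 : EuclideanSpace ℝ (Fin d)) 1) with hV
  have hVpos : 0 < V := Metric.measure_ball_pos _ _ one_pos
  have hVfin : V ≠ ⊤ := measure_ball_lt_top.ne
  -- compare at radius `c ^ (n+1) * s`
  have key : ∀ n : ℕ, (c ^ (n + 1) * s) ^ d * V.toReal ≤ M.toReal * ε ^ n := by
    intro n
    have hrpos : 0 < c ^ (n + 1) * s := by positivity
    have hrs : c ^ (n + 1) * s ≤ s :=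
      mul_le_of_le_one_left hs.le (pow_le_one₀ hc0.le hc1.le)
    have h7 := (hs2 ⟨hrpos, hrs⟩).2
    have h8 : μ (Metric.closedBall x (c ^ (n + 1) * s)) ≤ ENNReal.ofReal ε ^ n := by
      refine le_trans (measure_mono (Metric.closedBall_subset_ball ?_)) (hit n)
      rw [pow_succ, mul_assoc]
      have : 0 < c ^ n * s := by positivity
      nlinarith
    have h9 : volume (Metric.closedBall x (c ^ (n + 1) * s)) ≤
        M * μ (Metric.closedBall x (c ^ (n + 1) * s)) :=
      (ENNReal.div_le_iff_le_mul (Or.inr hM2.ne) (Or.inl (measure_ne_top _ _)) ).1 h7.le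
    have h10 := h9.trans (mul_le_mul_right h8 M)
    rw [Measure.addHaar_closedBall _ _ hrpos.le, finrank_euclideanSpace, Fintype.card_fin,
      ← ENNReal.ofReal_pow hε0.le] at h10
    have h11 := ENNReal.toReal_mono (ENNReal.mul_ne_top hM2.ne ENNReal.ofReal_ne_top) h10
    rwa [ENNReal.toReal_mul, ENNReal.toReal_mul, ENNReal.toReal_ofReal (by positivity),
      ENNReal.toReal_ofReal (by positivity)] at h11
  have hVr : 0 < V.toReal := ENNReal.toReal_pos hVpos.ne' hVfin
  set K := (c * s) ^ d * V.toReal with hK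
  have hK0 : 0 < K := by positivity
  have key2 : ∀ n : ℕ, K * 2 ^ n ≤ M.toReal := by
    intro n
    have h := key n
    have e1 : (c ^ (n + 1) * s) ^ d * V.toReal = (K * 2 ^ n) * ε ^ n := by
      have : (2 : ℝ) ^ n ≠ 0 := by positivity
      rw [hK, hε, div_pow, ← pow_mul, mul_pow, mul_pow, ← pow_mul, add_mul, one_mul, pow_add,
        mul_comm n d]
      field_simp
    rw [e1] at h
    exact le_of_mul_le_mul_right h (by positivity)
  obtain ⟨n, hn⟩ := pow_unbounded_of_one_lt (M.toReal / K) (one_lt_two)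
  have := key2 n
  rw [div_lt_iff₀ hK0] at hn
  linarith
end

section
/- There exist d ∈ ℕ and a Borel probability measure μ on ℝ^d with por(μ) > 0 such that μ(E) = 0 for every Borel set E ⊆ ℝ^d that is mean (α,ρ)-porous for some α > 0 and ρ > 0. -/
open MeasureTheory Filter Metric Set
open scoped Classical

/-- `por(E,x,r)`: the supremum of `α ≥ 0` such that some ball `B(y,αr)` is contained in
`B(x,r) \ E`. -/
noncomputable def porSet {X : Type*} [MetricSpace X] (E : Set X) (x : X) (r : ℝ) : ℝ :=
  sSup {α : ℝ | 0 ≤ α ∧ ∃ y, Metric.ball y (α * r) ⊆ Metric.ball x r \ E}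

/-- `por(E,x) = liminf_{r→0} por(E,x,r)`. -/
noncomputable def porSetPt {X : Type*} [MetricSpace X] (E : Set X) (x : X) : ℝ :=
  Filter.liminf (fun r : ℝ => porSet E x r) (nhdsWithin 0 (Set.Ioi 0))

/-- `por(E) = inf_{x ∈ E} por(E,x)`. -/
noncomputable def porSetTotal {X : Type*} [MetricSpace X] (E : Set X) : ℝ :=
  sInf ((fun x => porSetPt E x) '' E)

/-- `E` is mean `(α,ρ)`-porous: at every point of `E` the lower asymptotic proportion of
scales `i` with `por(E,x,2^{-i}) ≥ α` is at least `ρ`. -/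
def IsMeanPorousSet {X : Type*} [MetricSpace X] (E : Set X) (α ρ : ℝ) : Prop :=
  ∀ x ∈ E,
    ρ ≤ Filter.liminf (fun n : ℕ =>
      (((Finset.range n).filter fun i => α ≤ porSet E x ((2 : ℝ) ^ (-(i : ℤ)))).card : ℝ) / n)
      Filter.atTop


namespace PorPf

abbrev X := EuclideanSpace ℝ (Fin 1)
abbrev Om := ℕ → Fin 4

noncomputable def q (a : ℝ) : X := EuclideanSpace.single 0 a

lemma q_apply (a : ℝ) : (q a) 0 = a := by simp [q]

lemma q_surj (x : X) : q (x 0) = x := by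
  ext i
  fin_cases i
  simp [q]

lemma dist_X (x y : X) : dist x y = |x 0 - y 0| := by
  rw [EuclideanSpace.dist_eq]
  simp [Real.sqrt_sq_eq_abs, Real.dist_eq]

lemma continuous_q : Continuous q := by
  have : Isometry q := Isometry.of_dist_eq (fun a b => by rw [dist_X, q_apply, q_apply, Real.dist_eq])
  exact this.continuous

noncomputable def T (ω : Om) : X := q (Real.ofDigits ω)

lemma T_apply (ω : Om) : (T ω) 0 = Real.ofDigits ω := q_apply _

lemma continuous_T : Continuous T := continuous_q.comp Real.continuous_ofDigits

/-- numerator of the prefix of length n -/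
def num (ω : Om) : ℕ → ℕ
  | 0 => 0
  | n + 1 => 4 * num ω n + (ω n : ℕ)

lemma num_inj (ω η : Om) : ∀ n, num ω n = num η n → ∀ i < n, ω i = η i := by
  intro n
  induction n with
  | zero => intro _ i hi; omega
  | succ n ih =>
    intro h i hi
    simp only [num] at h
    have h1 := (ω n).isLt
    have h2 := (η n).isLt
    rcases Nat.lt_succ_iff_lt_or_eq.mp hi with h' | rfl
    · exact ih (by omega) i h'
    · exact Fin.ext (by omega)

lemma num_congr (ω η : Om) : ∀ n, (∀ i < n, ω i = η i) → num ω n = num η n := by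
  intro n
  induction n with
  | zero => intro _; rfl
  | succ n ih =>
    intro h
    simp only [num]
    rw [ih (fun i hi => h i (by omega)), h n (by omega)]

lemma ofDigits_num (ω : Om) (n : ℕ) :
    Real.ofDigits ω = ((4:ℝ) ^ n)⁻¹ * (num ω n + Real.ofDigits (fun i => ω (i + n))) := by
  rw [Real.ofDigits_eq_sum_add_ofDigits ω n, mul_add]
  push_cast
  congr 1
  induction n with
  | zero => simp [num]
  | succ n ih =>
    rw [Finset.sum_range_succ, ih, Real.ofDigitsTerm]
    simp only [num]
    push_cast
    field_simp
    ring

lemma exists_near (ω : Om) (n : ℕ) (h1 : ω n = 1) (z : ℝ)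
    (hz : |z - Real.ofDigits ω| < ((4:ℝ) ^ (n+1))⁻¹) :
    ∃ η : Om, (∀ i < n, η i = ω i) ∧ Real.ofDigits η = z := by
  have e1 := ofDigits_num ω (n+1)
  have hs0 := Real.ofDigits_nonneg (fun i => ω (i + (n+1)))
  have hs1 := Real.ofDigits_le_one (fun i => ω (i + (n+1)))
  set s := Real.ofDigits (fun i => ω (i + (n+1)))
  set u : ℝ := 4 ^ n * z - num ω n with hu
  have hp : (0:ℝ) < 4 ^ n := by positivity
  have hnum : (num ω (n+1) : ℝ) = 4 * num ω n + 1 := by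
    simp only [num, h1]; norm_num
  rw [hnum] at e1
  have hz' : |4 ^ n * z - 4 ^ n * Real.ofDigits ω| < 1/4 := by
    rw [← mul_sub, abs_mul, abs_of_pos hp]
    calc _ < (4:ℝ)^n * ((4:ℝ) ^ (n+1))⁻¹ := by gcongr
      _ = 1/4 := by rw [pow_succ]; field_simp
  have e2 : (4:ℝ)^n * Real.ofDigits ω = num ω n + 1/4 + s/4 := by
    rw [e1, pow_succ]; field_simp
  rw [e2, abs_lt] at hz'
  have hu0 : u ∈ Set.Ico (0:ℝ) 1 := by
    constructor <;> rw [hu] <;> linarith [hz'.1, hz'.2]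
  let η : Om := fun i => if i < n then ω i else Real.digits u 4 (i - n)
  have hη : ∀ i < n, η i = ω i := fun i hi => by simp [η, hi]
  refine ⟨η, hη, ?_⟩
  rw [ofDigits_num η n, num_congr η ω n hη]
  have : (fun i => η (i + n)) = Real.digits u 4 := by
    funext i; simp [η]
  rw [this, Real.ofDigits_digits (by norm_num) hu0, hu]
  field_simp
  ring

/-- If `ofDigits η` is in the open first child interval, the prefix is determined. -/
lemma hole_prefix (ω η : Om) (n : ℕ)
    (h : |Real.ofDigits η - ((4:ℝ) ^ n)⁻¹ * (num ω n + 1/8)| < ((4:ℝ) ^ n)⁻¹ / 8) :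
    (∀ i < n, η i = ω i) ∧ η n = 0 := by
  have e1 := ofDigits_num η (n+1)
  have hs0 := Real.ofDigits_nonneg (fun i => η (i + (n+1)))
  have hs1 := Real.ofDigits_le_one (fun i => η (i + (n+1)))
  set s := Real.ofDigits (fun i => η (i + (n+1)))
  have hp : (0:ℝ) < 4 ^ n := by positivity
  rw [abs_lt] at h
  obtain ⟨ha, hb⟩ := h
  have e2 : Real.ofDigits η = ((4:ℝ)^n)⁻¹ * ((num η (n+1) + s)/4) := by
    rw [e1, pow_succ]; field_simp
  rw [e2] at ha hb
  have hi : (0:ℝ) < ((4:ℝ)^n)⁻¹ := by positivity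
  have ha' : (0:ℝ) < (num η (n+1) + s)/4 - num ω n := by
    by_contra hc
    push Not at hc
    nlinarith
  have hb' : (num η (n+1) + s)/4 - num ω n < (1:ℝ)/4 := by
    by_contra hc
    push Not at hc
    nlinarith
  have k1 : 4 * num ω n < num η (n+1) + 1 := by
    have : (4 * num ω n : ℝ) < num η (n+1) + 1 := by linarith
    exact_mod_cast this
  have k2 : num η (n+1) < 4 * num ω n + 1 := by
    have : (num η (n+1) : ℝ) < 4 * num ω n + 1 := by linarith
    exact_mod_cast this
  simp only [num] at k1 k2
  have := (η n).isLt
  refine ⟨num_inj η ω n (by omega), Fin.ext ?_⟩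
  simp; omega

/-! ### weights -/

noncomputable def e (n : ℕ) : ℝ := (Real.log (Real.exp 4 * (n + 1)))⁻¹

lemma e_eq (n : ℕ) : e n = (4 + Real.log (n+1))⁻¹ := by
  rw [e, Real.log_mul (by positivity) (by positivity), Real.log_exp]

lemma log_nn (n : ℕ) : 0 ≤ Real.log ((n:ℝ)+1) := Real.log_nonneg (by linarith [n.cast_nonneg (α := ℝ)])

lemma e_pos (n : ℕ) : 0 < e n := by
  rw [e_eq]; have := log_nn n; positivity

lemma e_le (n : ℕ) : e n ≤ 1/4 := by
  rw [e_eq, one_div]; have := log_nn n; gcongr; linarith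

lemma e_anti {m n : ℕ} (h : m ≤ n) : e n ≤ e m := by
  rw [e_eq, e_eq]; have := log_nn m
  gcongr

lemma e_tendsto : Tendsto e atTop (nhds 0) := by
  unfold e
  apply Tendsto.inv_tendsto_atTop
  apply Real.tendsto_log_atTop.comp
  apply Tendsto.const_mul_atTop (by positivity)
  exact tendsto_atTop_add_const_right _ _ tendsto_natCast_atTop_atTop

lemma e_pow_tendsto (k : ℕ) :
    Tendsto (fun N : ℕ => (k:ℝ) / (N * e (N + k) ^ k)) atTop (nhds 0) := by
  have h1 := (Real.isLittleO_pow_log_id_atTop (n := k)).tendsto_div_nhds_zero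
  have h2 : Tendsto (fun N : ℕ => Real.exp 4 * (((N + k : ℕ):ℝ) + 1)) atTop atTop := by
    apply Tendsto.const_mul_atTop (by positivity)
    apply tendsto_atTop_add_const_right
    exact tendsto_natCast_atTop_atTop.comp (tendsto_add_atTop_nat k)
  have h3 := (h1.comp h2).const_mul (k * (Real.exp 4 * (k + 2)))
  rw [mul_zero] at h3
  refine squeeze_zero' (Eventually.of_forall fun N => ?_) ?_ h3
  · have := e_pos (N+k); positivity
  · filter_upwards [eventually_ge_atTop 1] with N hN
    simp only [Function.comp, id]
    have hN' : (1:ℝ) ≤ N := by exact_mod_cast hN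
    have he : e (N+k) ^ k = ((Real.log (Real.exp 4 * (((N + k : ℕ):ℝ) + 1))) ^ k)⁻¹ := by
      rw [e, inv_pow]
    have hLp : 0 < Real.log (Real.exp 4 * (((N + k : ℕ):ℝ) + 1)) := by
      have := e_pos (N+k)
      rw [e] at this
      exact inv_pos.mp this
    rw [he]
    set L := Real.log (Real.exp 4 * (((N + k : ℕ):ℝ) + 1))
    have hx : Real.exp 4 * (((N + k : ℕ):ℝ) + 1) ≤ Real.exp 4 * (k+2) * N := by
      rw [mul_assoc]
      push_cast
      gcongr
      nlinarith [k.cast_nonneg (α := ℝ)]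
    have : (k:ℝ) / (N * (L^k)⁻¹) = k * (L^k) / N := by field_simp
    rw [this, div_le_iff₀ (by positivity)]
    have hx2 : (1:ℝ) ≤ Real.exp 4 * (k+2) * N / (Real.exp 4 * (((N + k : ℕ):ℝ) + 1)) := by
      rw [le_div_iff₀ (by positivity)]; linarith
    calc (k:ℝ) * L^k = k * L^k * 1 := by ring
      _ ≤ k * L^k * (Real.exp 4 * (k+2) * N / (Real.exp 4 * (((N + k : ℕ):ℝ) + 1))) := by gcongr
      _ = _ := by ring

noncomputable def nu (n : ℕ) : Measure (Fin 4) :=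
  ENNReal.ofReal (1 - 4 * e n) • Measure.dirac 1 + ENNReal.ofReal (e n) • Measure.count

instance (n : ℕ) : IsProbabilityMeasure (nu n) := by
  constructor
  have h4 : (4 : ENNReal) = ENNReal.ofReal 4 := by simp
  simp only [nu, Measure.add_apply, Measure.smul_apply, measure_univ, smul_eq_mul, mul_one,
    Measure.count_univ]
  simp only [ENat.card_eq_coe_fintype_card, Fintype.card_fin]
  have : (((4:ℕ):ℕ∞):ENNReal) = ENNReal.ofReal 4 := by simp
  rw [this, ← ENNReal.ofReal_mul (e_pos n).le, ← ENNReal.ofReal_add]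
  · simp only [ENNReal.ofReal_eq_one]; ring
  · linarith [e_le n]
  · linarith [e_pos n]

lemma nu_real (n : ℕ) (d : Fin 4) :
    (nu n).real {d} = e n + if d = 1 then 1 - 4 * e n else 0 := by
  have h0 := e_pos n
  have h1 : 0 ≤ 1 - 4 * e n := by linarith [e_le n]
  simp only [Measure.real, nu, Measure.add_apply, Measure.smul_apply, smul_eq_mul,
    Measure.count_singleton, mul_one]
  by_cases hd : d = 1
  · subst hd
    simp only [Measure.dirac_apply' _ (measurableSet_singleton _)]
    simp
    rw [ENNReal.toReal_add (by simp) (by simp), ENNReal.toReal_ofReal h1, ENNReal.toReal_ofReal h0.le]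
    ring
  · simp [hd, Measure.dirac_apply' _ (measurableSet_singleton _), Ne.symm hd, h0.le]

noncomputable def P : Measure Om := Measure.infinitePi nu

instance : IsProbabilityMeasure P := by unfold P; infer_instance

def C (n : ℕ) (ω : Om) : Set Om := {η | ∀ i < n, η i = ω i}

lemma C_eq (n : ℕ) (ω : Om) : C n ω = Set.pi (Finset.range n) (fun i => {ω i}) := by
  ext η; simp [C]

lemma meas_C (n : ℕ) (ω : Om) : MeasurableSet (C n ω) := by
  rw [C_eq]
  exact MeasurableSet.pi (Finset.countable_toSet _) (fun i _ => measurableSet_singleton _)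

lemma P_C (n : ℕ) (ω : Om) : P.real (C n ω) = ∏ i ∈ Finset.range n, (nu i).real {ω i} := by
  rw [C_eq, Measure.real, P, Measure.infinitePi_pi _ (fun i _ => measurableSet_singleton _),
    ENNReal.toReal_prod]
  rfl

lemma nu_ge (n : ℕ) (d : Fin 4) : e n ≤ (nu n).real {d} := by
  rw [nu_real]; split_ifs <;> linarith [e_le n]

lemma P_C_pos (n : ℕ) (ω : Om) : 0 < P.real (C n ω) := by
  rw [P_C]; exact Finset.prod_pos (fun i _ => (e_pos i).trans_le (nu_ge i _))

lemma P_sub (n k : ℕ) (ω ζ : Om) (h : ζ ∈ C n ω) :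
    e (n + k) ^ k * P.real (C n ω) ≤ P.real (C (n+k) ζ) := by
  rw [P_C, P_C, Finset.prod_range_add, mul_comm]
  have : ∏ i ∈ Finset.range n, (nu i).real {ζ i} = ∏ i ∈ Finset.range n, (nu i).real {ω i} :=
    Finset.prod_congr rfl (fun i hi => by rw [h i (Finset.mem_range.mp hi)])
  rw [this]
  gcongr
  calc e (n+k)^k = ∏ i ∈ Finset.range k, e (n+k) := by simp
    _ ≤ _ := Finset.prod_le_prod (fun i _ => (e_pos _).le) (fun i hi =>
      (e_anti (by have := Finset.mem_range.mp hi; omega)).trans (nu_ge _ _))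

lemma P_ne (n : ℕ) : P.real {ω | ω n ≠ 1} = 3 * e n := by
  have h := measurePreserving_eval_infinitePi nu n
  have h2 : P {ω | ω n ≠ 1} = nu n ({1}ᶜ) := by
    rw [← h.measure_preimage (measurableSet_singleton _).compl.nullMeasurableSet]
    rfl
  rw [Measure.real, h2]
  change (nu n).real _ = _
  rw [measureReal_compl (measurableSet_singleton _), nu_real]
  simp
  ring


def rep (n : ℕ) (w : Fin n → Fin 4) : Om := fun i => if h : i < n then w ⟨i, h⟩ else 0

def res (n : ℕ) (ω : Om) : Fin n → Fin 4 := fun i => ω i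

lemma mem_rep (n : ℕ) (ω : Om) : ω ∈ C n (rep n (res n ω)) := by
  intro i hi
  simp [rep, res, hi]

lemma C_congr {n : ℕ} {ω η : Om} (h : η ∈ C n ω) : C n η = C n ω := by
  ext ζ
  constructor
  · intro h' i hi; rw [h' i hi, h i hi]
  · intro h' i hi; rw [h' i hi, h i hi]

lemma C_mono {m n : ℕ} (h : m ≤ n) (ω : Om) : C n ω ⊆ C m ω := fun _ hη i hi => hη i (by omega)

lemma rep_inj {n : ℕ} {w v : Fin n → Fin 4} {ω : Om} (h1 : ω ∈ C n (rep n w))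
    (h2 : ω ∈ C n (rep n v)) : w = v := by
  funext i
  have a := h1 i i.2
  have b := h2 i i.2
  simp [rep] at a b
  rw [← a, ← b]

def Bad (F : Set Om) (k n : ℕ) : Set Om :=
  {ω | (∃ η ∈ C n ω, η ∈ F) ∧ ∃ ζ ∈ C n ω, Disjoint (C (n + k) ζ) F}

lemma Bad_congr {F : Set Om} {k n : ℕ} {ω η : Om} (h : η ∈ C n ω) :
    η ∈ Bad F k n ↔ ω ∈ Bad F k n := by
  simp only [Bad, Set.mem_ofPred_eq, C_congr h]

lemma Bad_eq (F : Set Om) (k n : ℕ) :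
    Bad F k n = ⋃ w ∈ Finset.univ.filter (fun w => rep n w ∈ Bad F k n), C n (rep n w) := by
  ext ω
  simp only [Finset.mem_filter, Finset.mem_univ, true_and, Set.mem_iUnion, exists_prop]
  constructor
  · intro h
    exact ⟨res n ω, (Bad_congr (mem_rep n ω)).1 h, mem_rep n ω⟩
  · rintro ⟨w, hw, h⟩
    exact (Bad_congr h).2 hw

lemma meas_Bad (F : Set Om) (k n : ℕ) : MeasurableSet (Bad F k n) := by
  rw [Bad_eq]
  exact Finset.measurableSet_biUnion _ (fun w _ => meas_C _ _)

lemma exists_hit (F : Set Om) (k n : ℕ) : ∃ H : Set Om, MeasurableSet H ∧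
    e (n + k) ^ k * P.real (Bad F k n) ≤ P.real H ∧
    ∀ ω ∈ H, (∃ η ∈ C n ω, η ∈ F) ∧ Disjoint (C (n + k) ω) F := by
  have hz : ∀ w : Fin n → Fin 4, ∃ ζ : Om, rep n w ∈ Bad F k n →
      ζ ∈ C n (rep n w) ∧ Disjoint (C (n+k) ζ) F := by
    intro w
    by_cases h : rep n w ∈ Bad F k n
    · obtain ⟨_, ζ, h1, h2⟩ := h
      exact ⟨ζ, fun _ => ⟨h1, h2⟩⟩
    · exact ⟨rep n w, fun h' => absurd h' h⟩
  choose z hz using hz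
  set W := Finset.univ.filter (fun w => rep n w ∈ Bad F k n) with hW
  have hsub : ∀ w ∈ W, C (n+k) (z w) ⊆ C n (rep n w) := by
    intro w hw
    have h1 := (hz w (by simpa [hW] using hw)).1
    exact (C_mono (by omega) _).trans (C_congr h1).subset
  refine ⟨⋃ w ∈ W, C (n+k) (z w), Finset.measurableSet_biUnion _ (fun w _ => meas_C _ _), ?_, ?_⟩
  · rw [measureReal_biUnion_finset ?_ (fun w _ => meas_C _ _)]
    · calc e (n + k) ^ k * P.real (Bad F k n)
          ≤ e (n + k) ^ k * ∑ w ∈ W, P.real (C n (rep n w)) := by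
            have := e_pos (n+k)
            gcongr
            rw [Bad_eq]
            exact measureReal_biUnion_finset_le _ _
        _ = ∑ w ∈ W, e (n + k) ^ k * P.real (C n (rep n w)) := Finset.mul_sum _ _ _
        _ ≤ _ := Finset.sum_le_sum (fun w hw =>
            P_sub n k _ _ (hz w (by simpa [hW] using hw)).1)
    · intro w hw v hv hne
      refine Set.disjoint_left.2 (fun ω h1 h2 => hne ?_)
      exact rep_inj (hsub w hw h1) (hsub v hv h2)
  · intro ω hω
    simp only [Set.mem_iUnion, exists_prop] at hω
    obtain ⟨w, hw, h⟩ := hω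
    have hb : rep n w ∈ Bad F k n := by simpa [hW] using hw
    constructor
    · rw [C_congr (hsub w hw h)]
      exact hb.1
    · rw [C_congr h]
      exact (hz w hb).2

lemma integral_count (G : ℕ → Set Om) (hG : ∀ n, MeasurableSet (G n)) (N : ℕ) :
    Integrable (fun ω => (((Finset.range N).filter fun n => ω ∈ G n).card : ℝ)) P ∧
    ∫ ω, (((Finset.range N).filter fun n => ω ∈ G n).card : ℝ) ∂P
      = ∑ n ∈ Finset.range N, P.real (G n) := by
  have h : (fun ω => (((Finset.range N).filter fun n => ω ∈ G n).card : ℝ)) =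
      fun ω => ∑ n ∈ Finset.range N, (G n).indicator (fun _ => (1:ℝ)) ω := by
    funext ω
    rw [Finset.card_filter]
    push_cast
    exact Finset.sum_congr rfl (fun n _ => by simp [Set.indicator_apply])
  have hi : ∀ n ∈ Finset.range N, Integrable ((G n).indicator (fun _ => (1:ℝ))) P :=
    fun n _ => (integrable_const 1).indicator (hG n)
  rw [h]
  refine ⟨integrable_finsetSum _ hi, ?_⟩
  rw [integral_finsetSum _ hi]
  refine Finset.sum_congr rfl (fun n _ => ?_)
  rw [integral_indicator_const _ (hG n)]
  simp

lemma sum_Bad (F : Set Om) (k N : ℕ) :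
    e (N + k) ^ k * ∑ n ∈ Finset.range N, P.real (Bad F k n) ≤ k := by
  choose H hHm hHp hH using fun n => exists_hit F k n
  have hle : ∀ ω, (((Finset.range N).filter fun n => ω ∈ H n).card : ℝ) ≤ k := by
    intro ω
    norm_cast
    set S := (Finset.range N).filter fun n => ω ∈ H n with hS
    rcases S.eq_empty_or_nonempty with h0 | hne
    · simp [h0]
    · have hmin := Finset.min'_mem S hne
      set m := S.min' hne
      have hsub : S ⊆ Finset.Ico m (m + k) := by
        intro n hn
        rw [Finset.mem_Ico]
        refine ⟨Finset.min'_le S n hn, ?_⟩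
        by_contra hc
        push Not at hc
        have h1 := hH n ω (Finset.mem_filter.1 hn).2
        have h2 := hH m ω (Finset.mem_filter.1 hmin).2
        obtain ⟨η, hη, hF⟩ := h1.1
        exact Set.disjoint_left.1 h2.2 (C_mono hc _ hη) hF
      simpa using Finset.card_le_card hsub
  calc e (N + k) ^ k * ∑ n ∈ Finset.range N, P.real (Bad F k n)
      = ∑ n ∈ Finset.range N, e (N+k)^k * P.real (Bad F k n) := Finset.mul_sum _ _ _
    _ ≤ ∑ n ∈ Finset.range N, P.real (H n) := by
        refine Finset.sum_le_sum (fun n hn => le_trans ?_ (hHp n))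
        have := (e_pos (N+k)).le
        gcongr
        apply e_anti
        have := Finset.mem_range.1 hn
        omega
    _ = ∫ ω, (((Finset.range N).filter fun n => ω ∈ H n).card : ℝ) ∂P :=
        (integral_count H hHm N).2.symm
    _ ≤ ∫ ω, (k:ℝ) ∂P := integral_mono (integral_count H hHm N).1 (integrable_const _) hle
    _ = k := by simp

lemma null_of_density (G : ℕ → Set Om) (hG : ∀ n, MeasurableSet (G n))
    (h : Tendsto (fun N : ℕ => (N:ℝ)⁻¹ * ∑ n ∈ Finset.range N, P.real (G n)) atTop (nhds 0))
    (c : ℝ) (hc : 0 < c) :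
    P {ω | ∀ᶠ N : ℕ in atTop,
      c * N ≤ (((Finset.range N).filter fun n => ω ∈ G n).card : ℝ)} = 0 := by
  have hsub : {ω | ∀ᶠ N : ℕ in atTop,
      c * N ≤ (((Finset.range N).filter fun n => ω ∈ G n).card : ℝ)} ⊆
      ⋃ M : ℕ, {ω | ∀ N ≥ M, c * N ≤ (((Finset.range N).filter fun n => ω ∈ G n).card : ℝ)} := by
    intro ω hω
    obtain ⟨M, hM⟩ := eventually_atTop.1 hω
    exact Set.mem_iUnion.2 ⟨M, hM⟩
  refine measure_mono_null hsub (measure_iUnion_null fun M => ?_)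
  rw [← measureReal_eq_zero_iff]
  refine le_antisymm ?_ measureReal_nonneg
  have h' := h.const_mul c⁻¹
  rw [mul_zero] at h'
  refine ge_of_tendsto h' ?_
  filter_upwards [eventually_ge_atTop M, eventually_ge_atTop 1] with N hM hN
  have hN' : (0:ℝ) < N := by exact_mod_cast hN
  have hmk := mul_meas_ge_le_integral_of_nonneg (μ := P)
    (f := fun ω => (((Finset.range N).filter fun n => ω ∈ G n).card : ℝ))
    (Eventually.of_forall fun ω => Nat.cast_nonneg _) (integral_count G hG N).1 (c * N)
  rw [(integral_count G hG N).2] at hmk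
  have : P.real {ω | ∀ N ≥ M, c * N ≤ (((Finset.range N).filter fun n => ω ∈ G n).card : ℝ)} ≤
      P.real {ω | c * N ≤ (((Finset.range N).filter fun n => ω ∈ G n).card : ℝ)} :=
    measureReal_mono (fun ω hω => hω N hM)
  refine this.trans ?_
  rw [← mul_assoc, ← mul_inv, inv_mul_eq_div, le_div_iff₀ (by positivity), mul_comm]
  exact hmk

def G (F : Set Om) (k n : ℕ) : Set Om := {ω : Om | ω n ≠ 1} ∪ Bad F k n

lemma key_null (F : Set Om) (k : ℕ) (c : ℝ) (hc : 0 < c) :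
    P {ω | ∀ᶠ N : ℕ in atTop, c * N ≤
      (((Finset.range N).filter fun n => ω ∈ G F k n).card : ℝ)} = 0 := by
  have hm : ∀ n, MeasurableSet {ω : Om | ω n ≠ 1} := by
    intro n
    have h0 : {ω : Om | ω n ≠ 1} = (fun f : Om => f n) ⁻¹' ({1}ᶜ : Set (Fin 4)) := by
      ext; simp
    rw [h0]
    exact (measurableSet_singleton (1 : Fin 4)).compl.preimage (measurable_pi_apply n)
  refine null_of_density (G F k) (fun n => (hm n).union (meas_Bad F k n)) ?_ c hc
  have h1 := ((e_tendsto.const_mul 3).cesaro).add (e_pow_tendsto k)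
  simp only [mul_zero, add_zero] at h1
  refine squeeze_zero' (Eventually.of_forall fun N => by positivity) ?_ h1
  filter_upwards [eventually_ge_atTop 1] with N hN
  have hN' : (0:ℝ) < N := by exact_mod_cast hN
  have hs := sum_Bad F k N
  have hep := e_pos (N+k)
  calc (N:ℝ)⁻¹ * ∑ n ∈ Finset.range N, P.real (G F k n)
      ≤ (N:ℝ)⁻¹ * ∑ n ∈ Finset.range N, (3 * e n + P.real (Bad F k n)) := by
        gcongr with n hn
        rw [← P_ne n]
        exact measureReal_union_le _ _
    _ = (N:ℝ)⁻¹ * ∑ n ∈ Finset.range N, 3 * e n +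
        (N:ℝ)⁻¹ * ∑ n ∈ Finset.range N, P.real (Bad F k n) := by
        rw [Finset.sum_add_distrib, mul_add]
    _ ≤ _ := by
        gcongr
        rw [inv_mul_eq_div, div_le_div_iff₀ hN' (by positivity)]
        nlinarith


/-! ### set side -/

lemma bad_of_porous (E : Set X) (α : ℝ) (hα : 0 < α) (k : ℕ) (hk : ((4:ℝ)^k)⁻¹ < α / 16)
    (ω : Om) (hω : T ω ∈ E) (n i : ℕ) (hi1 : 2 * n + 2 ≤ i) (hi2 : i ≤ 2 * n + 3)
    (hp : α ≤ porSet E (T ω) ((2:ℝ) ^ (-(i:ℤ)))) :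
    ω ∈ G (T ⁻¹' E) k n := by
  by_cases h1 : ω n = 1
  swap
  · exact Or.inl h1
  right
  have h2 : α / 2 < porSet E (T ω) ((2:ℝ) ^ (-(i:ℤ))) := by linarith
  unfold porSet at h2
  have hne : {α : ℝ | 0 ≤ α ∧ ∃ y, Metric.ball y (α * (2:ℝ) ^ (-(i:ℤ))) ⊆
      Metric.ball (T ω) ((2:ℝ) ^ (-(i:ℤ))) \ E}.Nonempty := ⟨0, le_rfl, T ω, by simp⟩
  obtain ⟨α', ⟨_, y, hy⟩, hα'⟩ := exists_lt_of_lt_csSup hne h2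
  have hr : (2:ℝ) ^ (-(i:ℤ)) = ((2:ℝ)^i)⁻¹ := by simp
  rw [hr] at hy
  have hpos : 0 < ((2:ℝ)^i)⁻¹ := by positivity
  have hα0 : 0 < α' := by linarith
  have hyb := (hy (mem_ball_self (by positivity))).1
  rw [mem_ball, dist_X, T_apply] at hyb
  have hle : ((2:ℝ)^i)⁻¹ ≤ ((4:ℝ)^(n+1))⁻¹ := by
    have : (4:ℝ)^(n+1) = 2^(2*(n+1)) := by rw [pow_mul]; norm_num
    rw [this]
    gcongr
    · norm_num
    · omega
  have hge : ((4:ℝ)^n)⁻¹ / 8 ≤ ((2:ℝ)^i)⁻¹ := by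
    have : ((4:ℝ)^n)⁻¹ / 8 = (2^(2*n+3))⁻¹ := by rw [pow_add, pow_mul]; norm_num; ring
    rw [this]
    gcongr
    norm_num
  obtain ⟨ζ, hζ, hζy⟩ := exists_near ω n h1 (y 0) (hyb.trans_le hle)
  refine ⟨⟨ω, fun _ _ => rfl, hω⟩, ζ, hζ, ?_⟩
  refine Set.disjoint_left.2 (fun η hη hηE => ?_)
  refine (hy (?_ : T η ∈ ball y _)).2 hηE
  rw [mem_ball, dist_X, T_apply, ← hζy]
  have h3 := Real.abs_ofDigits_sub_ofDigits_le (x := η) (y := ζ) (n := n + k) hη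
  refine h3.trans_lt ?_
  push_cast
  rw [pow_add, mul_inv]
  have h4 : 0 < ((4:ℝ)^n)⁻¹ := by positivity
  calc ((4:ℝ)^n)⁻¹ * ((4:ℝ)^k)⁻¹ < ((4:ℝ)^n)⁻¹ * (α / 16) := by gcongr
    _ = (α / 2) * (((4:ℝ)^n)⁻¹ / 8) := by ring
    _ ≤ α' * ((2:ℝ)^i)⁻¹ := by gcongr

lemma card_cast_le (p : ℤ → Prop) (N : ℕ) :
    (((Finset.range N) : Finset ℤ).filter p).card ≤
      ((Finset.range N).filter fun i : ℕ => p i).card := by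
  refine (Finset.card_le_card (t := ((Finset.range N).filter fun i : ℕ => p i).image
    (fun i : ℕ => (i : ℤ))) ?_).trans Finset.card_image_le
  intro i hi
  simp at hi
  obtain ⟨⟨a, ha, rfl⟩, hp⟩ := hi
  exact Finset.mem_image.2 ⟨a, by simpa using ⟨ha, hp⟩, rfl⟩

lemma P_meanPorous (E : Set X) (α ρ : ℝ) (hα : 0 < α) (hρ : 0 < ρ)
    (h : IsMeanPorousSet E α ρ) : P (T ⁻¹' E) = 0 := by
  obtain ⟨k, hk⟩ := exists_pow_lt_of_lt_one (show 0 < α/16 by positivity)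
    (show (4:ℝ)⁻¹ < 1 by norm_num)
  rw [inv_pow] at hk
  refine measure_mono_null ?_ (key_null (T ⁻¹' E) k (ρ/8) (by positivity))
  intro ω hω
  have hl := h (T ω) hω
  have hev := eventually_lt_of_lt_liminf (lt_of_lt_of_le (half_lt_self hρ) hl)
    (isBoundedUnder_of_eventually_ge (a := 0) (Eventually.of_forall fun N => by positivity))
  change ∀ᶠ N : ℕ in atTop, _
  obtain ⟨M, hM⟩ := exists_nat_gt (8 / ρ)
  filter_upwards [hev, eventually_ge_atTop M, eventually_ge_atTop 1] with N h1 h2 h3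
  have hN : (0:ℝ) < N := by exact_mod_cast h3
  have hNM : 8 / ρ < N := hM.trans_le (by exact_mod_cast h2)
  rw [lt_div_iff₀ hN] at h1
  rw [div_lt_iff₀ hρ] at hNM
  set S := (Finset.range N).filter fun n => ω ∈ G (T ⁻¹' E) k n with hS
  have hsub : ((Finset.range N).filter fun i : ℕ => α ≤ porSet E (T ω) ((2 : ℝ) ^ (-(i : ℤ)))) ⊆
      Finset.range 2 ∪ (S.image (fun n => 2 * n + 2) ∪ S.image (fun n => 2 * n + 3)) := by
    intro i hi
    obtain ⟨hiN, hip⟩ := Finset.mem_filter.1 hi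
    have hiN := Finset.mem_range.1 hiN
    by_cases hi2 : i < 2
    · exact Finset.mem_union_left _ (Finset.mem_range.2 hi2)
    refine Finset.mem_union_right _ ?_
    have hb := bad_of_porous E α hα k hk ω hω (i/2 - 1) i (by omega) (by omega) hip
    have hmS : i/2 - 1 ∈ S := by
      rw [hS, Finset.mem_filter]
      exact ⟨Finset.mem_range.2 (by omega), hb⟩
    rcases Nat.even_or_odd' i with ⟨j, hj | hj⟩
    · exact Finset.mem_union_left _ (Finset.mem_image.2 ⟨_, hmS, by omega⟩)
    · exact Finset.mem_union_right _ (Finset.mem_image.2 ⟨_, hmS, by omega⟩)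
  have hcard := (Finset.card_le_card hsub).trans ((Finset.card_union_le _ _).trans
    (Nat.add_le_add_left (Finset.card_union_le _ _) _))
  have c1 := Finset.card_image_le (s := S) (f := fun n => 2 * n + 2)
  have c2 := Finset.card_image_le (s := S) (f := fun n => 2 * n + 3)
  rw [Finset.card_range] at hcard
  have hc : ((Finset.range N).filter fun i : ℕ =>
      α ≤ porSet E (T ω) ((2 : ℝ) ^ (-(i : ℤ)))).card ≤ 2 + 2 * S.card := by omega
  have hc' : (((Finset.range N).filter fun i : ℕ =>
      α ≤ porSet E (T ω) ((2 : ℝ) ^ (-(i : ℤ)))).card : ℝ) ≤ 2 + 2 * S.card := by exact_mod_cast hc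
  have hz := card_cast_le (fun i : ℤ => α ≤ porSet E (T ω) ((2 : ℝ) ^ (-i))) N
  have hz' := (Nat.cast_le (α := ℝ)).2 hz
  linarith

/-! ### measure side -/

noncomputable def mu : Measure X := P.map T

instance : IsProbabilityMeasure mu :=
  Measure.isProbabilityMeasure_map continuous_T.measurable.aemeasurable

lemma ball_le (x y : X) (a r : ℝ) (hr : 0 < r) (h : ball y (a * r) ⊆ ball x r) : a ≤ 2 := by
  by_contra hc
  push Not at hc
  have h1 : y ∈ ball x r := h (mem_ball_self (by positivity))
  have h2 : q (y 0 + 2 * r) ∈ ball x r := by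
    apply h
    rw [mem_ball, dist_X, q_apply]
    rw [add_sub_cancel_left, abs_of_pos (by positivity)]
    nlinarith
  rw [mem_ball, dist_X] at h1 h2
  rw [q_apply] at h2
  rw [abs_lt] at h1 h2
  linarith [h1.1, h2.2]

lemma bdd (x : X) (r ε : ℝ) (hr : 0 < r) :
    BddAbove {α : ℝ | 0 ≤ α ∧ ∃ y, Metric.ball y (α * r) ⊆ Metric.ball x r ∧
    mu (Metric.ball y (α * r)) ≤ ENNReal.ofReal ε * mu (Metric.ball x r)} :=
  ⟨2, fun a ⟨_, y, h, _⟩ => ball_le x y a r hr h⟩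

lemma porMeas_le (x : X) (r ε : ℝ) (hr : 0 < r) : porMeas mu x r ε ≤ 2 :=
  csSup_le ⟨0, le_rfl, x, by simp⟩ (fun a ⟨_, y, h, _⟩ => ball_le x y a r hr h)

lemma porMeas_nonneg (x : X) (r ε : ℝ) : 0 ≤ porMeas mu x r ε :=
  Real.sSup_nonneg (fun _ h => h.1)

lemma mu_ball_ge (ω : Om) (n : ℕ) (r : ℝ) (hr : ((4:ℝ)^n)⁻¹ < r) :
    P (C n ω) ≤ mu (ball (T ω) r) := by
  rw [mu, Measure.map_apply continuous_T.measurable measurableSet_ball]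
  refine measure_mono (fun η hη => ?_)
  change T η ∈ ball (T ω) r
  rw [mem_ball, dist_X, T_apply, T_apply]
  have := Real.abs_ofDigits_sub_ofDigits_le (x := η) (y := ω) (n := n) hη
  push_cast at this
  exact this.trans_lt hr

lemma mu_hole (ω : Om) (n : ℕ) :
    mu (ball (q (((4:ℝ) ^ n)⁻¹ * (num ω n + 1/8))) (((4:ℝ) ^ n)⁻¹ / 8)) ≤
      ENNReal.ofReal (e n) * P (C n ω) := by
  rw [mu, Measure.map_apply continuous_T.measurable measurableSet_ball]
  let ω' : Om := fun i => if i < n then ω i else 0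
  have hsub : T ⁻¹' ball (q (((4:ℝ) ^ n)⁻¹ * (num ω n + 1/8))) (((4:ℝ) ^ n)⁻¹ / 8) ⊆
      C (n+1) ω' := by
    intro η hη
    change T η ∈ ball _ _ at hη
    rw [mem_ball, dist_X, T_apply, q_apply] at hη
    obtain ⟨h1, h2⟩ := hole_prefix ω η n hη
    intro i hi
    by_cases h : i < n
    · simp [ω', h, h1 i h]
    · obtain rfl : i = n := by omega
      simp [ω', h2]
  refine (measure_mono hsub).trans ?_
  rw [← ofReal_measureReal (μ := P) (s := C (n+1) ω'), ← ofReal_measureReal (μ := P) (s := C n ω),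
    ← ENNReal.ofReal_mul (e_pos n).le]
  apply ENNReal.ofReal_le_ofReal
  rw [P_C, P_C, Finset.prod_range_succ, mul_comm]
  apply le_of_eq
  congr 1
  · simp [ω', nu_real]
  · exact Finset.prod_congr rfl (fun i hi => by simp [ω', Finset.mem_range.1 hi])

lemma porMeas_ge (ω : Om) (ε : ℝ) (hε : 0 < ε) :
    ∀ᶠ r in nhdsWithin 0 (Set.Ioi 0), 1/32 ≤ porMeas mu (T ω) r ε := by
  obtain ⟨M, hM⟩ := eventually_atTop.1 (e_tendsto.eventually (gt_mem_nhds hε))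
  have hio : Set.Ioo (0:ℝ) ((4:ℝ)⁻¹^M) ∈ nhdsWithin (0:ℝ) (Set.Ioi 0) :=
    Ioo_mem_nhdsGT (by positivity)
  filter_upwards [hio] with r hr
  have hr0 := hr.1
  have hr1 : r ≤ 1 := hr.2.le.trans (pow_le_one₀ (by norm_num) (by norm_num))
  obtain ⟨n, hn1, hn2⟩ := exists_nat_pow_near_of_lt_one hr0 hr1
    (show (0:ℝ) < 4⁻¹ by norm_num) (by norm_num)
  have hnM : M ≤ n + 1 := by
    by_contra hc
    push Not at hc
    have h1 := hr.2
    have : (4:ℝ)⁻¹ ^ M ≤ (4:ℝ)⁻¹^(n+1) := pow_le_pow_of_le_one (by norm_num) (by norm_num) hc.le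
    linarith
  have hn3 : r ≤ 4 * (4:ℝ)⁻¹^(n+1) := by rw [pow_succ]; linarith
  set m := n + 1
  rw [inv_pow] at hn1 hn3
  have hp : (0:ℝ) < ((4:ℝ)^m)⁻¹ := by positivity
  have hβ : ((4:ℝ)^m)⁻¹ / 8 / r * r = ((4:ℝ)^m)⁻¹ / 8 := by field_simp
  refine le_trans ?_ (le_csSup (bdd (T ω) r ε hr0) (a := ((4:ℝ)^m)⁻¹ / 8 / r) ?_)
  · rw [le_div_iff₀ hr0]; linarith
  · refine ⟨by positivity, q (((4:ℝ) ^ m)⁻¹ * (num ω m + 1/8)), ?_, ?_⟩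
    · rw [hβ]
      intro z hz
      rw [mem_ball, dist_X, q_apply, abs_lt] at hz
      rw [mem_ball, dist_X, T_apply, ofDigits_num ω m, abs_lt]
      have hs0 := Real.ofDigits_nonneg (fun i => ω (i + m))
      have hs1 := Real.ofDigits_le_one (fun i => ω (i + m))
      set s := Real.ofDigits (fun i => ω (i + m))
      have k0 : 0 ≤ ((4:ℝ)^m)⁻¹ * s := by positivity
      have k1 : ((4:ℝ)^m)⁻¹ * s ≤ ((4:ℝ)^m)⁻¹ := by nlinarith
      rw [mul_add] at hz
      constructor <;> rw [mul_add] <;> linarith [hz.1, hz.2]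
    · rw [hβ]
      refine (mu_hole ω m).trans ?_
      gcongr
      · exact (hM m hnM).le
      · exact mu_ball_ge ω m r hn1

lemma porMeasPt_ge (ω : Om) (ε : ℝ) (hε : 0 < ε) : 1/32 ≤ porMeasPt mu (T ω) ε := by
  refine le_liminf_of_le ?_ (porMeas_ge ω ε hε)
  refine IsBoundedUnder.isCoboundedUnder_ge ⟨2, ?_⟩
  rw [eventually_map]
  filter_upwards [self_mem_nhdsWithin] with r hr
  exact porMeas_le _ _ _ hr

lemma porMeasPt_le (x : X) (ε : ℝ) : porMeasPt mu x ε ≤ 2 := by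
  refine liminf_le_of_frequently_le (Eventually.frequently ?_)
    (isBoundedUnder_of_eventually_ge (a := 0) (Eventually.of_forall fun r => porMeas_nonneg _ _ _))
  filter_upwards [self_mem_nhdsWithin] with r hr
  exact porMeas_le _ _ _ hr

lemma porMeasEps_ge (ε : ℝ) (hε : 0 < ε) : 1/32 ≤ porMeasEps mu ε := by
  refine le_liminf_of_le ?_ ?_
  · refine IsBoundedUnder.isCoboundedUnder_ge ⟨2, ?_⟩
    rw [eventually_map]
    exact Eventually.of_forall fun x => porMeasPt_le x ε
  · filter_upwards [ae_map_mem_range T (isCompact_range continuous_T).isClosed.measurableSet P]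
      with x hx
    obtain ⟨ω, rfl⟩ := hx
    exact porMeasPt_ge ω ε hε

lemma porMeasure_pos : 0 < porMeasure mu := by
  refine lt_of_lt_of_le (show (0:ℝ) < 1/32 by norm_num) (le_csInf ?_ ?_)
  · exact ⟨_, 1, by simp, rfl⟩
  · rintro _ ⟨ε, hε, rfl⟩
    exact porMeasEps_ge ε hε

end PorPf

/-- There exist a dimension `d` and a Borel probability measure `μ` on
`ℝ^d` with positive porosity which gives zero mass to every mean porous Borel set. -/
theorem stmt16 :
    ∃ (d : ℕ) (μ : Measure (EuclideanSpace ℝ (Fin d))), 0 < d ∧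
      IsProbabilityMeasure μ ∧ 0 < porMeasure μ ∧
      ∀ E : Set (EuclideanSpace ℝ (Fin d)), MeasurableSet E →
        (∃ α ρ : ℝ, 0 < α ∧ 0 < ρ ∧ IsMeanPorousSet E α ρ) → μ E = 0 := by
  refine ⟨1, PorPf.mu, one_pos, inferInstance, PorPf.porMeasure_pos, ?_⟩
  rintro E hE ⟨α, ρ, hα, hρ, h⟩
  rw [PorPf.mu, Measure.map_apply PorPf.continuous_T.measurable hE]
  exact PorPf.P_meanPorous E α ρ hα hρ h
end
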